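/- Fix k ≥ 4, 0 < μ < 1/10 and 0 < (8k+7)ν < μ. There exist ε₀ > 0 and C > 0 such that for every ε ∈ (0,ε₀) and every global C^∞ solution u of the Cauchy problem the following holds. Let u⁰ = (u⁰₁,u⁰₂) be the smooth solution of □u⁰_j = 0 with u⁰_j(0) = f_j, ∂ₜu⁰_j(0) = g_j, and set u¹ = u − εu⁰. Then ‖∂u¹(t)‖₂ ≤ Cε^{3−μ−ν} for all 0 ≤ t ≤ ε^{−1}, and moreover ⟨t+|x|⟩^{1/2}|∂u¹(t,x)| ≤ Cε^{3−μ−ν} for all 0 ≤ t ≤ ε^{−1} and x ∈ ℝ². -/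

import Mathlib

/-!
The proof is an energy argument with the vector fields `Γ`, carried out directly for a given smooth
solution; no existence theory is needed.

Commuting with `□` (`box_Gam`) and integrating by parts (`hasDerivAt_energy`) gives the energy
identity for `En n L u`, the integral over a large square of `∑ |∂ Γ^w u|²` over words `w` of length
at most `n`. The square contains the support of the solution, since both the free equation and the
damped equations satisfy `∂ₜw □w ≤ 0`, which yields finite propagation speed (`finite_speed`, with a
smooth weighted energy, and with a loss of a fixed distance). A Klainerman–Sobolev inequality
(`klainerman_sobolev`) turns bounds of the energy into decay `(1 + t + |x|)^(-1/2)` of `∂u`.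

With `Y` the energy of order three of `u₁, u₂`, the cubic source and this decay give
`Y' ≤ C (Y + ε²)² / (1 + t)` (`integral_dn_le`). Since `ε² log (1 + 1/ε)` is small, `Y ≤ C ε²` up to
time `1/ε` (`riccati_bound`). The correction `u¹ = u - εu⁰` has the same source, so its energy `Z` of
order two satisfies `Z' ≤ (δ Z + C ε⁶) / (1 + t)` with `δ = 2 (μ + ν)`, after distributing the
quartic term by the arithmetic-geometric mean inequality. Gronwall (`gronwall_log`) gives
`Z ≤ C ε^(6 - δ)`, and the two claims follow from `sobNorm_le` and `ptwiseNorm_le`.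

The initial values of the energies involve time derivatives of order greater than one, which the
equation expresses through the data. The constants have to be uniform in `ε` and in the solution;
for this, solutions are organised in families indexed by all `ε < 1` and all solutions, and `Fam`
records that all derivatives with boundedly many time derivatives are `O(ε^m)` at time `0`. In this
way `Y 0 = O(ε²)`, and `Z 0 = O(ε⁶)` because `u¹` has vanishing Cauchy data (`energy_zero`).
-/

open Real MeasureTheory Filter Topology

noncomputable section

/-- Partial derivative in `t`. -/
def pt (u : ℝ → ℝ → ℝ → ℝ) : ℝ → ℝ → ℝ → ℝ :=
  fun t x1 x2 => deriv (fun s => u s x1 x2) t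

/-- Partial derivative in `x₁`. -/
def p1 (u : ℝ → ℝ → ℝ → ℝ) : ℝ → ℝ → ℝ → ℝ :=
  fun t x1 x2 => deriv (fun y => u t y x2) x1

/-- Partial derivative in `x₂`. -/
def p2 (u : ℝ → ℝ → ℝ → ℝ) : ℝ → ℝ → ℝ → ℝ :=
  fun t x1 x2 => deriv (fun y => u t x1 y) x2

/-- The d'Alembertian `□ = ∂ₜ² − ∂₁² − ∂₂²`. -/
def dAlembert (u : ℝ → ℝ → ℝ → ℝ) : ℝ → ℝ → ℝ → ℝ :=
  fun t x1 x2 => pt (pt u) t x1 x2 - p1 (p1 u) t x1 x2 - p2 (p2 u) t x1 x2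

/-- `u : ℝ×ℝ² → ℝ` (curried) is C^∞. -/
def Smooth3 (u : ℝ → ℝ → ℝ → ℝ) : Prop :=
  ContDiff ℝ (⊤ : ℕ∞) (fun p : ℝ × ℝ × ℝ => u p.1 p.2.1 p.2.2)

/-- Compactly supported C^∞ function on ℝ². -/
def SmoothCompact2 (f : ℝ → ℝ → ℝ) : Prop :=
  ContDiff ℝ (⊤ : ℕ∞) (fun p : ℝ × ℝ => f p.1 p.2) ∧
    HasCompactSupport (fun p : ℝ × ℝ => f p.1 p.2)

/-- Global C^∞ solution of the Cauchy problem
`□u₁ = −(∂ₜu₂)²∂ₜu₁`, `□u₂ = −(∂ₜu₁)²∂ₜu₂` with data `(εf_j, εg_j)`. -/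
structure IsSolution (ε : ℝ) (f1 f2 g1 g2 : ℝ → ℝ → ℝ)
    (u1 u2 : ℝ → ℝ → ℝ → ℝ) : Prop where
  smooth1 : Smooth3 u1
  smooth2 : Smooth3 u2
  pde1 : ∀ t x1 x2 : ℝ, 0 < t →
    dAlembert u1 t x1 x2 = -(pt u2 t x1 x2) ^ 2 * pt u1 t x1 x2
  pde2 : ∀ t x1 x2 : ℝ, 0 < t →
    dAlembert u2 t x1 x2 = -(pt u1 t x1 x2) ^ 2 * pt u2 t x1 x2
  init1 : ∀ x1 x2 : ℝ, u1 0 x1 x2 = ε * f1 x1 x2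
  init2 : ∀ x1 x2 : ℝ, u2 0 x1 x2 = ε * f2 x1 x2
  initd1 : ∀ x1 x2 : ℝ, pt u1 0 x1 x2 = ε * g1 x1 x2
  initd2 : ∀ x1 x2 : ℝ, pt u2 0 x1 x2 = ε * g2 x1 x2

/-- `‖u(t)‖_E²  = ½∫ ((∂ₜu)² + (∂₁u)² + (∂₂u)²) dx`. -/
def energySq (u : ℝ → ℝ → ℝ → ℝ) (t : ℝ) : ℝ :=
  (1 / 2) * ∫ x : ℝ × ℝ,
    ((pt u t x.1 x.2) ^ 2 + (p1 u t x.1 x.2) ^ 2 + (p2 u t x.1 x.2) ^ 2)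

/-- The energy norm `‖u(t)‖_E`. -/
def energyNorm (u : ℝ → ℝ → ℝ → ℝ) (t : ℝ) : ℝ :=
  Real.sqrt (energySq u t)

/-- `|x|` in coordinates. -/
def radius (x1 x2 : ℝ) : ℝ := Real.sqrt (x1 ^ 2 + x2 ^ 2)

/-- The Japanese bracket `⟨z⟩ = (1+z²)^{1/2}`. -/
def jb (z : ℝ) : ℝ := Real.sqrt (1 + z ^ 2)

/-- `U(t,x) = D(|x|^{1/2}u(t,x))` where `D = ½(∂_r − ∂ₜ)`. -/
def Uop (u : ℝ → ℝ → ℝ → ℝ) : ℝ → ℝ → ℝ → ℝ :=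
  fun t x1 x2 =>
    (1 / 2) * ((x1 / radius x1 x2) *
        p1 (fun s y1 y2 => radius y1 y2 ^ ((1 : ℝ) / 2) * u s y1 y2) t x1 x2
      + (x2 / radius x1 x2) *
        p2 (fun s y1 y2 => radius y1 y2 ^ ((1 : ℝ) / 2) * u s y1 y2) t x1 x2
      - pt (fun s y1 y2 => radius y1 y2 ^ ((1 : ℝ) / 2) * u s y1 y2) t x1 x2)

/-- `V(t;σ,ω) = U(t,(t+σ)ω)`. -/
def Vop (u : ℝ → ℝ → ℝ → ℝ) (t σ ω1 ω2 : ℝ) : ℝ :=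
  Uop u t ((t + σ) * ω1) ((t + σ) * ω2)

/-- The rotation vector field `Ω = x₁∂₂ − x₂∂₁`. -/
def rot (u : ℝ → ℝ → ℝ → ℝ) : ℝ → ℝ → ℝ → ℝ :=
  fun t x1 x2 => x1 * p2 u t x1 x2 - x2 * p1 u t x1 x2

/-- `H` for component `a` (the other component being `b`):
`H_a = ½(|x|^{1/2}(∂ₜu_b)²(∂ₜu_a) + t⁻¹U_b²U_a) − (8|x|^{3/2})⁻¹(4Ω²+1)u_a`. -/
def Hfun (ua ub : ℝ → ℝ → ℝ → ℝ) (t x1 x2 : ℝ) : ℝ :=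
  (1 / 2) * (radius x1 x2 ^ ((1 : ℝ) / 2) * (pt ub t x1 x2) ^ 2 * pt ua t x1 x2
      + (1 / t) * (Uop ub t x1 x2) ^ 2 * Uop ua t x1 x2)
    - (1 / (8 * radius x1 x2 ^ ((3 : ℝ) / 2))) *
        (4 * rot (rot ua) t x1 x2 + ua t x1 x2)

/-- `K_a(t;σ,ω) = H_a(t,(t+σ)ω)`. -/
def Kfun (ua ub : ℝ → ℝ → ℝ → ℝ) (t σ ω1 ω2 : ℝ) : ℝ :=
  Hfun ua ub t ((t + σ) * ω1) ((t + σ) * ω2)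

/-- `ρ = V₁K₁ − V₂K₂`. -/
def rhoFun (u1 u2 : ℝ → ℝ → ℝ → ℝ) (t σ ω1 ω2 : ℝ) : ℝ :=
  Vop u1 t σ ω1 ω2 * Kfun u1 u2 t σ ω1 ω2 -
    Vop u2 t σ ω1 ω2 * Kfun u2 u1 t σ ω1 ω2

/-- The Radon transform: line integral of `φ` over `{y : y·ω = s}`. -/
def Rline (φ : ℝ → ℝ → ℝ) (s ω1 ω2 : ℝ) : ℝ :=
  ∫ τ : ℝ, φ (s * ω1 - τ * ω2) (s * ω2 + τ * ω1)

/-- `R₂[φ](σ,ω) = (2√2π)⁻¹ ∫_σ^∞ R[φ](s,ω)(s−σ)^{−1/2} ds`. -/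
def R2 (φ : ℝ → ℝ → ℝ) (σ ω1 ω2 : ℝ) : ℝ :=
  (1 / (2 * Real.sqrt 2 * Real.pi)) *
    ∫ s in Set.Ioi σ, Rline φ s ω1 ω2 / Real.sqrt (s - σ)

/-- The Friedlander radiation field `F₀[φ,ψ] = −∂_σR₂[φ] + R₂[ψ]`. -/
def F0 (φ ψ : ℝ → ℝ → ℝ) (σ ω1 ω2 : ℝ) : ℝ :=
  -deriv (fun σ' => R2 φ σ' ω1 ω2) σ + R2 ψ σ ω1 ω2

/-- `∂_σF₀[φ,ψ]`. -/
def dF0 (φ ψ : ℝ → ℝ → ℝ) (σ ω1 ω2 : ℝ) : ℝ :=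
  deriv (fun σ' => F0 φ ψ σ' ω1 ω2) σ

/-- The vector fields `Γ = (S, L₁, L₂, Ω, ∂ₜ, ∂₁, ∂₂)`. -/
def Gam (i : Fin 7) (u : ℝ → ℝ → ℝ → ℝ) : ℝ → ℝ → ℝ → ℝ :=
  match i with
  | 0 => fun t x1 x2 => t * pt u t x1 x2 + x1 * p1 u t x1 x2 + x2 * p2 u t x1 x2
  | 1 => fun t x1 x2 => t * p1 u t x1 x2 + x1 * pt u t x1 x2
  | 2 => fun t x1 x2 => t * p2 u t x1 x2 + x2 * pt u t x1 x2
  | 3 => rot u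
  | 4 => pt u
  | 5 => p1 u
  | 6 => p2 u

/-- `Γ^α = Γ₀^{α₀}⋯Γ₆^{α₆}`. -/
def GamMulti (α : Fin 7 → ℕ) (u : ℝ → ℝ → ℝ → ℝ) : ℝ → ℝ → ℝ → ℝ :=
  (Gam 0)^[α 0] ((Gam 1)^[α 1] ((Gam 2)^[α 2] ((Gam 3)^[α 3]
    ((Gam 4)^[α 4] ((Gam 5)^[α 5] ((Gam 6)^[α 6] u))))))

/-- Pointwise norm `|φ(t,x)|_s = Σ_{|α|≤s}|Γ^αφ(t,x)|`, for a (finite) family of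
components, `|Γ^αφ|` being the Euclidean norm of the vector of components. -/
def ptwiseNorm (s : ℕ) (us : List (ℝ → ℝ → ℝ → ℝ)) (t x1 x2 : ℝ) : ℝ :=
  ∑ α : Fin 7 → Fin (s + 1),
    if (∑ i, (α i : ℕ)) ≤ s then
      Real.sqrt ((us.map fun u => (GamMulti (fun i => (α i : ℕ)) u t x1 x2) ^ 2).sum)
    else 0

/-- `‖φ(t)‖_s = Σ_{|α|≤s}‖Γ^αφ(t,·)‖_{L²(ℝ²)}`. -/
def sobNorm (s : ℕ) (us : List (ℝ → ℝ → ℝ → ℝ)) (t : ℝ) : ℝ :=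
  ∑ α : Fin 7 → Fin (s + 1),
    if (∑ i, (α i : ℕ)) ≤ s then
      Real.sqrt (∫ x : ℝ × ℝ,
        (us.map fun u => (GamMulti (fun i => (α i : ℕ)) u t x.1 x.2) ^ 2).sum)
    else 0

/-- The components of `∂u = (∂ₜu₁,∂₁u₁,∂₂u₁,∂ₜu₂,∂₁u₂,∂₂u₂)`. -/
def dList (u1 u2 : ℝ → ℝ → ℝ → ℝ) : List (ℝ → ℝ → ℝ → ℝ) :=
  [pt u1, p1 u1, p2 u1, pt u2, p1 u2, p2 u2]

/-- Smooth solution of the free wave equation with data `(φ0,φ1)`. -/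
def IsFreeSolution (φ0 φ1 : ℝ → ℝ → ℝ) (φ : ℝ → ℝ → ℝ → ℝ) : Prop :=
  Smooth3 φ ∧ (∀ t x1 x2 : ℝ, 0 < t → dAlembert φ t x1 x2 = 0) ∧
    (∀ x1 x2 : ℝ, φ 0 x1 x2 = φ0 x1 x2) ∧
    (∀ x1 x2 : ℝ, pt φ 0 x1 x2 = φ1 x1 x2)

/-- Mixed space-time partial `∂^α = ∂ₜ^{α₀}∂₁^{α₁}∂₂^{α₂}`. -/
def dmix (α : Fin 3 → ℕ) (u : ℝ → ℝ → ℝ → ℝ) : ℝ → ℝ → ℝ → ℝ :=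
  pt^[α 0] (p1^[α 1] (p2^[α 2] u))

/-! ### Partial derivatives and vector fields -/

/-- Partial derivatives `∂ₜ, ∂₁, ∂₂`, indexed by `Fin 3`. -/
def pd (j : Fin 3) : (ℝ → ℝ → ℝ → ℝ) → ℝ → ℝ → ℝ → ℝ :=
  match j with
  | 0 => pt
  | 1 => p1
  | 2 => p2

/-- The coordinate direction belonging to `pd j`. -/
def ev (j : Fin 3) : ℝ × ℝ × ℝ :=
  match j with
  | 0 => (1, 0, 0)
  | 1 => (0, 1, 0)
  | 2 => (0, 0, 1)

/-- Uncurrying. -/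
def unc (u : ℝ → ℝ → ℝ → ℝ) : ℝ × ℝ × ℝ → ℝ := fun p => u p.1 p.2.1 p.2.2

lemma Smooth3.differentiableAt {u : ℝ → ℝ → ℝ → ℝ} (hu : Smooth3 u) (p : ℝ × ℝ × ℝ) :
    DifferentiableAt ℝ (unc u) p :=
  (ContDiff.differentiable hu (by simp)) p

lemma hasDerivAt_pt {u : ℝ → ℝ → ℝ → ℝ} (hu : Smooth3 u) (t x y : ℝ) :
    HasDerivAt (fun s => u s x y) (fderiv ℝ (unc u) (t, x, y) (ev 0)) t := by
  have h1 : HasDerivAt (fun s : ℝ => (s, x, y)) (ev 0) t :=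
    (hasDerivAt_id t).prodMk ((hasDerivAt_const t x).prodMk (hasDerivAt_const t y))
  exact (hu.differentiableAt (t, x, y)).hasFDerivAt.comp_hasDerivAt t h1

lemma hasDerivAt_p1 {u : ℝ → ℝ → ℝ → ℝ} (hu : Smooth3 u) (t x y : ℝ) :
    HasDerivAt (fun s => u t s y) (fderiv ℝ (unc u) (t, x, y) (ev 1)) x := by
  have h1 : HasDerivAt (fun s : ℝ => (t, s, y)) (ev 1) x :=
    (hasDerivAt_const x t).prodMk ((hasDerivAt_id x).prodMk (hasDerivAt_const x y))
  exact (hu.differentiableAt (t, x, y)).hasFDerivAt.comp_hasDerivAt x h1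

lemma hasDerivAt_p2 {u : ℝ → ℝ → ℝ → ℝ} (hu : Smooth3 u) (t x y : ℝ) :
    HasDerivAt (fun s => u t x s) (fderiv ℝ (unc u) (t, x, y) (ev 2)) y := by
  have h1 : HasDerivAt (fun s : ℝ => (t, x, s)) (ev 2) y :=
    (hasDerivAt_const y t).prodMk ((hasDerivAt_const y x).prodMk (hasDerivAt_id y))
  exact (hu.differentiableAt (t, x, y)).hasFDerivAt.comp_hasDerivAt y h1

lemma pd_apply {u : ℝ → ℝ → ℝ → ℝ} (hu : Smooth3 u) (j : Fin 3) (t x y : ℝ) :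
    pd j u t x y = fderiv ℝ (unc u) (t, x, y) (ev j) := by
  match j with
  | 0 => exact (hasDerivAt_pt hu t x y).deriv
  | 1 => exact (hasDerivAt_p1 hu t x y).deriv
  | 2 => exact (hasDerivAt_p2 hu t x y).deriv

lemma Smooth3.hd0 {u : ℝ → ℝ → ℝ → ℝ} (hu : Smooth3 u) (t x y : ℝ) :
    HasDerivAt (fun s => u s x y) (pt u t x y) t := by
  have := hasDerivAt_pt hu t x y
  rwa [← pd_apply hu] at this

lemma Smooth3.hd1 {u : ℝ → ℝ → ℝ → ℝ} (hu : Smooth3 u) (t x y : ℝ) :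
    HasDerivAt (fun s => u t s y) (p1 u t x y) x := by
  have := hasDerivAt_p1 hu t x y
  rwa [← pd_apply hu] at this

lemma Smooth3.hd2 {u : ℝ → ℝ → ℝ → ℝ} (hu : Smooth3 u) (t x y : ℝ) :
    HasDerivAt (fun s => u t x s) (p2 u t x y) y := by
  have := hasDerivAt_p2 hu t x y
  rwa [← pd_apply hu] at this

lemma unc_pd {u : ℝ → ℝ → ℝ → ℝ} (hu : Smooth3 u) (j : Fin 3) :
    unc (pd j u) = fun p => fderiv ℝ (unc u) p (ev j) := by
  funext p
  exact pd_apply hu j p.1 p.2.1 p.2.2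

lemma Smooth3.pd {u : ℝ → ℝ → ℝ → ℝ} (hu : Smooth3 u) (j : Fin 3) : Smooth3 (pd j u) := by
  change ContDiff ℝ _ (unc (_root_.pd j u))
  rw [unc_pd hu]
  exact (ContDiff.fderiv_right (m := (⊤ : ℕ∞)) hu (by norm_cast)).clm_apply contDiff_const

lemma Smooth3.pt {u : ℝ → ℝ → ℝ → ℝ} (hu : Smooth3 u) : Smooth3 (pt u) := hu.pd 0
lemma Smooth3.p1 {u : ℝ → ℝ → ℝ → ℝ} (hu : Smooth3 u) : Smooth3 (p1 u) := hu.pd 1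
lemma Smooth3.p2 {u : ℝ → ℝ → ℝ → ℝ} (hu : Smooth3 u) : Smooth3 (p2 u) := hu.pd 2

lemma Smooth3.add {u v : ℝ → ℝ → ℝ → ℝ} (hu : Smooth3 u) (hv : Smooth3 v) : Smooth3 (u + v) :=
  ContDiff.add hu hv
lemma Smooth3.sub {u v : ℝ → ℝ → ℝ → ℝ} (hu : Smooth3 u) (hv : Smooth3 v) : Smooth3 (u - v) :=
  ContDiff.sub hu hv
lemma Smooth3.neg {u : ℝ → ℝ → ℝ → ℝ} (hu : Smooth3 u) : Smooth3 (-u) :=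
  ContDiff.neg hu
lemma Smooth3.mul {u v : ℝ → ℝ → ℝ → ℝ} (hu : Smooth3 u) (hv : Smooth3 v) : Smooth3 (u * v) :=
  ContDiff.mul hu hv
lemma Smooth3.smul {u : ℝ → ℝ → ℝ → ℝ} (c : ℝ) (hu : Smooth3 u) : Smooth3 (c • u) :=
  ContDiff.const_smul c hu
lemma smooth3_const (c : ℝ) : Smooth3 (fun _ _ _ => c) := contDiff_const
lemma smooth3_one : Smooth3 1 := contDiff_const
lemma smooth3_zero : Smooth3 0 := contDiff_const

lemma Smooth3.continuous {u : ℝ → ℝ → ℝ → ℝ} (hu : Smooth3 u) :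
    Continuous (fun p : ℝ × ℝ × ℝ => u p.1 p.2.1 p.2.2) :=
  ContDiff.continuous hu

lemma Smooth3.continuous_slice {u : ℝ → ℝ → ℝ → ℝ} (hu : Smooth3 u) (t : ℝ) :
    Continuous (fun p : ℝ × ℝ => u t p.1 p.2) :=
  hu.continuous.comp (Continuous.prodMk continuous_const continuous_id)

lemma Smooth3.sum {ι : Type*} (s : Finset ι) {u : ι → ℝ → ℝ → ℝ → ℝ}
    (hu : ∀ i, Smooth3 (u i)) : Smooth3 (∑ i ∈ s, u i) := by
  classical
  induction s using Finset.induction_on with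
  | empty => simpa using smooth3_zero
  | insert a s ha ih => rw [Finset.sum_insert ha]; exact (hu a).add ih

lemma pd_add {u v : ℝ → ℝ → ℝ → ℝ} (hu : Smooth3 u) (hv : Smooth3 v) (j : Fin 3) :
    pd j (u + v) = pd j u + pd j v := by
  funext t x y
  simp only [Pi.add_apply, pd_apply hu, pd_apply hv, pd_apply (hu.add hv)]
  have : unc (u + v) = unc u + unc v := rfl
  rw [this, fderiv_add (hu.differentiableAt _) (hv.differentiableAt _)]; rfl

lemma pd_mul {u v : ℝ → ℝ → ℝ → ℝ} (hu : Smooth3 u) (hv : Smooth3 v) (j : Fin 3) :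
    pd j (u * v) = pd j u * v + u * pd j v := by
  funext t x y
  simp only [Pi.add_apply, Pi.mul_apply, pd_apply hu, pd_apply hv, pd_apply (hu.mul hv)]
  have : unc (u * v) = unc u * unc v := rfl
  rw [this, fderiv_mul (hu.differentiableAt _) (hv.differentiableAt _)]
  simp [unc]; ring

lemma pd_smul {u : ℝ → ℝ → ℝ → ℝ} (hu : Smooth3 u) (c : ℝ) (j : Fin 3) :
    pd j (c • u) = c • pd j u := by
  funext t x y
  simp only [Pi.smul_apply, pd_apply hu, pd_apply (hu.smul c)]
  have : unc (c • u) = c • unc u := rfl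
  rw [this, fderiv_const_smul (hu.differentiableAt _)]; rfl

lemma pd_neg {u : ℝ → ℝ → ℝ → ℝ} (hu : Smooth3 u) (j : Fin 3) :
    pd j (-u) = - pd j u := by
  have := pd_smul hu (-1) j
  simpa using this

lemma pd_sub {u v : ℝ → ℝ → ℝ → ℝ} (hu : Smooth3 u) (hv : Smooth3 v) (j : Fin 3) :
    pd j (u - v) = pd j u - pd j v := by
  rw [sub_eq_add_neg, pd_add hu hv.neg, pd_neg hv, ← sub_eq_add_neg]

lemma pd_const (c : ℝ) (j : Fin 3) : pd j (fun _ _ _ => c) = 0 := by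
  funext t x y
  match j with
  | 0 => simp [pd, pt]
  | 1 => simp [pd, p1]
  | 2 => simp [pd, p2]

lemma pd_one (j : Fin 3) : pd j 1 = 0 := pd_const 1 j
lemma pd_zero (j : Fin 3) : pd j 0 = 0 := pd_const 0 j

lemma pd_sum {ι : Type*} (s : Finset ι) {u : ι → ℝ → ℝ → ℝ → ℝ}
    (hu : ∀ i, Smooth3 (u i)) (j : Fin 3) : pd j (∑ i ∈ s, u i) = ∑ i ∈ s, pd j (u i) := by
  classical
  induction s using Finset.induction_on with
  | empty => simpa using pd_zero j
  | insert a s ha ih =>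
    rw [Finset.sum_insert ha, Finset.sum_insert ha, pd_add (hu a) (Smooth3.sum s hu), ih]

lemma pd_comm {u : ℝ → ℝ → ℝ → ℝ} (hu : Smooth3 u) (i j : Fin 3) :
    pd i (pd j u) = pd j (pd i u) := by
  funext t x y
  have hd : DifferentiableAt ℝ (fderiv ℝ (unc u)) (t, x, y) :=
    ((ContDiff.fderiv_right (m := 1) hu (by norm_cast)).differentiable (by simp)) _
  have key : ∀ a b : Fin 3, pd a (pd b u) t x y
      = fderiv ℝ (fderiv ℝ (unc u)) (t, x, y) (ev a) (ev b) := by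
    intro a b
    rw [pd_apply (hu.pd b), unc_pd hu]
    rw [fderiv_clm_apply hd (differentiableAt_const _)]
    simp
  rw [key, key]
  have hs : IsSymmSndFDerivAt ℝ (unc u) (t, x, y) :=
    (ContDiff.contDiffAt hu).isSymmSndFDerivAt (by
      simp only [minSmoothness_of_isRCLikeNormedField]; exact WithTop.coe_le_coe.2 (le_top : (2 : ℕ∞) ≤ ⊤))
  exact hs.eq _ _

/-- The coordinate function `t`. -/
def cT : ℝ → ℝ → ℝ → ℝ := fun t _ _ => t
/-- The coordinate function `x₁`. -/
def cX : ℝ → ℝ → ℝ → ℝ := fun _ x _ => x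
/-- The coordinate function `x₂`. -/
def cY : ℝ → ℝ → ℝ → ℝ := fun _ _ y => y

lemma smooth_cT : Smooth3 cT := contDiff_fst
lemma smooth_cX : Smooth3 cX := contDiff_fst.comp contDiff_snd
lemma smooth_cY : Smooth3 cY := contDiff_snd.comp contDiff_snd

/-- Coefficients of the vector fields: `Γᵢ = ∑ⱼ cf i j ∂ⱼ`. -/
def cf (i : Fin 7) (j : Fin 3) : ℝ → ℝ → ℝ → ℝ :=
  match i, j with
  | 0, 0 => cT | 0, 1 => cX | 0, 2 => cY
  | 1, 0 => cX | 1, 1 => cT | 1, 2 => 0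
  | 2, 0 => cY | 2, 1 => 0 | 2, 2 => cT
  | 3, 0 => 0 | 3, 1 => -cY | 3, 2 => cX
  | 4, 0 => 1 | 4, 1 => 0 | 4, 2 => 0
  | 5, 0 => 0 | 5, 1 => 1 | 5, 2 => 0
  | 6, 0 => 0 | 6, 1 => 0 | 6, 2 => 1

lemma smooth_cf (i : Fin 7) (j : Fin 3) : Smooth3 (cf i j) := by
  have := smooth_cT; have := smooth_cX; have := smooth_cY; have := smooth_cY.neg
  have := smooth3_one; have := smooth3_zero
  fin_cases i <;> fin_cases j <;> assumption

lemma Gam_eq (i : Fin 7) (u : ℝ → ℝ → ℝ → ℝ) :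
    Gam i u = cf i 0 * pt u + cf i 1 * p1 u + cf i 2 * p2 u := by
  fin_cases i <;> funext t x y <;> simp [Gam, cf, cT, cX, cY, rot] <;> ring

lemma Gam_eq_sum (i : Fin 7) (u : ℝ → ℝ → ℝ → ℝ) :
    Gam i u = ∑ j, cf i j * pd j u := by
  rw [Gam_eq, Fin.sum_univ_three]; rfl

lemma Smooth3.Gam {u : ℝ → ℝ → ℝ → ℝ} (hu : Smooth3 u) (i : Fin 7) : Smooth3 (Gam i u) := by
  rw [Gam_eq_sum]
  exact Smooth3.sum _ fun j => (smooth_cf i j).mul (hu.pd j)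

lemma Gam_add {u v : ℝ → ℝ → ℝ → ℝ} (hu : Smooth3 u) (hv : Smooth3 v) (i : Fin 7) :
    Gam i (u + v) = Gam i u + Gam i v := by
  simp only [Gam_eq_sum, pd_add hu hv, mul_add, Finset.sum_add_distrib]

lemma Gam_smul {u : ℝ → ℝ → ℝ → ℝ} (hu : Smooth3 u) (c : ℝ) (i : Fin 7) :
    Gam i (c • u) = c • Gam i u := by
  simp only [Gam_eq_sum, pd_smul hu, mul_smul_comm, Finset.smul_sum]

lemma Gam_mul {u v : ℝ → ℝ → ℝ → ℝ} (hu : Smooth3 u) (hv : Smooth3 v) (i : Fin 7) :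
    Gam i (u * v) = Gam i u * v + u * Gam i v := by
  simp only [Gam_eq_sum, pd_mul hu hv, Fin.sum_univ_three]; ring

/-- The constants `∂ₖ (cf i j)`. -/
def cc (k : Fin 3) (i : Fin 7) (j : Fin 3) : ℝ := pd k (cf i j) 0 0 0

lemma pd_cT (k : Fin 3) : pd k cT = if k = 0 then 1 else 0 := by
  fin_cases k <;> funext t x y <;> simp [pd, pt, p1, p2, cT]
lemma pd_cX (k : Fin 3) : pd k cX = if k = 1 then 1 else 0 := by
  fin_cases k <;> funext t x y <;> simp [pd, pt, p1, p2, cX]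
lemma pd_cY (k : Fin 3) : pd k cY = if k = 2 then 1 else 0 := by
  fin_cases k <;> funext t x y <;> simp [pd, pt, p1, p2, cY]

lemma pd_cf_const (k : Fin 3) (i : Fin 7) (j : Fin 3) :
    ∃ c : ℝ, |c| ≤ 1 ∧ pd k (cf i j) = fun _ _ _ => c := by
  have h0 : ∃ c : ℝ, |c| ≤ 1 ∧ pd k 0 = fun _ _ _ => c := ⟨0, by simp, by rw [pd_zero]; rfl⟩
  have h1 : ∃ c : ℝ, |c| ≤ 1 ∧ pd k 1 = fun _ _ _ => c := ⟨0, by simp, by rw [pd_one]; rfl⟩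
  have hT : ∃ c : ℝ, |c| ≤ 1 ∧ pd k cT = fun _ _ _ => c :=
    ⟨if k = 0 then 1 else 0, by split_ifs <;> simp, by rw [pd_cT]; split_ifs <;> rfl⟩
  have hX : ∃ c : ℝ, |c| ≤ 1 ∧ pd k cX = fun _ _ _ => c :=
    ⟨if k = 1 then 1 else 0, by split_ifs <;> simp, by rw [pd_cX]; split_ifs <;> rfl⟩
  have hY : ∃ c : ℝ, |c| ≤ 1 ∧ pd k cY = fun _ _ _ => c :=
    ⟨if k = 2 then 1 else 0, by split_ifs <;> simp, by rw [pd_cY]; split_ifs <;> rfl⟩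
  have hY' : ∃ c : ℝ, |c| ≤ 1 ∧ pd k (-cY) = fun _ _ _ => c := by
    obtain ⟨c, hc, h⟩ := hY
    exact ⟨-c, by simpa using hc, by rw [pd_neg smooth_cY, h]; rfl⟩
  fin_cases i <;> fin_cases j <;> assumption

lemma abs_cc_le (k : Fin 3) (i : Fin 7) (j : Fin 3) : |cc k i j| ≤ 1 := by
  obtain ⟨c, hc, h⟩ := pd_cf_const k i j
  simpa [cc, h] using hc

lemma pd_cf (k : Fin 3) (i : Fin 7) (j : Fin 3) : pd k (cf i j) = fun _ _ _ => cc k i j := by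
  obtain ⟨c, hc, h⟩ := pd_cf_const k i j
  simp [cc, h]

/-- The commutator of `Γᵢ` with a partial derivative is a constant combination of partial
derivatives. -/
lemma Gam_pd {u : ℝ → ℝ → ℝ → ℝ} (hu : Smooth3 u) (i : Fin 7) (k : Fin 3) :
    Gam i (pd k u) = pd k (Gam i u) + ∑ j, (-cc k i j) • pd j u := by
  have h1 : pd k (Gam i u) = ∑ j, (cc k i j • pd j u + cf i j * pd j (pd k u)) := by
    rw [Gam_eq_sum, pd_sum _ (fun j => (smooth_cf i j).mul (hu.pd j))]
    refine Finset.sum_congr rfl fun j _ => ?_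
    rw [pd_mul (smooth_cf i j) (hu.pd j), pd_cf, pd_comm hu k j]
    rfl
  rw [h1, Gam_eq_sum, Finset.sum_add_distrib]
  simp [Finset.sum_neg_distrib]

lemma box_eq (u : ℝ → ℝ → ℝ → ℝ) :
    dAlembert u = pd 0 (pd 0 u) - pd 1 (pd 1 u) - pd 2 (pd 2 u) := rfl

lemma Smooth3.box {u : ℝ → ℝ → ℝ → ℝ} (hu : Smooth3 u) : Smooth3 (dAlembert u) :=
  (((hu.pd 0).pd 0).sub ((hu.pd 1).pd 1)).sub ((hu.pd 2).pd 2)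

lemma box_smul {u : ℝ → ℝ → ℝ → ℝ} (hu : Smooth3 u) (c : ℝ) :
    dAlembert (c • u) = c • dAlembert u := by
  simp only [box_eq, pd_smul hu, pd_smul (hu.pd _), smul_sub]

lemma box_sub {u v : ℝ → ℝ → ℝ → ℝ} (hu : Smooth3 u) (hv : Smooth3 v) :
    dAlembert (u - v) = dAlembert u - dAlembert v := by
  simp only [box_eq, pd_sub hu hv, pd_sub (hu.pd _) (hv.pd _)]; ring

/-- All `Γᵢ` commute with `□` except the scaling field, for which `[□, S] = 2□`. -/
lemma box_Gam {u : ℝ → ℝ → ℝ → ℝ} (hu : Smooth3 u) (i : Fin 7) :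
    dAlembert (Gam i u) = Gam i (dAlembert u) + (if i = 0 then (2 : ℝ) else 0) • dAlembert u := by
  have e2 : ∀ k : Fin 3, pd k (pd k (Gam i u)) = ∑ j, ((2 * cc k i j) • pd j (pd k u)
      + cf i j * pd j (pd k (pd k u))) := by
    intro k
    have h1 : pd k (Gam i u) = ∑ j, (cc k i j • pd j u + cf i j * pd j (pd k u)) := by
      rw [Gam_eq_sum, pd_sum _ (fun j => (smooth_cf i j).mul (hu.pd j))]
      refine Finset.sum_congr rfl fun j _ => ?_
      rw [pd_mul (smooth_cf i j) (hu.pd j), pd_cf, pd_comm hu k j]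
      rfl
    rw [h1, pd_sum _ (fun j => ((hu.pd j).smul _).add ((smooth_cf i j).mul ((hu.pd k).pd j)))]
    refine Finset.sum_congr rfl fun j _ => ?_
    rw [pd_add ((hu.pd j).smul _) ((smooth_cf i j).mul ((hu.pd k).pd j)), pd_smul (hu.pd j),
      pd_mul (smooth_cf i j) ((hu.pd k).pd j), pd_cf, pd_comm hu k j, pd_comm (hu.pd k) k j]
    funext t x y
    simp; ring
  rw [box_eq, e2, e2, e2]
  have e3 : Gam i (dAlembert u) = ∑ j, cf i j * (pd j (pd 0 (pd 0 u)) - pd j (pd 1 (pd 1 u))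
      - pd j (pd 2 (pd 2 u))) := by
    rw [Gam_eq_sum, box_eq]
    simp only [pd_sub (((hu.pd 0).pd 0).sub ((hu.pd 1).pd 1)) ((hu.pd 2).pd 2),
      pd_sub ((hu.pd 0).pd 0) ((hu.pd 1).pd 1)]
  rw [e3, box_eq]
  have c01 := pd_comm hu 0 1
  have c02 := pd_comm hu 0 2
  have c12 := pd_comm hu 1 2
  simp only [Fin.sum_univ_three, c01, c02, c12]
  funext t x y
  simp only [cc]
  fin_cases i <;>
    simp [cf, pd_cT, pd_cX, pd_cY, pd_one, pd_zero, pd_neg smooth_cY] <;> ring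

/-! ### Pointwise norms and energy densities -/

/-- `Pn n φ = ∑ |Γ^w φ|`, the sum over all words `w` of length at most `n` in the seven vector
fields (a word may occur several times). -/
def Pn : ℕ → (ℝ → ℝ → ℝ → ℝ) → ℝ → ℝ → ℝ → ℝ
  | 0, φ => fun t x y => |φ t x y|
  | n + 1, φ => fun t x y => |φ t x y| + ∑ i, Pn n (Gam i φ) t x y

/-- `Nn n u = ∑ |∂ Γ^w u|`, the sum over all words `w` of length at most `n`. -/
def Nn : ℕ → (ℝ → ℝ → ℝ → ℝ) → ℝ → ℝ → ℝ → ℝ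
  | 0, u => fun t x y => ∑ j, |pd j u t x y|
  | n + 1, u => fun t x y => ∑ j, |pd j u t x y| + ∑ i, Nn n (Gam i u) t x y

/-- The energy density `∑ |∂ Γ^w u|²`, the sum over all words `w` of length at most `n`. -/
def en : ℕ → (ℝ → ℝ → ℝ → ℝ) → ℝ → ℝ → ℝ → ℝ
  | 0, u => ∑ j, pd j u * pd j u
  | n + 1, u => ∑ j, pd j u * pd j u + ∑ i, en n (Gam i u)

/-- The source density `∑ 2 (∂ₜ Γ^w u) (□ Γ^w u)` in the energy identity for `en n u`. -/
def dn : ℕ → (ℝ → ℝ → ℝ → ℝ) → ℝ → ℝ → ℝ → ℝ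
  | 0, u => (2 : ℝ) • (pd 0 u * dAlembert u)
  | n + 1, u => (2 : ℝ) • (pd 0 u * dAlembert u) + ∑ i, dn n (Gam i u)

lemma Pn_nonneg (n : ℕ) (φ : ℝ → ℝ → ℝ → ℝ) (t x y : ℝ) : 0 ≤ Pn n φ t x y := by
  induction n generalizing φ with
  | zero => exact abs_nonneg _
  | succ n ih => exact add_nonneg (abs_nonneg _) (Finset.sum_nonneg fun i _ => ih _)

lemma abs_le_Pn (n : ℕ) (φ : ℝ → ℝ → ℝ → ℝ) (t x y : ℝ) : |φ t x y| ≤ Pn n φ t x y := by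
  cases n with
  | zero => exact le_rfl
  | succ n => exact le_add_of_nonneg_right (Finset.sum_nonneg fun i _ => Pn_nonneg _ _ _ _ _)

lemma Pn_Gam_le (n : ℕ) (φ : ℝ → ℝ → ℝ → ℝ) (i : Fin 7) (t x y : ℝ) :
    Pn n (Gam i φ) t x y ≤ Pn (n + 1) φ t x y := by
  have h := Finset.single_le_sum (f := fun i => Pn n (Gam i φ) t x y)
    (fun i _ => Pn_nonneg n _ t x y) (Finset.mem_univ i)
  have := abs_nonneg (φ t x y)
  simp only [Pn]; linarith

lemma Pn_succ_le (n : ℕ) (φ : ℝ → ℝ → ℝ → ℝ) (t x y : ℝ) :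
    Pn n φ t x y ≤ Pn (n + 1) φ t x y := by
  induction n generalizing φ with
  | zero => exact abs_le_Pn 1 φ t x y
  | succ n ih =>
    have := Finset.sum_le_sum (s := Finset.univ) fun i _ => ih (Gam i φ)
    rw [Pn, Pn]; linarith

lemma Pn_mono {n m : ℕ} (h : n ≤ m) (φ : ℝ → ℝ → ℝ → ℝ) (t x y : ℝ) :
    Pn n φ t x y ≤ Pn m φ t x y :=
  monotone_nat_of_le_succ (f := fun n => Pn n φ t x y) (fun n => Pn_succ_le n φ t x y) h

lemma Pn_add_le (n : ℕ) {φ ψ : ℝ → ℝ → ℝ → ℝ} (hφ : Smooth3 φ) (hψ : Smooth3 ψ) (t x y : ℝ) :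
    Pn n (φ + ψ) t x y ≤ Pn n φ t x y + Pn n ψ t x y := by
  induction n generalizing φ ψ with
  | zero => exact abs_add_le _ _
  | succ n ih =>
    simp only [Pn]
    have h1 : |(φ + ψ) t x y| ≤ |φ t x y| + |ψ t x y| := abs_add_le _ _
    have h2 : ∑ i, Pn n (Gam i (φ + ψ)) t x y
        ≤ ∑ i, (Pn n (Gam i φ) t x y + Pn n (Gam i ψ) t x y) :=
      Finset.sum_le_sum fun i _ => by
        rw [Gam_add hφ hψ]; exact ih (hφ.Gam i) (hψ.Gam i)
    rw [Finset.sum_add_distrib] at h2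
    linarith

lemma Pn_smul (n : ℕ) {φ : ℝ → ℝ → ℝ → ℝ} (hφ : Smooth3 φ) (c : ℝ) (t x y : ℝ) :
    Pn n (c • φ) t x y = |c| * Pn n φ t x y := by
  induction n generalizing φ with
  | zero => exact abs_mul _ _
  | succ n ih =>
    simp only [Pn, mul_add, Finset.mul_sum]
    congr 1
    · exact abs_mul _ _
    · exact Finset.sum_congr rfl fun i _ => by rw [Gam_smul hφ]; exact ih (hφ.Gam i)

lemma Nn_nonneg (n : ℕ) (φ : ℝ → ℝ → ℝ → ℝ) (t x y : ℝ) : 0 ≤ Nn n φ t x y := by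
  induction n generalizing φ with
  | zero => exact Finset.sum_nonneg fun i _ => abs_nonneg _
  | succ n ih =>
    exact add_nonneg (Finset.sum_nonneg fun i _ => abs_nonneg _)
      (Finset.sum_nonneg fun i _ => ih _)

lemma sum_pd_le_Nn (n : ℕ) (φ : ℝ → ℝ → ℝ → ℝ) (t x y : ℝ) :
    ∑ j, |pd j φ t x y| ≤ Nn n φ t x y := by
  cases n with
  | zero => exact le_rfl
  | succ n => exact le_add_of_nonneg_right (Finset.sum_nonneg fun i _ => Nn_nonneg _ _ _ _ _)

lemma pd_le_Nn (n : ℕ) (φ : ℝ → ℝ → ℝ → ℝ) (j : Fin 3) (t x y : ℝ) :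
    |pd j φ t x y| ≤ Nn n φ t x y :=
  (Finset.single_le_sum (f := fun j => |pd j φ t x y|) (fun i _ => abs_nonneg _)
    (Finset.mem_univ j)).trans (sum_pd_le_Nn n φ t x y)

lemma Nn_Gam_le (n : ℕ) (φ : ℝ → ℝ → ℝ → ℝ) (i : Fin 7) (t x y : ℝ) :
    Nn n (Gam i φ) t x y ≤ Nn (n + 1) φ t x y := by
  have h := Finset.single_le_sum (f := fun i => Nn n (Gam i φ) t x y)
    (fun i _ => Nn_nonneg n _ t x y) (Finset.mem_univ i)
  have : 0 ≤ ∑ j, |pd j φ t x y| := Finset.sum_nonneg fun i _ => abs_nonneg _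
  simp only [Nn]; linarith

lemma Nn_succ_le (n : ℕ) (φ : ℝ → ℝ → ℝ → ℝ) (t x y : ℝ) :
    Nn n φ t x y ≤ Nn (n + 1) φ t x y := by
  induction n generalizing φ with
  | zero => exact sum_pd_le_Nn 1 φ t x y
  | succ n ih =>
    have := Finset.sum_le_sum (s := Finset.univ) fun i _ => ih (Gam i φ)
    rw [Nn, Nn]; linarith

lemma Nn_mono {n m : ℕ} (h : n ≤ m) (φ : ℝ → ℝ → ℝ → ℝ) (t x y : ℝ) :
    Nn n φ t x y ≤ Nn m φ t x y :=
  monotone_nat_of_le_succ (f := fun n => Nn n φ t x y) (fun n => Nn_succ_le n φ t x y) h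

/-- Commuting the vector fields past one partial derivative. -/
lemma Pn_pd_le (n : ℕ) : ∃ C : ℝ, 0 < C ∧ ∀ u, Smooth3 u → ∀ (j : Fin 3) (t x y : ℝ),
    Pn n (pd j u) t x y ≤ C * Nn n u t x y := by
  induction n with
  | zero =>
    refine ⟨1, one_pos, fun u _ j t x y => ?_⟩
    rw [one_mul]
    exact pd_le_Nn 0 u j t x y
  | succ n ih =>
    obtain ⟨C, hC, h⟩ := ih
    refine ⟨1 + 28 * C, by positivity, fun u hu j t x y => ?_⟩
    have h1 : ∀ i, Pn n (Gam i (pd j u)) t x y ≤ 4 * C * Nn (n + 1) u t x y := by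
      intro i
      rw [Gam_pd hu]
      have hs : ∀ k : Fin 3, Smooth3 ((-cc j i k) • pd k u) := fun k => (hu.pd k).smul _
      have hk : ∀ k : Fin 3, Pn n ((-cc j i k) • pd k u) t x y ≤ C * Nn (n + 1) u t x y := by
        intro k
        rw [Pn_smul n (hu.pd k), abs_neg]
        have h2 := h u hu k t x y
        have h3 := Nn_succ_le n u t x y
        have h4 := abs_cc_le j i k
        calc |cc j i k| * Pn n (pd k u) t x y ≤ 1 * Pn n (pd k u) t x y := by
              gcongr; exact Pn_nonneg _ _ _ _ _
          _ ≤ C * Nn (n + 1) u t x y := by nlinarith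
      have h5 : Pn n (pd j (Gam i u)) t x y ≤ C * Nn (n + 1) u t x y :=
        (h _ (hu.Gam i) j t x y).trans (by gcongr; exact Nn_Gam_le n u i t x y)
      rw [Fin.sum_univ_three]
      have h6 := Pn_add_le n ((hu.Gam i).pd j) (((hs 0).add (hs 1)).add (hs 2)) t x y
      have h7 := Pn_add_le n ((hs 0).add (hs 1)) (hs 2) t x y
      have h8 := Pn_add_le n (hs 0) (hs 1) t x y
      have := hk 0; have := hk 1; have := hk 2
      linarith
    have h9 := Finset.sum_le_sum (s := Finset.univ) fun i _ => h1 i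
    have h10 := pd_le_Nn (n + 1) u j t x y
    simp only [Finset.sum_const, Finset.card_univ, Fintype.card_fin, nsmul_eq_mul] at h9
    simp only [Pn]
    push_cast at h9
    linarith

lemma en_apply_nonneg (n : ℕ) (φ : ℝ → ℝ → ℝ → ℝ) (t x y : ℝ) : 0 ≤ en n φ t x y := by
  induction n generalizing φ with
  | zero =>
    simp only [en, Finset.sum_apply, Pi.mul_apply]
    exact Finset.sum_nonneg fun i _ => mul_self_nonneg _
  | succ n ih =>
    simp only [en, Finset.sum_apply, Pi.mul_apply, Pi.add_apply]
    exact add_nonneg (Finset.sum_nonneg fun i _ => mul_self_nonneg _)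
      (Finset.sum_nonneg fun i _ => ih _)

lemma Nn_sq_le (n : ℕ) : ∃ C : ℝ, 0 < C ∧ ∀ (u : ℝ → ℝ → ℝ → ℝ) (t x y : ℝ),
    (Nn n u t x y) ^ 2 ≤ C * en n u t x y := by
  have h0 : ∀ (u : ℝ → ℝ → ℝ → ℝ) (t x y : ℝ),
      (∑ j, |pd j u t x y|) ^ 2 ≤ 3 * ∑ j, pd j u t x y * pd j u t x y := by
    intro u t x y
    have := sq_sum_le_card_mul_sum_sq (s := Finset.univ) (f := fun j => |pd j u t x y|)
    simpa [sq_abs, pow_two] using this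
  induction n with
  | zero =>
    refine ⟨3, by norm_num, fun u t x y => ?_⟩
    simpa [Nn, en] using h0 u t x y
  | succ n ih =>
    obtain ⟨C, hC, h⟩ := ih
    refine ⟨6 + 14 * C, by positivity, fun u t x y => ?_⟩
    have h1 := sq_sum_le_card_mul_sum_sq (s := Finset.univ) (f := fun i => Nn n (Gam i u) t x y)
    have h2 := Finset.sum_le_sum (s := Finset.univ) fun i _ => h (Gam i u) t x y
    rw [← Finset.mul_sum] at h2
    have h3 := h0 u t x y
    simp only [Nn, en, Finset.sum_apply, Pi.mul_apply, Pi.add_apply]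
    have h4 : 0 ≤ ∑ j, pd j u t x y * pd j u t x y :=
      Finset.sum_nonneg fun i _ => mul_self_nonneg _
    have h5 : 0 ≤ ∑ i, en n (Gam i u) t x y :=
      Finset.sum_nonneg fun i _ => en_apply_nonneg _ _ _ _ _
    simp only [Finset.card_univ, Fintype.card_fin] at h1
    push_cast at h1
    nlinarith [sq_nonneg ((∑ j, |pd j u t x y|) - ∑ i, Nn n (Gam i u) t x y),
      mul_nonneg hC.le h4, mul_nonneg hC.le h5]

lemma en_le_Nn_sq (n : ℕ) (u : ℝ → ℝ → ℝ → ℝ) (t x y : ℝ) :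
    en n u t x y ≤ (Nn n u t x y) ^ 2 := by
  have key : ∀ {ι : Type} [Fintype ι] (f : ι → ℝ), (∀ i, 0 ≤ f i) → ∑ i, f i ^ 2 ≤ (∑ i, f i) ^ 2 :=
    fun f hf => Finset.sum_sq_le_sq_sum_of_nonneg fun i _ => hf i
  have h0 : ∑ j, pd j u t x y * pd j u t x y ≤ (∑ j, |pd j u t x y|) ^ 2 := by
    simpa [sq_abs, ← pow_two] using key (fun j => |pd j u t x y|) fun j => abs_nonneg _
  induction n generalizing u with
  | zero => simpa [Nn, en] using h0
  | succ n ih =>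
    have h1 : ∑ i, en n (Gam i u) t x y ≤ ∑ i, Nn n (Gam i u) t x y ^ 2 :=
      Finset.sum_le_sum fun i _ => ih _ (by
        simpa [sq_abs, ← pow_two] using key (fun j => |pd j (Gam i u) t x y|) fun j => abs_nonneg _)
    have h2 := key (fun i => Nn n (Gam i u) t x y) fun i => Nn_nonneg _ _ _ _ _
    have h3 : 0 ≤ ∑ i, Nn n (Gam i u) t x y := Finset.sum_nonneg fun i _ => Nn_nonneg _ _ _ _ _
    have h4 : 0 ≤ ∑ j, |pd j u t x y| := Finset.sum_nonneg fun i _ => abs_nonneg _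
    simp only [Nn, en, Finset.sum_apply, Pi.mul_apply, Pi.add_apply]
    nlinarith [mul_nonneg h3 h4]

lemma dn_le (n : ℕ) : ∃ C : ℝ, 0 < C ∧ ∀ u, Smooth3 u → ∀ (t x y : ℝ),
    dn n u t x y ≤ C * (Nn n u t x y * Pn n (dAlembert u) t x y) := by
  have h0 : ∀ (n : ℕ) (u : ℝ → ℝ → ℝ → ℝ) (t x y : ℝ), ((2 : ℝ) • (pd 0 u * dAlembert u)) t x y
      ≤ 2 * (Nn n u t x y * Pn n (dAlembert u) t x y) := by
    intro n u t x y
    have h1 := pd_le_Nn n u 0 t x y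
    have h2 := abs_le_Pn n (dAlembert u) t x y
    have h3 : pd 0 u t x y * dAlembert u t x y ≤ |pd 0 u t x y| * |dAlembert u t x y| := by
      rw [← abs_mul]; exact le_abs_self _
    have h4 : |pd 0 u t x y| * |dAlembert u t x y| ≤ Nn n u t x y * Pn n (dAlembert u) t x y := by
      gcongr; exact Nn_nonneg _ _ _ _ _
    change 2 * (pd 0 u t x y * dAlembert u t x y) ≤ _
    linarith
  induction n with
  | zero => exact ⟨2, two_pos, fun u _ t x y => h0 0 u t x y⟩
  | succ n ih =>
    obtain ⟨C, hC, h⟩ := ih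
    refine ⟨2 + 21 * C, by positivity, fun u hu t x y => ?_⟩
    have h1 : ∀ i, dn n (Gam i u) t x y
        ≤ C * (Nn (n + 1) u t x y * (3 * Pn (n + 1) (dAlembert u) t x y)) := by
      intro i
      refine (h _ (hu.Gam i) t x y).trans ?_
      have h2 : Pn n (dAlembert (Gam i u)) t x y ≤ 3 * Pn (n + 1) (dAlembert u) t x y := by
        rw [box_Gam hu]
        refine (Pn_add_le n (hu.box.Gam i) (hu.box.smul _) t x y).trans ?_
        rw [Pn_smul n hu.box]
        have h3 := Pn_Gam_le n (dAlembert u) i t x y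
        have h4 := Pn_succ_le n (dAlembert u) t x y
        have h5 : |if i = 0 then (2 : ℝ) else 0| ≤ 2 := by split_ifs <;> simp
        have h6 := Pn_nonneg n (dAlembert u) t x y
        nlinarith
      have h7 := Nn_Gam_le n u i t x y
      have h8 := Nn_nonneg n (Gam i u) t x y
      have h9 := Pn_nonneg n (dAlembert (Gam i u)) t x y
      gcongr
      exact Nn_nonneg _ _ _ _ _
    have h9 := Finset.sum_le_sum (s := Finset.univ) fun i _ => h1 i
    simp only [Finset.sum_const, Finset.card_univ, Fintype.card_fin, nsmul_eq_mul] at h9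
    push_cast at h9
    have h10 := h0 (n + 1) u t x y
    simp only [dn, Finset.sum_apply, Pi.add_apply]
    linarith

/-- Leibniz rule for the vector fields acting on a triple product. -/
lemma Pn_mul3_le (n : ℕ) {a b c : ℝ → ℝ → ℝ → ℝ} (ha : Smooth3 a) (hb : Smooth3 b)
    (hc : Smooth3 c) (t x y M : ℝ)
    (h : ∀ n1 n2 n3 : ℕ, n1 + n2 + n3 = n →
      Pn n1 a t x y * Pn n2 b t x y * Pn n3 c t x y ≤ M) :
    Pn n (a * b * c) t x y ≤ 22 ^ n * M := by
  induction n generalizing a b c with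
  | zero =>
    have := h 0 0 0 rfl
    simpa [Pn, abs_mul] using this
  | succ n ih =>
    have nn := fun m φ => Pn_nonneg m φ t x y
    have e : ∀ i, Gam i (a * b * c)
        = Gam i a * b * c + a * Gam i b * c + a * b * Gam i c := by
      intro i
      rw [Gam_mul (ha.mul hb) hc, Gam_mul ha hb]; ring
    have h1 : ∀ i, Pn n (Gam i (a * b * c)) t x y ≤ 3 * (22 ^ n * M) := by
      intro i
      rw [e]
      have s1 := ((ha.Gam i).mul hb).mul hc
      have s2 := (ha.mul (hb.Gam i)).mul hc
      have s3 := (ha.mul hb).mul (hc.Gam i)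
      have t1 := ih (ha.Gam i) hb hc fun n1 n2 n3 hn => by
        refine le_trans ?_ (h (n1 + 1) n2 n3 (by omega))
        have := Pn_Gam_le n1 a i t x y
        have := nn n2 b; have := nn n3 c
        gcongr
      have t2 := ih ha (hb.Gam i) hc fun n1 n2 n3 hn => by
        refine le_trans ?_ (h n1 (n2 + 1) n3 (by omega))
        have := Pn_Gam_le n2 b i t x y
        have := nn n1 a; have := nn n3 c
        gcongr
      have t3 := ih ha hb (hc.Gam i) fun n1 n2 n3 hn => by
        refine le_trans ?_ (h n1 n2 (n3 + 1) (by omega))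
        have := Pn_Gam_le n3 c i t x y
        have := nn n1 a; have := nn n2 b
        gcongr
      have := Pn_add_le n (s1.add s2) s3 t x y
      have := Pn_add_le n s1 s2 t x y
      linarith
    have h2 : |(a * b * c) t x y| ≤ M := by
      refine le_trans ?_ (h (n + 1) 0 0 (by omega))
      simp only [Pi.mul_apply, abs_mul]
      have := abs_le_Pn (n + 1) a t x y
      have := abs_le_Pn 0 b t x y
      have := abs_le_Pn 0 c t x y
      have := nn (n + 1) a; have := nn 0 b
      gcongr
    have hM : 0 ≤ M := (abs_nonneg _).trans h2
    have h9 := Finset.sum_le_sum (s := Finset.univ) fun i _ => h1 i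
    simp only [Finset.sum_const, Finset.card_univ, Fintype.card_fin, nsmul_eq_mul] at h9
    push_cast at h9
    have h10 : M ≤ 22 ^ n * M := le_mul_of_one_le_left hM (one_le_pow₀ (by norm_num))
    simp only [Pn]
    rw [pow_succ]
    linarith

/-- In a triple product at most one factor carries two or more of three derivatives. -/
lemma Pn_cubic_le {n : ℕ} (hn : n ≤ 3) {a b c : ℝ → ℝ → ℝ → ℝ} (ha : Smooth3 a) (hb : Smooth3 b)
    (hc : Smooth3 c) {t x y B1 B3 : ℝ} (ha1 : Pn 1 a t x y ≤ B1) (hb1 : Pn 1 b t x y ≤ B1)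
    (hc1 : Pn 1 c t x y ≤ B1) (ha3 : Pn 3 a t x y ≤ B3) (hb3 : Pn 3 b t x y ≤ B3)
    (hc3 : Pn 3 c t x y ≤ B3) :
    Pn n (a * b * c) t x y ≤ 22 ^ n * (B3 * B1 ^ 2) := by
  refine Pn_mul3_le n ha hb hc t x y _ fun n1 n2 n3 h => ?_
  have nn := fun m φ => Pn_nonneg m φ t x y
  have m1 : ∀ {m φ}, m ≤ 1 → Pn 1 φ t x y ≤ B1 → Pn m φ t x y ≤ B1 :=
    fun hm h1 => (Pn_mono hm _ t x y).trans h1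
  have m3 : ∀ {m φ}, m ≤ 3 → Pn 3 φ t x y ≤ B3 → Pn m φ t x y ≤ B3 :=
    fun hm h1 => (Pn_mono hm _ t x y).trans h1
  have hB1 : 0 ≤ B1 := (nn 1 a).trans ha1
  have hB3 : 0 ≤ B3 := (nn 3 a).trans ha3
  have mm : ∀ {p q r P Q R : ℝ}, 0 ≤ p → 0 ≤ q → 0 ≤ r → p ≤ P → q ≤ Q → r ≤ R →
      p * q * r ≤ P * Q * R := by
    intro p q r P Q R hp hq hr h1 h2 h3
    have : 0 ≤ P := hp.trans h1
    have : 0 ≤ Q := hq.trans h2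
    gcongr
  by_cases h1 : 2 ≤ n1
  · refine (mm (nn _ _) (nn _ _) (nn _ _) (m3 (by omega) ha3) (m1 (by omega) hb1)
      (m1 (by omega) hc1)).trans (le_of_eq (by ring))
  by_cases h2 : 2 ≤ n2
  · refine (mm (nn _ _) (nn _ _) (nn _ _) (m1 (by omega) ha1) (m3 (by omega) hb3)
      (m1 (by omega) hc1)).trans (le_of_eq (by ring))
  · refine (mm (nn _ _) (nn _ _) (nn _ _) (m1 (by omega) ha1) (m1 (by omega) hb1)
      (m3 (by omega) hc3)).trans (le_of_eq (by ring))

/-- Smooth functions that agree for `t > 0` agree for `t ≥ 0`. -/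
lemma eq_of_pos {u v : ℝ → ℝ → ℝ → ℝ} (hu : Smooth3 u) (hv : Smooth3 v)
    (h : ∀ t x y, 0 < t → u t x y = v t x y) {t : ℝ} (ht : 0 ≤ t) (x y : ℝ) :
    u t x y = v t x y := by
  rcases ht.lt_or_eq with ht | rfl
  · exact h t x y ht
  have cu : Tendsto (fun s => u s x y) (𝓝[>] 0) (𝓝 (u 0 x y)) :=
    ((hu.hd0 0 x y).continuousAt.tendsto).mono_left nhdsWithin_le_nhds
  have cv : Tendsto (fun s => v s x y) (𝓝[>] 0) (𝓝 (v 0 x y)) :=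
    ((hv.hd0 0 x y).continuousAt.tendsto).mono_left nhdsWithin_le_nhds
  refine tendsto_nhds_unique (cu.congr' ?_) cv
  filter_upwards [self_mem_nhdsWithin] with s hs using h s x y hs

lemma pd_congr_pos {u v : ℝ → ℝ → ℝ → ℝ}
    (h : ∀ t x y, 0 < t → u t x y = v t x y) (j : Fin 3) :
    ∀ t x y, 0 < t → pd j u t x y = pd j v t x y := by
  intro t x y ht
  match j with
  | 0 =>
    refine Filter.EventuallyEq.deriv_eq ?_
    filter_upwards [lt_mem_nhds ht] with s hs using h s x y hs
  | 1 => exact congrArg (fun f => deriv f x) (funext fun s => h t s y ht)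
  | 2 => exact congrArg (fun f => deriv f y) (funext fun s => h t x s ht)

lemma Gam_congr_pos {u v : ℝ → ℝ → ℝ → ℝ}
    (h : ∀ t x y, 0 < t → u t x y = v t x y) (i : Fin 7) :
    ∀ t x y, 0 < t → Gam i u t x y = Gam i v t x y := by
  intro t x y ht
  simp only [Gam_eq_sum, Finset.sum_apply, Pi.mul_apply]
  exact Finset.sum_congr rfl fun j _ => by rw [pd_congr_pos h j t x y ht]

lemma Pn_congr_pos (n : ℕ) {u v : ℝ → ℝ → ℝ → ℝ}
    (h : ∀ t x y, 0 < t → u t x y = v t x y) {t : ℝ} (ht : 0 < t) (x y : ℝ) :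
    Pn n u t x y = Pn n v t x y := by
  induction n generalizing u v with
  | zero => simp only [Pn, h t x y ht]
  | succ n ih =>
    simp only [Pn, h t x y ht]
    congr 1
    exact Finset.sum_congr rfl fun i _ => ih (Gam_congr_pos h i)

/-- Finite propagation: for `t ≥ 0` the function vanishes for `|x| > R + t`. -/
def Supp (R : ℝ) (φ : ℝ → ℝ → ℝ → ℝ) : Prop :=
  ∀ t x y : ℝ, 0 ≤ t → (R + t) ^ 2 < x ^ 2 + y ^ 2 → φ t x y = 0

lemma Supp.pd {R : ℝ} {φ : ℝ → ℝ → ℝ → ℝ} (hs : Smooth3 φ) (h : Supp R φ) (j : Fin 3) :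
    Supp R (pd j φ) := by
  intro t x y ht hx
  match j with
  | 0 =>
    have h1 : HasDerivWithinAt (fun s => φ s x y) (pt φ t x y) (Set.Ici t) t :=
      (hs.hd0 t x y).hasDerivWithinAt
    have hev : (fun s => φ s x y) =ᶠ[𝓝[Set.Ici t] t] fun _ => 0 := by
      have hc : ∀ᶠ s in 𝓝 t, (R + s) ^ 2 < x ^ 2 + y ^ 2 :=
        (show ContinuousAt (fun s => (R + s) ^ 2) t by fun_prop).eventually_lt
          continuousAt_const hx
      filter_upwards [nhdsWithin_le_nhds hc, self_mem_nhdsWithin] with s hs1 hs2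
      exact h s x y (ht.trans hs2) hs1
    have h2 : HasDerivWithinAt (fun s => φ s x y) 0 (Set.Ici t) t :=
      (hasDerivWithinAt_const t (Set.Ici t) (0 : ℝ)).congr_of_eventuallyEq hev
        (h t x y ht hx)
    exact (uniqueDiffWithinAt_Ici t).eq_deriv _ h1 h2
  | 1 =>
    have hev : (fun s => φ t s y) =ᶠ[𝓝 x] fun _ => 0 := by
      have hc : ∀ᶠ s in 𝓝 x, (R + t) ^ 2 < s ^ 2 + y ^ 2 :=
        continuousAt_const.eventually_lt
          (show ContinuousAt (fun s => s ^ 2 + y ^ 2) x by fun_prop) hx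
      filter_upwards [hc] with s hs1 using h t s y ht hs1
    exact (hev.deriv_eq).trans (deriv_const _ _)
  | 2 =>
    have hev : (fun s => φ t x s) =ᶠ[𝓝 y] fun _ => 0 := by
      have hc : ∀ᶠ s in 𝓝 y, (R + t) ^ 2 < x ^ 2 + s ^ 2 :=
        continuousAt_const.eventually_lt
          (show ContinuousAt (fun s => x ^ 2 + s ^ 2) y by fun_prop) hx
      filter_upwards [hc] with s hs1 using h t x s ht hs1
    exact (hev.deriv_eq).trans (deriv_const _ _)

lemma Supp.Gam {R : ℝ} {φ : ℝ → ℝ → ℝ → ℝ} (hs : Smooth3 φ) (h : Supp R φ) (i : Fin 7) :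
    Supp R (Gam i φ) := by
  intro t x y ht hx
  simp only [Gam_eq_sum, Finset.sum_apply, Pi.mul_apply]
  exact Finset.sum_eq_zero fun j _ => by rw [h.pd hs j t x y ht hx, mul_zero]

lemma Supp.Pn {R : ℝ} (n : ℕ) {φ : ℝ → ℝ → ℝ → ℝ} (hs : Smooth3 φ) (h : Supp R φ) :
    Supp R (Pn n φ) := by
  induction n generalizing φ with
  | zero => intro t x y ht hx; simp [_root_.Pn, h t x y ht hx]
  | succ n ih =>
    intro t x y ht hx
    simp only [_root_.Pn, h t x y ht hx, abs_zero, zero_add]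
    exact Finset.sum_eq_zero fun i _ => ih (hs.Gam i) (h.Gam hs i) t x y ht hx

lemma Supp.Nn {R : ℝ} (n : ℕ) {φ : ℝ → ℝ → ℝ → ℝ} (hs : Smooth3 φ) (h : Supp R φ) :
    Supp R (Nn n φ) := by
  have h0 : ∀ {φ : ℝ → ℝ → ℝ → ℝ}, Smooth3 φ → Supp R φ → ∀ t x y : ℝ, 0 ≤ t →
      (R + t) ^ 2 < x ^ 2 + y ^ 2 → ∑ j, |_root_.pd j φ t x y| = 0 := fun hs h t x y ht hx =>
    Finset.sum_eq_zero fun j _ => by rw [h.pd hs j t x y ht hx, abs_zero]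
  induction n generalizing φ with
  | zero => exact h0 hs h
  | succ n ih =>
    intro t x y ht hx
    simp only [_root_.Nn, h0 hs h t x y ht hx, zero_add]
    exact Finset.sum_eq_zero fun i _ => ih (hs.Gam i) (h.Gam hs i) t x y ht hx

lemma Smooth3.en {u : ℝ → ℝ → ℝ → ℝ} (hu : Smooth3 u) (n : ℕ) : Smooth3 (en n u) := by
  induction n generalizing u with
  | zero => exact Smooth3.sum _ fun j => (hu.pd j).mul (hu.pd j)
  | succ n ih =>
    exact (Smooth3.sum _ fun j => (hu.pd j).mul (hu.pd j)).add (Smooth3.sum _ fun i => ih (hu.Gam i))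

lemma Smooth3.dn {u : ℝ → ℝ → ℝ → ℝ} (hu : Smooth3 u) (n : ℕ) : Smooth3 (dn n u) := by
  induction n generalizing u with
  | zero => exact ((hu.pd 0).mul hu.box).smul 2
  | succ n ih =>
    exact (((hu.pd 0).mul hu.box).smul 2).add (Smooth3.sum _ fun i => ih (hu.Gam i))

lemma Pn_continuous {u : ℝ → ℝ → ℝ → ℝ} (hu : Smooth3 u) (n : ℕ) :
    Continuous (fun p : ℝ × ℝ × ℝ => Pn n u p.1 p.2.1 p.2.2) := by
  induction n generalizing u with
  | zero => exact hu.continuous.abs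
  | succ n ih => exact hu.continuous.abs.add (continuous_finsetSum _ fun i _ => ih (hu.Gam i))

lemma Nn_continuous {u : ℝ → ℝ → ℝ → ℝ} (hu : Smooth3 u) (n : ℕ) :
    Continuous (fun p : ℝ × ℝ × ℝ => Nn n u p.1 p.2.1 p.2.2) := by
  have h0 : ∀ {u : ℝ → ℝ → ℝ → ℝ}, Smooth3 u →
      Continuous (fun p : ℝ × ℝ × ℝ => ∑ j, |pd j u p.1 p.2.1 p.2.2|) := fun hu =>
    continuous_finsetSum _ fun j _ => (hu.pd j).continuous.abs
  induction n generalizing u with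
  | zero => exact h0 hu
  | succ n ih => exact (h0 hu).add (continuous_finsetSum _ fun i _ => ih (hu.Gam i))

/-! ### Energy identity and finite propagation speed -/

/-- The closed coordinate square with centre `(a, b)` and half side `L`. -/
def Kb (a b L : ℝ) : Set (ℝ × ℝ) := Set.Icc (a - L) (a + L) ×ˢ Set.Icc (b - L) (b + L)

lemma Kb_compact (a b L : ℝ) : IsCompact (Kb a b L) := isCompact_Icc.prod isCompact_Icc

lemma Kb_meas (a b L : ℝ) : MeasurableSet (Kb a b L) := measurableSet_Icc.prod measurableSet_Icc

lemma Smooth3.intOn {u : ℝ → ℝ → ℝ → ℝ} (hu : Smooth3 u) (t a b L : ℝ) :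
    IntegrableOn (fun x : ℝ × ℝ => u t x.1 x.2) (Kb a b L) :=
  (hu.continuous_slice t).continuousOn.integrableOn_compact (Kb_compact a b L)

lemma hasDerivAt_setIntegral {F : ℝ → ℝ → ℝ → ℝ} (hF : Smooth3 F) (a b L t : ℝ) :
    HasDerivAt (fun s => ∫ x in Kb a b L, F s x.1 x.2) (∫ x in Kb a b L, pd 0 F t x.1 x.2) t := by
  have hK : IsCompact (Set.Icc (t - 1) (t + 1) ×ˢ Kb a b L) := isCompact_Icc.prod (Kb_compact a b L)
  obtain ⟨M, hM⟩ := hK.exists_bound_of_continuousOn (hF.pd 0).continuous.continuousOn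
  have : IsFiniteMeasure (volume.restrict (Kb a b L)) :=
    ⟨by rw [Measure.restrict_apply_univ]; exact (Kb_compact a b L).measure_lt_top⟩
  refine (hasDerivAt_integral_of_dominated_loc_of_deriv_le
    (F := fun s (x : ℝ × ℝ) => F s x.1 x.2) (F' := fun s (x : ℝ × ℝ) => pd 0 F s x.1 x.2)
    (bound := fun _ => M) (Icc_mem_nhds (by linarith : t - 1 < t) (by linarith : t < t + 1))
    (Eventually.of_forall fun s => (hF.continuous_slice s).aestronglyMeasurable)
    (hF.intOn t a b L) ((hF.pd 0).continuous_slice t).aestronglyMeasurable ?_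
    (integrable_const M) (Eventually.of_forall fun x s _ => hF.hd0 s x.1 x.2)).2
  filter_upwards [ae_restrict_mem (Kb_meas a b L)] with x hx s hs
  exact hM (s, x) ⟨hs, hx⟩

lemma integral_p1_eq_zero {F : ℝ → ℝ → ℝ → ℝ} (hF : Smooth3 F) {a b L t : ℝ} (hL : 0 ≤ L)
    (h : ∀ y, F t (a - L) y = 0 ∧ F t (a + L) y = 0) :
    ∫ x in Kb a b L, pd 1 F t x.1 x.2 = 0 := by
  have hc := (hF.pd 1).continuous_slice t
  have e1 := setIntegral_prod_swap (μ := volume) (ν := volume) (Set.Icc (a - L) (a + L))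
    (Set.Icc (b - L) (b + L)) (fun x : ℝ × ℝ => pd 1 F t x.1 x.2)
  have e2 := setIntegral_prod (μ := volume) (ν := volume)
    (fun z : ℝ × ℝ => pd 1 F t z.swap.1 z.swap.2) (s := Set.Icc (b - L) (b + L))
    (t := Set.Icc (a - L) (a + L))
    (((hc.comp continuous_swap).continuousOn).integrableOn_compact
      (isCompact_Icc.prod isCompact_Icc))
  rw [Kb, Measure.volume_eq_prod, ← e1, e2]
  refine integral_eq_zero_of_ae (Eventually.of_forall fun y => ?_)
  change ∫ x in Set.Icc (a - L) (a + L), pd 1 F t x y = 0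
  rw [integral_Icc_eq_integral_Ioc, ← intervalIntegral.integral_of_le (by linarith)]
  rw [intervalIntegral.integral_eq_sub_of_hasDerivAt (f := fun x => F t x y)
    (f' := fun x => pd 1 F t x y)
    (fun x _ => hF.hd1 t x y), (h y).1, (h y).2, sub_zero]
  exact (hc.comp (Continuous.prodMk continuous_id continuous_const)).intervalIntegrable _ _

lemma integral_p2_eq_zero {F : ℝ → ℝ → ℝ → ℝ} (hF : Smooth3 F) {a b L t : ℝ} (hL : 0 ≤ L)
    (h : ∀ x, F t x (b - L) = 0 ∧ F t x (b + L) = 0) :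
    ∫ x in Kb a b L, pd 2 F t x.1 x.2 = 0 := by
  have hc := (hF.pd 2).continuous_slice t
  rw [Kb, Measure.volume_eq_prod, setIntegral_prod (μ := volume) (ν := volume)
    (fun z : ℝ × ℝ => pd 2 F t z.1 z.2)
    (hc.continuousOn.integrableOn_compact (isCompact_Icc.prod isCompact_Icc))]
  refine integral_eq_zero_of_ae (Eventually.of_forall fun x => ?_)
  change ∫ y in Set.Icc (b - L) (b + L), pd 2 F t x y = 0
  rw [integral_Icc_eq_integral_Ioc, ← intervalIntegral.integral_of_le (by linarith)]
  rw [intervalIntegral.integral_eq_sub_of_hasDerivAt (f := fun y => F t x y)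
    (f' := fun y => pd 2 F t x y)
    (fun y _ => hF.hd2 t x y), (h x).1, (h x).2, sub_zero]
  exact (hc.comp (Continuous.prodMk continuous_const continuous_id)).intervalIntegrable _ _

/-- The energy identity on a square with weight `q`, the boundary terms being zero. -/
lemma hasDerivAt_weighted_energy {q w : ℝ → ℝ → ℝ → ℝ} (hq : Smooth3 q) (hw : Smooth3 w)
    {a b L t : ℝ} (hL : 0 ≤ L)
    (h1 : ∀ y, q t (a - L) y * pd 0 w t (a - L) y = 0 ∧ q t (a + L) y * pd 0 w t (a + L) y = 0)
    (h2 : ∀ x, q t x (b - L) * pd 0 w t x (b - L) = 0 ∧ q t x (b + L) * pd 0 w t x (b + L) = 0) :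
    HasDerivAt (fun s => ∫ x in Kb a b L, (q * en 0 w) s x.1 x.2)
      (∫ x in Kb a b L, (pd 0 q * en 0 w + q * dn 0 w
        + (-2 : ℝ) • (pd 0 w * (pd 1 q * pd 1 w + pd 2 q * pd 2 w))) t x.1 x.2) t := by
  have hd := hasDerivAt_setIntegral (hq.mul (hw.en 0)) a b L t
  have sq0 := hq.mul (hw.pd 0)
  have s1 : Smooth3 ((2 : ℝ) • (q * pd 0 w * pd 1 w)) := (sq0.mul (hw.pd 1)).smul 2
  have s2 : Smooth3 ((2 : ℝ) • (q * pd 0 w * pd 2 w)) := (sq0.mul (hw.pd 2)).smul 2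
  have s3 : Smooth3 (pd 0 q * en 0 w + q * dn 0 w
        + (-2 : ℝ) • (pd 0 w * (pd 1 q * pd 1 w + pd 2 q * pd 2 w))) :=
    (((hq.pd 0).mul (hw.en 0)).add (hq.mul (hw.dn 0))).add
      (((hw.pd 0).mul (((hq.pd 1).mul (hw.pd 1)).add ((hq.pd 2).mul (hw.pd 2)))).smul _)
  have z1 := integral_p1_eq_zero s1 (a := a) (b := b) (L := L) (t := t) hL (fun y => by
    simp only [Pi.smul_apply, Pi.mul_apply, (h1 y).1, (h1 y).2]; simp)
  have z2 := integral_p2_eq_zero s2 (a := a) (b := b) (L := L) (t := t) hL (fun y => by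
    simp only [Pi.smul_apply, Pi.mul_apply, (h2 y).1, (h2 y).2]; simp)
  have key : pd 0 (q * en 0 w) = (pd 0 q * en 0 w + q * dn 0 w
        + (-2 : ℝ) • (pd 0 w * (pd 1 q * pd 1 w + pd 2 q * pd 2 w)))
        + pd 1 ((2 : ℝ) • (q * pd 0 w * pd 1 w)) + pd 2 ((2 : ℝ) • (q * pd 0 w * pd 2 w)) := by
    rw [pd_smul (sq0.mul (hw.pd 1)), pd_smul (sq0.mul (hw.pd 2)), pd_mul sq0 (hw.pd 1),
      pd_mul sq0 (hw.pd 2), pd_mul hq (hw.pd 0), pd_mul hq (hw.pd 0), pd_mul hq (hw.en 0)]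
    have e0 : pd 0 (en 0 w) = (2 : ℝ) • (pd 0 w * pd 0 (pd 0 w) + pd 1 w * pd 1 (pd 0 w)
        + pd 2 w * pd 2 (pd 0 w)) := by
      simp only [en]
      rw [pd_sum _ (fun j => (hw.pd j).mul (hw.pd j)), Fin.sum_univ_three]
      simp only [pd_mul (hw.pd _) (hw.pd _), pd_comm hw 0 1, pd_comm hw 0 2]
      funext t x y
      simp; ring
    rw [e0]
    funext t x y
    simp [dn, box_eq]; ring
  rw [key] at hd
  have e : ∫ x in Kb a b L, ((pd 0 q * en 0 w + q * dn 0 w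
        + (-2 : ℝ) • (pd 0 w * (pd 1 q * pd 1 w + pd 2 q * pd 2 w)))
        + pd 1 ((2 : ℝ) • (q * pd 0 w * pd 1 w))
        + pd 2 ((2 : ℝ) • (q * pd 0 w * pd 2 w))) t x.1 x.2
      = ∫ x in Kb a b L, (pd 0 q * en 0 w + q * dn 0 w
        + (-2 : ℝ) • (pd 0 w * (pd 1 q * pd 1 w + pd 2 q * pd 2 w))) t x.1 x.2 := by
    refine (integral_add (f := fun x : ℝ × ℝ => ((pd 0 q * en 0 w + q * dn 0 w
        + (-2 : ℝ) • (pd 0 w * (pd 1 q * pd 1 w + pd 2 q * pd 2 w)))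
        + pd 1 ((2 : ℝ) • (q * pd 0 w * pd 1 w))) t x.1 x.2)
        ((s3.add (s1.pd 1)).intOn t a b L) ((s2.pd 2).intOn t a b L)).trans ?_
    rw [z2, add_zero]
    refine (integral_add (s3.intOn t a b L) ((s1.pd 1).intOn t a b L)).trans ?_
    rw [z1, add_zero]
  rwa [e] at hd

/-- The energy identity `d/dt ∫ en n w = ∫ dn n w` for spatially supported functions. -/
lemma hasDerivAt_energy (n : ℕ) {w : ℝ → ℝ → ℝ → ℝ} (hw : Smooth3 w) {R L t : ℝ} (hR : 0 ≤ R)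
    (hs : Supp R w) (ht : 0 ≤ t) (hL : R + t < L) :
    HasDerivAt (fun s => ∫ x in Kb 0 0 L, en n w s x.1 x.2)
      (∫ x in Kb 0 0 L, dn n w t x.1 x.2) t := by
  have hLL : (R + t) ^ 2 < L ^ 2 := by nlinarith
  have h0 : ∀ {w : ℝ → ℝ → ℝ → ℝ}, Smooth3 w → Supp R w →
      HasDerivAt (fun s => ∫ x in Kb 0 0 L, en 0 w s x.1 x.2)
      (∫ x in Kb 0 0 L, dn 0 w t x.1 x.2) t := by
    intro w hw hs
    have hz := hs.pd hw 0
    have := hasDerivAt_weighted_energy smooth3_one hw (a := 0) (b := 0) (L := L) (t := t)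
      (by linarith) (fun y => ?_) (fun x => ?_)
    · simpa [pd_one] using this
    · rw [hz t _ y ht (by nlinarith [sq_nonneg y]), hz t _ y ht (by nlinarith [sq_nonneg y])]
      simp
    · rw [hz t x _ ht (by nlinarith [sq_nonneg x]), hz t x _ ht (by nlinarith [sq_nonneg x])]
      simp
  induction n generalizing w with
  | zero => exact h0 hw hs
  | succ n ih =>
    have h1 : ∀ i, HasDerivAt (fun s => ∫ x in Kb 0 0 L, en n (Gam i w) s x.1 x.2)
      (∫ x in Kb 0 0 L, dn n (Gam i w) t x.1 x.2) t := fun i => ih (hw.Gam i) (hs.Gam hw i)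
    have h2 := (h0 hw hs).add (HasDerivAt.sum (u := Finset.univ) fun i _ => h1 i)
    have e1 : ∀ s, ∫ x in Kb 0 0 L, en (n + 1) w s x.1 x.2
        = (∫ x in Kb 0 0 L, en 0 w s x.1 x.2)
          + ∑ i, ∫ x in Kb 0 0 L, en n (Gam i w) s x.1 x.2 := by
      intro s
      rw [← integral_finsetSum _ fun i _ => ((hw.Gam i).en n).intOn s 0 0 L]
      rw [← integral_add ((hw.en 0).intOn s 0 0 L)]
      · exact integral_congr_ae (Eventually.of_forall fun x => by simp [en])
      · exact integrable_finsetSum _ fun i _ => ((hw.Gam i).en n).intOn s 0 0 L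
    have e2 : ∫ x in Kb 0 0 L, dn (n + 1) w t x.1 x.2
        = (∫ x in Kb 0 0 L, dn 0 w t x.1 x.2)
          + ∑ i, ∫ x in Kb 0 0 L, dn n (Gam i w) t x.1 x.2 := by
      rw [← integral_finsetSum _ fun i _ => ((hw.Gam i).dn n).intOn t 0 0 L]
      rw [← integral_add ((hw.dn 0).intOn t 0 0 L)]
      · exact integral_congr_ae (Eventually.of_forall fun x => by simp [dn])
      · exact integrable_finsetSum _ fun i _ => ((hw.Gam i).dn n).intOn t 0 0 L
    rw [e2]
    refine h2.congr_of_eventuallyEq (Eventually.of_forall fun s => ?_)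
    simp [e1]

/-- Finite speed of propagation when the source does non-positive work. The weight is
`ψ(τ - t - ⟨x - x₀⟩)` with a smooth nondecreasing `ψ` that is positive exactly on `(0, ∞)`. -/
lemma finite_speed {w : ℝ → ℝ → ℝ → ℝ} (hw : Smooth3 w) {R : ℝ} (hR : 0 ≤ R)
    (hsrc : ∀ t x y, 0 < t → pd 0 w t x y * dAlembert w t x y ≤ 0)
    (h0 : ∀ x y, R ^ 2 < x ^ 2 + y ^ 2 → w 0 x y = 0)
    (h1 : ∀ x y, R ^ 2 < x ^ 2 + y ^ 2 → pd 0 w 0 x y = 0) : Supp (R + 3) w := by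
  intro t1 a b ht1 hab
  set τ := t1 + 2 with hτ
  let g : ℝ → ℝ → ℝ → ℝ := fun _ x y => √(1 + ((x - a) ^ 2 + (y - b) ^ 2))
  let h : ℝ → ℝ → ℝ → ℝ := fun t x y => τ - t - g t x y
  let q : ℝ → ℝ → ℝ → ℝ := fun t x y => expNegInvGlue (h t x y)
  have hpos : ∀ x y : ℝ, 0 < 1 + ((x - a) ^ 2 + (y - b) ^ 2) := fun x y => by positivity
  have sg : Smooth3 g := by
    refine ContDiff.sqrt (by fun_prop) fun p => (hpos _ _).ne'
  have sh : Smooth3 h := (contDiff_const.sub contDiff_fst).sub sg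
  have sq : Smooth3 q := expNegInvGlue.contDiff.comp sh
  have gpos : ∀ t x y, 0 < g t x y := fun t x y => sqrt_pos.2 (hpos x y)
  have gsq : ∀ t x y, g t x y ^ 2 = 1 + ((x - a) ^ 2 + (y - b) ^ 2) :=
    fun t x y => sq_sqrt (hpos x y).le
  -- The weight is nonincreasing along the characteristic cones.
  have dψ : ∀ z, HasDerivAt expNegInvGlue (deriv expNegInvGlue z) z := fun z =>
    ((expNegInvGlue.contDiff (n := 1)).differentiable (by simp) z).hasDerivAt
  have dψ0 : ∀ z, 0 ≤ deriv expNegInvGlue z := fun z => expNegInvGlue.monotone.deriv_nonneg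
  have q0 : ∀ t x y, pd 0 q t x y = - deriv expNegInvGlue (h t x y) := by
    intro t x y
    have : HasDerivAt (fun s => h s x y) (-1) t := by
      have := ((hasDerivAt_id t).const_sub τ).sub_const (g t x y)
      exact this
    have := ((dψ (h t x y)).comp t this).deriv
    refine this.trans (by ring)
  have q1 : ∀ t x y, pd 1 q t x y = - deriv expNegInvGlue (h t x y) * ((x - a) / g t x y) := by
    intro t x y
    have e : HasDerivAt (fun s => 1 + ((s - a) ^ 2 + (y - b) ^ 2)) (2 * (x - a)) x := by
      have := (((((hasDerivAt_id x).sub_const a).pow 2).add_const ((y - b) ^ 2)).const_add 1)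
      simpa using this
    have : HasDerivAt (fun s => h t s y) (-((2 * (x - a)) / (2 * g t x y))) x :=
      (e.sqrt (hpos x y).ne').const_sub (τ - t)
    have := ((dψ (h t x y)).comp x this).deriv
    refine this.trans ?_
    rw [mul_div_mul_left _ _ two_ne_zero]; ring
  have q2 : ∀ t x y, pd 2 q t x y = - deriv expNegInvGlue (h t x y) * ((y - b) / g t x y) := by
    intro t x y
    have e : HasDerivAt (fun s => 1 + ((x - a) ^ 2 + (s - b) ^ 2)) (2 * (y - b)) y := by
      have := (((((hasDerivAt_id y).sub_const b).pow 2).const_add ((x - a) ^ 2)).const_add 1)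
      simpa using this
    have : HasDerivAt (fun s => h t x s) (-((2 * (y - b)) / (2 * g t x y))) y :=
      (e.sqrt (hpos x y).ne').const_sub (τ - t)
    have := ((dψ (h t x y)).comp y this).deriv
    refine this.trans ?_
    rw [mul_div_mul_left _ _ two_ne_zero]; ring
  have qz : ∀ t x y, 0 ≤ t → τ ^ 2 ≤ (x - a) ^ 2 + (y - b) ^ 2 → q t x y = 0 := by
    intro t x y ht hx
    refine expNegInvGlue.zero_of_nonpos ?_
    have : τ ≤ g t x y := by
      by_contra hlt
      nlinarith [gsq t x y, gpos t x y]
    simp only [h]; linarith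
  have hτ0 : 0 ≤ τ := by linarith
  have qside1 : ∀ t y, 0 ≤ t → q t (a - τ) y = 0 ∧ q t (a + τ) y = 0 := fun t y ht =>
    ⟨qz t _ y ht (by nlinarith [sq_nonneg (y - b)]), qz t _ y ht (by nlinarith [sq_nonneg (y - b)])⟩
  have qside2 : ∀ t x, 0 ≤ t → q t x (b - τ) = 0 ∧ q t x (b + τ) = 0 := fun t x ht =>
    ⟨qz t x _ ht (by nlinarith [sq_nonneg (x - a)]), qz t x _ ht (by nlinarith [sq_nonneg (x - a)])⟩
  have hder := fun t (ht : 0 ≤ t) => hasDerivAt_weighted_energy sq hw (a := a) (b := b) (L := τ)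
    (t := t) hτ0 (fun y => by simp [(qside1 t y ht).1, (qside1 t y ht).2])
    (fun x => by simp [(qside2 t x ht).1, (qside2 t x ht).2])
  set E : ℝ → ℝ := fun s => ∫ x in Kb a b τ, (q * en 0 w) s x.1 x.2 with hE
  have hint : ∀ t, 0 < t → deriv E t ≤ 0 := by
    intro t ht
    rw [(hder t ht.le).deriv]
    refine setIntegral_nonpos (Kb_meas a b τ) fun x _ => ?_
    obtain ⟨x, y⟩ := x
    have hs := hsrc t x y ht
    have hψ := dψ0 (h t x y)
    have hq0 : 0 ≤ q t x y := expNegInvGlue.nonneg _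
    have hn : ((x - a) / g t x y) ^ 2 + ((y - b) / g t x y) ^ 2 ≤ 1 := by
      rw [div_pow, div_pow, ← add_div, gsq t x y, div_le_one (hpos x y)]; linarith
    simp only [Pi.add_apply, Pi.mul_apply, Pi.smul_apply, en, dn, Fin.sum_univ_three, q0, q1, q2,
      smul_eq_mul]
    generalize (x - a) / g t x y = n1 at *
    generalize (y - b) / g t x y = n2 at *
    generalize deriv expNegInvGlue (h t x y) = d at *
    generalize pd 0 w t x y = w0 at *
    generalize pd 1 w t x y = w1 at *
    generalize pd 2 w t x y = w2 at *
    have k1 : 0 ≤ w0 * w0 + w1 * w1 + w2 * w2 - 2 * (w0 * (n1 * w1 + n2 * w2)) := by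
      nlinarith [sq_nonneg (w0 - (n1 * w1 + n2 * w2)), sq_nonneg (n1 * w2 - n2 * w1),
        mul_nonneg (sub_nonneg.2 hn) (add_nonneg (sq_nonneg w1) (sq_nonneg w2))]
    nlinarith [mul_nonneg hψ k1, mul_nonneg hq0 (neg_nonneg.2 hs)]
  have hE0 : E 0 = 0 := by
    refine integral_eq_zero_of_ae (Eventually.of_forall fun x => ?_)
    obtain ⟨x, y⟩ := x
    simp only [Pi.mul_apply, Pi.zero_apply]
    by_cases hx : τ ^ 2 ≤ (x - a) ^ 2 + (y - b) ^ 2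
    · rw [qz 0 x y le_rfl hx, zero_mul]
    have hxy : R ^ 2 < x ^ 2 + y ^ 2 := by
      by_contra hcon
      push Not at hx hcon
      have h3 : (x * (a - x) + y * (b - y)) ^ 2 ≤ (R * τ) ^ 2 := by
        have : (x * (a - x) + y * (b - y)) ^ 2
            ≤ (x ^ 2 + y ^ 2) * ((x - a) ^ 2 + (y - b) ^ 2) := by
          nlinarith [sq_nonneg (x * (b - y) - y * (a - x))]
        refine this.trans ?_
        rw [mul_pow]; gcongr
      have h4 := abs_le_of_sq_le_sq h3 (by positivity)
      have h5 := (le_abs_self _).trans h4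
      nlinarith
    have hc : ∀ᶠ p in 𝓝 (x, y), R ^ 2 < p.1 ^ 2 + p.2 ^ 2 :=
      continuousAt_const.eventually_lt
        (show ContinuousAt (fun p : ℝ × ℝ => p.1 ^ 2 + p.2 ^ 2) (x, y) by fun_prop) hxy
    have d1 : pd 1 w 0 x y = 0 := by
      have hev : (fun s => w 0 s y) =ᶠ[𝓝 x] fun _ => 0 := by
        have : ContinuousAt (fun s : ℝ => (s, y)) x := by fun_prop
        filter_upwards [this.eventually hc] with s hs using h0 s y hs
      exact hev.deriv_eq.trans (deriv_const _ _)
    have d2 : pd 2 w 0 x y = 0 := by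
      have hev : (fun s => w 0 x s) =ᶠ[𝓝 y] fun _ => 0 := by
        have : ContinuousAt (fun s : ℝ => (x, s)) y := by fun_prop
        filter_upwards [this.eventually hc] with s hs using h0 x s hs
      exact hev.deriv_eq.trans (deriv_const _ _)
    simp [en, Fin.sum_univ_three, d1, d2, h1 x y hxy]
  have hanti : AntitoneOn E (Set.Ici 0) := by
    refine antitoneOn_of_deriv_nonpos (convex_Ici 0)
      (fun t ht => (hder t ht).continuousAt.continuousWithinAt) ?_ ?_
    · intro t ht
      rw [interior_Ici] at ht
      exact (hder t (le_of_lt ht)).differentiableAt.differentiableWithinAt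
    · intro t ht
      rw [interior_Ici] at ht
      exact hint t ht
  have hwt : ∀ t, 0 ≤ t → t ≤ t1 → pd 0 w t a b = 0 := by
    intro t ht htt
    have hEt : E t ≤ 0 := hE0 ▸ hanti (Set.mem_Ici.2 le_rfl) ht ht
    have hnn : ∀ x : ℝ × ℝ, 0 ≤ (q * en 0 w) t x.1 x.2 := fun x =>
      mul_nonneg (expNegInvGlue.nonneg _) (en_apply_nonneg _ _ _ _ _)
    have hEz : E t = 0 := le_antisymm hEt (integral_nonneg hnn)
    have hsm := sq.mul (hw.en 0)
    have hae := (setIntegral_eq_zero_iff_of_nonneg_ae (Eventually.of_forall hnn)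
      (hsm.intOn t a b τ)).1 hEz
    have hq1 : 0 < q t a b := by
      refine expNegInvGlue.pos_of_pos ?_
      simp [h, g]; linarith
    have hEq : Set.EqOn (fun x : ℝ × ℝ => (q * en 0 w) t x.1 x.2) (fun _ => 0)
        (interior (Kb a b τ)) := by
      refine Measure.eqOn_open_of_ae_eq (μ := volume) ?_ isOpen_interior
        (hsm.continuous_slice t).continuousOn continuousOn_const
      exact ae_restrict_of_ae_restrict_of_subset interior_subset hae
    have hmem : (a, b) ∈ interior (Kb a b τ) := by
      rw [Kb, interior_prod_eq, interior_Icc, interior_Icc]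
      constructor <;> constructor <;> simp <;> linarith
    have := hEq hmem
    simp only [Pi.mul_apply, mul_eq_zero, hq1.ne', false_or] at this
    simp only [en, Fin.sum_univ_three, Pi.add_apply, Pi.mul_apply] at this
    nlinarith [mul_self_nonneg (pd 0 w t a b), mul_self_nonneg (pd 1 w t a b),
      mul_self_nonneg (pd 2 w t a b)]
  have hconst := constant_of_has_deriv_right_zero (f := fun s => w s a b) (a := 0) (b := t1)
    (fun s _ => (hw.hd0 s a b).continuousAt.continuousWithinAt) (fun s hs => by
      have := (hw.hd0 s a b).hasDerivWithinAt (s := Set.Ici s)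
      have e : pt w s a b = 0 := hwt s hs.1 hs.2.le
      rwa [e] at this) t1 ⟨ht1, le_rfl⟩
  rw [hconst]
  exact h0 a b (by nlinarith)

/-! ### The Klainerman–Sobolev inequality -/

lemma abs_le_integral {h h' : ℝ → ℝ} (hd : ∀ s, HasDerivAt h (h' s) s) (hc : Continuous h')
    {a b c : ℝ} (hab : a < b) (hca : a ≤ c) (hcb : c ≤ b) :
    |h c| ≤ ∫ s in a..b, (|h s| / (b - a) + |h' s|) := by
  have hcont : Continuous h := continuous_iff_continuousAt.2 fun s => (hd s).continuousAt
  have hl : 0 < b - a := sub_pos.2 hab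
  set J := ∫ s in a..b, |h' s| with hJ
  have hpt : ∀ s ∈ Set.Icc a b, |h c| ≤ |h s| + J := by
    intro s hs
    have e : h c - h s = ∫ r in s..c, h' r :=
      (intervalIntegral.integral_eq_sub_of_hasDerivAt (fun r _ => hd r)
        (hc.intervalIntegrable _ _)).symm
    have h1 : |h c - h s| ≤ J := by
      have h2 : ∀ p q, p ∈ Set.Icc a b → q ∈ Set.Icc a b → p ≤ q →
          |∫ r in p..q, h' r| ≤ J := by
        intro p q hp hq hpq
        exact (intervalIntegral.abs_integral_le_integral_abs hpq).trans
          (intervalIntegral.integral_mono_interval hp.1 hpq hq.2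
            (Eventually.of_forall fun _ => abs_nonneg _) (hc.abs.intervalIntegrable _ _))
      rw [e]
      rcases le_total s c with hsc | hsc
      · exact h2 s c hs ⟨hca, hcb⟩ hsc
      · rw [intervalIntegral.integral_symm, abs_neg]
        exact h2 c s ⟨hca, hcb⟩ hs hsc
    have := abs_sub_abs_le_abs_sub (h c) (h s)
    linarith
  have hi := intervalIntegral.integral_mono_on (μ := volume) (f := fun _ => |h c|)
    (g := fun s => |h s| + J) hab.le
    (continuous_const.intervalIntegrable _ _)
    ((hcont.abs.add continuous_const).intervalIntegrable a b) hpt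
  rw [intervalIntegral.integral_const, intervalIntegral.integral_add
    (hcont.abs.intervalIntegrable _ _) (continuous_const.intervalIntegrable _ _),
    intervalIntegral.integral_const] at hi
  rw [intervalIntegral.integral_add ((hcont.abs.div_const _).intervalIntegrable _ _)
    (hc.abs.intervalIntegrable _ _), intervalIntegral.integral_div, ← hJ]
  simp only [smul_eq_mul] at hi
  rw [← sub_le_iff_le_add, le_div_iff₀ hl]
  linarith

/-- Sobolev's inequality on a rectangle, with derivatives rescaled by the side lengths. -/
lemma sobolev_rect {f fa fb fab P : ℝ → ℝ → ℝ} (ha : ∀ a b, HasDerivAt (fun s => f s b) (fa a b) a)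
    (hb : ∀ a b, HasDerivAt (fun s => f a s) (fb a b) b)
    (hab : ∀ a b, HasDerivAt (fun s => fa a s) (fab a b) b)
    (cf : Continuous fun p : ℝ × ℝ => f p.1 p.2) (cfa : Continuous fun p : ℝ × ℝ => fa p.1 p.2)
    (cfb : Continuous fun p : ℝ × ℝ => fb p.1 p.2)
    (cfab : Continuous fun p : ℝ × ℝ => fab p.1 p.2)
    (cP : Continuous fun p : ℝ × ℝ => P p.1 p.2) {a0 a1 b0 b1 c : ℝ} (h0 : a0 < a1) (h1 : b0 < b1)
    (hc : 1 ≤ c)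
    (hP : ∀ a ∈ Set.Icc a0 a1, ∀ b ∈ Set.Icc b0 b1, |f a b| ≤ P a b ∧
      (a1 - a0) * |fa a b| ≤ c * P a b ∧ (b1 - b0) * |fb a b| ≤ c * P a b ∧
      (a1 - a0) * ((b1 - b0) * |fab a b|) ≤ c * P a b)
    {a b : ℝ} (hac : a ∈ Set.Icc a0 a1) (hbc : b ∈ Set.Icc b0 b1) :
    (a1 - a0) * (b1 - b0) * f a b ^ 2
      ≤ 9 * c ^ 2 * ∫ x in Set.Icc a0 a1 ×ˢ Set.Icc b0 b1, P x.1 x.2 ^ 2 := by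
  have l1 : 0 < a1 - a0 := sub_pos.2 h0
  have l2 : 0 < b1 - b0 := sub_pos.2 h1
  set G : ℝ → ℝ → ℝ := fun a b => f a b ^ 2
  set Ga : ℝ → ℝ → ℝ := fun a b => 2 * f a b * fa a b
  set Gb : ℝ → ℝ → ℝ := fun a b => 2 * f a b * fb a b
  set Gab : ℝ → ℝ → ℝ := fun a b => 2 * (fb a b * fa a b + f a b * fab a b)
  have dGa : ∀ a b, HasDerivAt (fun s => G s b) (Ga a b) a := fun a b => by
    have := (ha a b).pow 2
    rwa [Nat.cast_ofNat, show 2 - 1 = 1 from rfl, pow_one] at this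
  have dGb : ∀ a b, HasDerivAt (fun s => G a s) (Gb a b) b := fun a b => by
    have := (hb a b).pow 2
    rwa [Nat.cast_ofNat, show 2 - 1 = 1 from rfl, pow_one] at this
  have dGab : ∀ a b, HasDerivAt (fun s => Ga a s) (Gab a b) b := fun a b => by
    have := ((hb a b).mul (hab a b)).const_mul 2
    refine (this.congr_of_eventuallyEq (Eventually.of_forall fun s => ?_))
    simp [Ga]; ring
  have cG : Continuous fun p : ℝ × ℝ => G p.1 p.2 := cf.pow 2
  have cGa : Continuous fun p : ℝ × ℝ => Ga p.1 p.2 := (continuous_const.mul cf).mul cfa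
  have cGb : Continuous fun p : ℝ × ℝ => Gb p.1 p.2 := (continuous_const.mul cf).mul cfb
  have cGab : Continuous fun p : ℝ × ℝ => Gab p.1 p.2 :=
    continuous_const.mul ((cfb.mul cfa).add (cf.mul cfab))
  have sl : ∀ {g : ℝ → ℝ → ℝ}, (Continuous fun p : ℝ × ℝ => g p.1 p.2) → ∀ a, Continuous (g a) :=
    fun h a => h.comp (Continuous.prodMk continuous_const continuous_id)
  have sr : ∀ {g : ℝ → ℝ → ℝ}, (Continuous fun p : ℝ × ℝ => g p.1 p.2) → ∀ b,
      Continuous fun a => g a b :=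
    fun h a => h.comp (Continuous.prodMk continuous_id continuous_const)
  set Q : ℝ × ℝ → ℝ := fun p => (|G p.1 p.2| / (b1 - b0) + |Gb p.1 p.2|) / (a1 - a0)
    + (|Ga p.1 p.2| / (b1 - b0) + |Gab p.1 p.2|)
  have cQ : Continuous Q := (((cG.abs.div_const _).add cGb.abs).div_const _).add
    ((cGa.abs.div_const _).add cGab.abs)
  have step1 := abs_le_integral (h := fun s => G s b) (h' := fun s => Ga s b) (fun s => dGa s b)
    (sr cGa b) h0 hac.1 hac.2
  have step2 : ∀ s, |G s b| / (a1 - a0) + |Ga s b| ≤ ∫ τ in b0..b1, Q (s, τ) := by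
    intro s
    have k1 := abs_le_integral (h := G s) (h' := Gb s) (fun τ => dGb s τ)
      (sl cGb s) h1 hbc.1 hbc.2
    have k2 := abs_le_integral (h := Ga s) (h' := Gab s) (fun τ => dGab s τ)
      (sl cGab s) h1 hbc.1 hbc.2
    have e : ∫ τ in b0..b1, Q (s, τ) = (∫ τ in b0..b1, (|G s τ| / (b1 - b0) + |Gb s τ|)) / (a1 - a0)
        + ∫ τ in b0..b1, (|Ga s τ| / (b1 - b0) + |Gab s τ|) := by
      rw [← intervalIntegral.integral_div, ← intervalIntegral.integral_add]
      · exact ((((sl cG s).abs.div_const _).add (sl cGb s).abs).div_const _).intervalIntegrable _ _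
      · exact (((sl cGa s).abs.div_const _).add (sl cGab s).abs).intervalIntegrable _ _
    rw [e]
    gcongr
  have step3 : |G a b| ≤ ∫ x in Set.Icc a0 a1 ×ˢ Set.Icc b0 b1, Q x := by
    rw [Measure.volume_eq_prod, setIntegral_prod _
      (cQ.continuousOn.integrableOn_compact (isCompact_Icc.prod isCompact_Icc))]
    rw [integral_Icc_eq_integral_Ioc, ← intervalIntegral.integral_of_le h0.le]
    refine step1.trans (intervalIntegral.integral_mono_on h0.le ?_ ?_ fun s _ => ?_)
    · exact (((sr cG b).abs.div_const _).add (sr cGa b).abs).intervalIntegrable _ _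
    · simp_rw [integral_Icc_eq_integral_Ioc, ← intervalIntegral.integral_of_le h1.le]
      exact (intervalIntegral.continuous_parametric_intervalIntegral_of_continuous' (f := fun s τ => Q (s, τ)) cQ b0 b1).intervalIntegrable _ _
    · rw [integral_Icc_eq_integral_Ioc, ← intervalIntegral.integral_of_le h1.le]
      exact step2 s
  have step4 : ∫ x in Set.Icc a0 a1 ×ˢ Set.Icc b0 b1, (a1 - a0) * (b1 - b0) * Q x
      ≤ ∫ x in Set.Icc a0 a1 ×ˢ Set.Icc b0 b1, 9 * c ^ 2 * P x.1 x.2 ^ 2 := by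
    have hK : IsCompact (Set.Icc a0 a1 ×ˢ Set.Icc b0 b1) := isCompact_Icc.prod isCompact_Icc
    refine setIntegral_mono_on ((continuous_const.mul cQ).continuousOn.integrableOn_compact hK)
      ((continuous_const.mul (cP.pow 2)).continuousOn.integrableOn_compact hK)
      (measurableSet_Icc.prod measurableSet_Icc) fun x hx => ?_
    obtain ⟨i1, i2, i3, i4⟩ := hP x.1 hx.1 x.2 hx.2
    have e : (a1 - a0) * (b1 - b0) * Q x = |G x.1 x.2| + (b1 - b0) * |Gb x.1 x.2|
        + (a1 - a0) * |Ga x.1 x.2| + (a1 - a0) * ((b1 - b0) * |Gab x.1 x.2|) := by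
      simp only [Q]; field_simp; ring
    rw [e]
    have hG : |G x.1 x.2| = |f x.1 x.2| ^ 2 := by simp [G]
    have hGa : |Ga x.1 x.2| = 2 * (|f x.1 x.2| * |fa x.1 x.2|) := by simp [Ga, abs_mul]; ring
    have hGb : |Gb x.1 x.2| = 2 * (|f x.1 x.2| * |fb x.1 x.2|) := by simp [Gb, abs_mul]; ring
    have hGab : |Gab x.1 x.2| ≤ 2 * (|fb x.1 x.2| * |fa x.1 x.2| + |f x.1 x.2| * |fab x.1 x.2|) := by
      simp only [Gab]; rw [abs_mul, abs_two]
      gcongr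
      exact (abs_add_le _ _).trans (by rw [abs_mul, abs_mul])
    have hGab' : (a1 - a0) * ((b1 - b0) * |Gab x.1 x.2|) ≤ (a1 - a0) * ((b1 - b0) *
      (2 * (|fb x.1 x.2| * |fa x.1 x.2| + |f x.1 x.2| * |fab x.1 x.2|))) := by gcongr
    rw [hG, hGa, hGb]
    have n1 := abs_nonneg (f x.1 x.2)
    have n2 := abs_nonneg (fa x.1 x.2)
    have n3 := abs_nonneg (fb x.1 x.2)
    have n4 := abs_nonneg (fab x.1 x.2)
    generalize |f x.1 x.2| = F at *
    generalize |fa x.1 x.2| = Fa at *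
    generalize |fb x.1 x.2| = Fb at *
    generalize |fab x.1 x.2| = Fab at *
    generalize P x.1 x.2 = p at *
    have hp : 0 ≤ p := n1.trans i1
    have m1 : F ^ 2 ≤ p ^ 2 := by gcongr
    have m2 : F * ((a1 - a0) * Fa) ≤ p * (c * p) := by gcongr
    have m3 : F * ((b1 - b0) * Fb) ≤ p * (c * p) := by gcongr
    have m4 : F * ((a1 - a0) * ((b1 - b0) * Fab)) ≤ p * (c * p) := by gcongr
    have m5 : ((b1 - b0) * Fb) * ((a1 - a0) * Fa) ≤ (c * p) * (c * p) := by gcongr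
    have m6 : p ^ 2 * c ≤ p ^ 2 * c ^ 2 := by
      have : c ≤ c ^ 2 := by nlinarith
      gcongr
    have m7 : p ^ 2 ≤ p ^ 2 * c := le_mul_of_one_le_right (sq_nonneg p) hc
    linarith
  rw [integral_const_mul, integral_const_mul] at step4
  have hG : |G a b| = f a b ^ 2 := by simp [G]
  rw [hG] at step3
  exact (mul_le_mul_of_nonneg_left step3 (by positivity)).trans step4

/-- A continuous function vanishing off a square is integrable over the plane. -/
lemma integrable_of_zero {f : ℝ × ℝ → ℝ} (hf : Continuous f) {a b L : ℝ}
    (h : ∀ x, x ∉ Kb a b L → f x = 0) : Integrable f := by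
  rw [← integrableOn_iff_integrable_of_support_subset (s := Kb a b L)]
  · exact hf.continuousOn.integrableOn_compact (Kb_compact a b L)
  · intro x hx
    by_contra hn
    exact hx (h x hn)

lemma not_mem_Kb {L : ℝ} {x : ℝ × ℝ} (hx : x ∉ Kb 0 0 L) (hL : 0 ≤ L) :
    L ^ 2 < x.1 ^ 2 + x.2 ^ 2 := by
  simp only [Kb, Set.mem_prod, Set.mem_Icc, zero_sub, zero_add, ← abs_le, not_and_or, not_le] at hx
  rcases hx with h | h
  · have := sq_lt_sq' (by linarith) h
    rw [sq_abs] at this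
    nlinarith [sq_nonneg x.2]
  · have := sq_lt_sq' (by linarith) h
    rw [sq_abs] at this
    nlinarith [sq_nonneg x.1]

lemma radius_nonneg (x y : ℝ) : 0 ≤ radius x y := sqrt_nonneg _
lemma radius_sq (x y : ℝ) : radius x y ^ 2 = x ^ 2 + y ^ 2 := sq_sqrt (by positivity)

/-- Interior decay: for `|x| ≤ (3/4) t` the spatial derivative `∂₁` gains a factor `t⁻¹` over `Γ`. -/
lemma t_mul_p1_le {ψ : ℝ → ℝ → ℝ → ℝ} {t x y : ℝ} (ht : 0 < t)
    (h : x ^ 2 + y ^ 2 ≤ 9 / 16 * t ^ 2) : t / 8 * |pd 1 ψ t x y| ≤ Pn 1 ψ t x y := by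
  have id : (t ^ 2 - (x ^ 2 + y ^ 2)) * pd 1 ψ t x y
      = t * Gam 1 ψ t x y - x * Gam 0 ψ t x y + y * Gam 3 ψ t x y := by
    simp only [Gam, rot, pd]; ring
  have hs : |Gam 1 ψ t x y| + |Gam 0 ψ t x y| + |Gam 3 ψ t x y| ≤ Pn 1 ψ t x y := by
    simp only [Pn, Fin.sum_univ_seven]
    have := abs_nonneg (ψ t x y)
    have := abs_nonneg (Gam 2 ψ t x y)
    have := abs_nonneg (Gam 4 ψ t x y)
    have := abs_nonneg (Gam 5 ψ t x y)
    have := abs_nonneg (Gam 6 ψ t x y)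
    linarith
  have hx : |x| ≤ t := abs_le_of_sq_le_sq (by nlinarith [sq_nonneg y]) ht.le
  have hy : |y| ≤ t := abs_le_of_sq_le_sq (by nlinarith [sq_nonneg x]) ht.le
  have h1 : (t ^ 2 - (x ^ 2 + y ^ 2)) * |pd 1 ψ t x y| ≤ t * Pn 1 ψ t x y := by
    have hnn : 0 ≤ t ^ 2 - (x ^ 2 + y ^ 2) := by nlinarith [sq_nonneg t]
    rw [← abs_of_nonneg hnn, ← abs_mul, id]
    have a1 := abs_add_le (t * Gam 1 ψ t x y - x * Gam 0 ψ t x y) (y * Gam 3 ψ t x y)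
    have a2 := abs_sub (t * Gam 1 ψ t x y) (x * Gam 0 ψ t x y)
    rw [abs_mul y] at a1
    rw [abs_mul, abs_mul, abs_of_pos ht] at a2
    have b1 : |x| * |Gam 0 ψ t x y| ≤ t * |Gam 0 ψ t x y| := by gcongr
    have b2 : |y| * |Gam 3 ψ t x y| ≤ t * |Gam 3 ψ t x y| := by gcongr
    nlinarith
  have h2 : t * (t / 8 * |pd 1 ψ t x y|) ≤ t * Pn 1 ψ t x y := by
    refine le_trans ?_ h1
    nlinarith [abs_nonneg (pd 1 ψ t x y), mul_nonneg (sub_nonneg.2 h) (abs_nonneg (pd 1 ψ t x y)),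
      mul_nonneg (sq_nonneg t) (abs_nonneg (pd 1 ψ t x y))]
  exact le_of_mul_le_mul_left h2 ht

/-- The local form of the Sobolev inequality on the Cartesian box `[x, x + ℓ] × [y, y + 1]`. -/
lemma box_sobolev {φ : ℝ → ℝ → ℝ → ℝ} (hφ : Smooth3 φ) {t x y ℓ : ℝ} (hℓ : 0 < ℓ)
    (hi : Integrable (fun z : ℝ × ℝ => Pn 2 φ t z.1 z.2 ^ 2))
    (h : ∀ ψ, Smooth3 ψ → ∀ a ∈ Set.Icc x (x + ℓ), ∀ b ∈ Set.Icc y (y + 1),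
      ℓ * |pd 1 ψ t a b| ≤ Pn 1 ψ t a b) :
    ℓ * φ t x y ^ 2 ≤ 9 * ∫ z : ℝ × ℝ, Pn 2 φ t z.1 z.2 ^ 2 := by
  have cP : Continuous fun p : ℝ × ℝ => Pn 2 φ t p.1 p.2 :=
    (Pn_continuous hφ 2).comp (Continuous.prodMk continuous_const continuous_id)
  have := sobolev_rect (f := φ t) (fa := pd 1 φ t) (fb := pd 2 φ t) (fab := pd 2 (pd 1 φ) t)
    (P := Pn 2 φ t) (fun a b => hφ.hd1 t a b) (fun a b => hφ.hd2 t a b)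
    (fun a b => (hφ.pd 1).hd2 t a b) (hφ.continuous_slice t) ((hφ.pd 1).continuous_slice t)
    ((hφ.pd 2).continuous_slice t) (((hφ.pd 1).pd 2).continuous_slice t) cP
    (a0 := x) (a1 := x + ℓ) (b0 := y) (b1 := y + 1) (by linarith) (by linarith) le_rfl ?_
    (a := x) (b := y) ⟨le_rfl, by linarith⟩ ⟨le_rfl, by linarith⟩
  · have h2 := setIntegral_le_integral (s := Set.Icc x (x + ℓ) ×ˢ Set.Icc y (y + 1)) hi
      (Eventually.of_forall fun z => sq_nonneg _)
    have e : (x + ℓ - x) * (y + 1 - y) = ℓ := by ring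
    rw [e] at this
    linarith
  · intro a ha b hb
    simp only [add_sub_cancel_left, one_mul]
    refine ⟨abs_le_Pn _ _ _ _ _, (h φ hφ a ha b hb).trans (Pn_mono (by norm_num) _ _ _ _), ?_, ?_⟩
    · exact (abs_le_Pn 1 _ _ _ _).trans (Pn_Gam_le 1 φ 6 t a b)
    · rw [← pd_comm hφ 1 2]
      exact (h _ (hφ.pd 2) a ha b hb).trans (Pn_Gam_le 1 φ 6 t a b)

/-- The local form of the Sobolev inequality on the annulus `[r, r + 1]` in polar coordinates. -/
lemma polar_sobolev {φ : ℝ → ℝ → ℝ → ℝ} (hφ : Smooth3 φ) {t x y : ℝ} (hr : 0 < radius x y)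
    (hi : Integrable (fun z : ℝ × ℝ => Pn 2 φ t z.1 z.2 ^ 2)) :
    radius x y * φ t x y ^ 2 ≤ 9 * 32 ^ 2 * ∫ z : ℝ × ℝ, Pn 2 φ t z.1 z.2 ^ 2 := by
  set r := radius x y with hrdef
  have cP : Continuous fun p : ℝ × ℝ => Pn 2 φ t p.1 p.2 :=
    (Pn_continuous hφ 2).comp (Continuous.prodMk continuous_const continuous_id)
  obtain ⟨θ, hθ, hx, hy⟩ : ∃ θ ∈ Set.Icc (-π) π, x = r * cos θ ∧ y = r * sin θ := by
    let z : ℂ := ⟨x, y⟩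
    have hz : ‖z‖ = r := by
      rw [hrdef, radius, Complex.norm_eq_sqrt_sq_add_sq]
    refine ⟨z.arg, ⟨(Complex.neg_pi_lt_arg z).le, Complex.arg_le_pi z⟩, ?_, ?_⟩
    · rw [← hz, Complex.norm_mul_cos_arg]
    · rw [← hz, Complex.norm_mul_sin_arg]
  -- The function and its derivatives along the polar grid.
  have dρ : ∀ {ψ : ℝ → ℝ → ℝ → ℝ}, Smooth3 ψ → ∀ a b : ℝ,
      HasDerivAt (fun s => ψ t (s * cos b) (s * sin b))
        (cos b * pd 1 ψ t (a * cos b) (a * sin b) + sin b * pd 2 ψ t (a * cos b) (a * sin b)) a := by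
    intro ψ hψ a b
    have h1 : HasDerivAt (fun s : ℝ => (t, s * cos b, s * sin b)) (0, cos b, sin b) a :=
      (hasDerivAt_const a t).prodMk ((hasDerivAt_mul_const _).prodMk (hasDerivAt_mul_const _))
    have h2 := (hψ.differentiableAt (t, a * cos b, a * sin b)).hasFDerivAt.comp_hasDerivAt a h1
    rw [pd_apply hψ, pd_apply hψ]
    have e : ((0 : ℝ), cos b, sin b) = cos b • ev 1 + sin b • ev 2 := by simp [ev]
    rw [e, map_add, map_smul, map_smul] at h2
    exact h2
  have dθ : ∀ {ψ : ℝ → ℝ → ℝ → ℝ}, Smooth3 ψ → ∀ a b : ℝ,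
      HasDerivAt (fun s => ψ t (a * cos s) (a * sin s)) (Gam 3 ψ t (a * cos b) (a * sin b)) b := by
    intro ψ hψ a b
    have h1 : HasDerivAt (fun s : ℝ => (t, a * cos s, a * sin s)) (0, a * -sin b, a * cos b) b :=
      (hasDerivAt_const b t).prodMk (((hasDerivAt_cos b).const_mul a).prodMk
        ((hasDerivAt_sin b).const_mul a))
    have h2 := (hψ.differentiableAt (t, a * cos b, a * sin b)).hasFDerivAt.comp_hasDerivAt b h1
    have e : ((0 : ℝ), a * -sin b, a * cos b) = (-(a * sin b)) • ev 1 + (a * cos b) • ev 2 := by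
      simp [ev]
    rw [e, map_add, map_smul, map_smul, ← pd_apply hψ, ← pd_apply hψ] at h2
    have e2 : Gam 3 ψ t (a * cos b) (a * sin b)
        = (-(a * sin b)) • pd 1 ψ t (a * cos b) (a * sin b)
          + (a * cos b) • pd 2 ψ t (a * cos b) (a * sin b) := by
      simp only [Gam, rot, pd, smul_eq_mul]; ring
    rw [e2]
    exact h2
  have cc1 : Continuous fun p : ℝ × ℝ => (p.1 * cos p.2, p.1 * sin p.2) := by fun_prop
  have cψ : ∀ {ψ : ℝ → ℝ → ℝ → ℝ}, Smooth3 ψ →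
      Continuous fun p : ℝ × ℝ => ψ t (p.1 * cos p.2) (p.1 * sin p.2) :=
    fun hψ => (hψ.continuous_slice t).comp cc1
  have hcb : Continuous fun p : ℝ × ℝ => cos p.2 := by fun_prop
  have hsb : Continuous fun p : ℝ × ℝ => sin p.2 := by fun_prop
  have main := sobolev_rect (f := fun a b => φ t (a * cos b) (a * sin b))
    (fa := fun a b => cos b * pd 1 φ t (a * cos b) (a * sin b)
      + sin b * pd 2 φ t (a * cos b) (a * sin b))
    (fb := fun a b => Gam 3 φ t (a * cos b) (a * sin b))
    (fab := fun a b => (-sin b * pd 1 φ t (a * cos b) (a * sin b)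
        + cos b * Gam 3 (pd 1 φ) t (a * cos b) (a * sin b))
      + (cos b * pd 2 φ t (a * cos b) (a * sin b)
        + sin b * Gam 3 (pd 2 φ) t (a * cos b) (a * sin b)))
    (P := fun a b => Pn 2 φ t (a * cos b) (a * sin b)) (dρ hφ) (dθ hφ)
    (fun a b => ((hasDerivAt_cos b).mul (dθ (hφ.pd 1) a b)).add
      ((hasDerivAt_sin b).mul (dθ (hφ.pd 2) a b)))
    (cψ hφ) ((hcb.mul (cψ (hφ.pd 1))).add (hsb.mul (cψ (hφ.pd 2)))) (cψ (hφ.Gam 3))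
    (((hsb.neg.mul (cψ (hφ.pd 1))).add (hcb.mul (cψ ((hφ.pd 1).Gam 3)))).add
      ((hcb.mul (cψ (hφ.pd 2))).add (hsb.mul (cψ ((hφ.pd 2).Gam 3)))))
    (cP.comp cc1) (a0 := r) (a1 := r + 1) (b0 := -π) (b1 := π) (c := 32)
    (by linarith) (by linarith [pi_pos]) (by norm_num) ?_
    (a := r) (b := θ) ⟨le_rfl, by linarith⟩ hθ
  · simp only [← hx, ← hy] at main
    have hK : IsCompact (Set.Icc r (r + 1) ×ˢ Set.Icc (-π) π) := isCompact_Icc.prod isCompact_Icc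
    have cP2 : Continuous fun p : ℝ × ℝ => Pn 2 φ t (p.1 * cos p.2) (p.1 * sin p.2) ^ 2 :=
      (cP.comp cc1).pow 2
    -- The Jacobian `ρ` is at least `r` on the rectangle.
    have j1 : r * ∫ p in Set.Icc r (r + 1) ×ˢ Set.Icc (-π) π,
          Pn 2 φ t (p.1 * cos p.2) (p.1 * sin p.2) ^ 2
        ≤ ∫ p in Set.Icc r (r + 1) ×ˢ Set.Icc (-π) π,
          p.1 * Pn 2 φ t (p.1 * cos p.2) (p.1 * sin p.2) ^ 2 := by
      rw [← integral_const_mul]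
      refine setIntegral_mono_on ((continuous_const.mul cP2).continuousOn.integrableOn_compact hK)
        ((continuous_fst.mul cP2).continuousOn.integrableOn_compact hK)
        (measurableSet_Icc.prod measurableSet_Icc) fun p hp => ?_
      have := hp.1.1
      gcongr
    have j2 : ∫ p in Set.Icc r (r + 1) ×ˢ Set.Icc (-π) π,
          p.1 * Pn 2 φ t (p.1 * cos p.2) (p.1 * sin p.2) ^ 2
        ≤ ∫ p in polarCoord.target,
          p.1 * Pn 2 φ t (p.1 * cos p.2) (p.1 * sin p.2) ^ 2 := by
      have hae : (Set.Icc r (r + 1) ×ˢ Set.Ioo (-π) π : Set (ℝ × ℝ))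
          =ᵐ[volume] Set.Icc r (r + 1) ×ˢ Set.Icc (-π) π :=
        Measure.set_prod_ae_eq (ae_eq_refl _) Ioo_ae_eq_Icc
      rw [← setIntegral_congr_set hae]
      have hint : IntegrableOn (fun p : ℝ × ℝ =>
          p.1 * Pn 2 φ t (p.1 * cos p.2) (p.1 * sin p.2) ^ 2) polarCoord.target := by
        have := (integrableOn_image_iff_integrableOn_abs_det_fderiv_smul volume
          polarCoord.open_target.measurableSet
          (fun p _ => (hasFDerivAt_polarCoord_symm p).hasFDerivWithinAt)
          polarCoord.symm.injOn (fun z : ℝ × ℝ => Pn 2 φ t z.1 z.2 ^ 2)).1 hi.integrableOn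
        refine this.congr_fun (fun p hp => ?_) polarCoord.open_target.measurableSet
        have hp1 : 0 < p.1 := hp.1
        simp only [det_fderivPolarCoordSymm, abs_of_pos hp1, smul_eq_mul]
        rfl
      refine setIntegral_mono_set hint ?_ ?_
      · refine (ae_restrict_mem polarCoord.open_target.measurableSet).mono fun p hp => ?_
        have : 0 < p.1 := hp.1
        simp only [Pi.zero_apply]
        positivity
      · refine Eventually.of_forall ?_
        rintro ⟨a, b⟩ ⟨ha, hb⟩
        exact ⟨lt_of_lt_of_le hr ha.1, hb⟩
    have j3 := integral_comp_polarCoord_symm (fun z : ℝ × ℝ => Pn 2 φ t z.1 z.2 ^ 2)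
    have j4 : ∫ p in polarCoord.target, p.1 * Pn 2 φ t (p.1 * cos p.2) (p.1 * sin p.2) ^ 2
        = ∫ z : ℝ × ℝ, Pn 2 φ t z.1 z.2 ^ 2 := j3
    have e : (r + 1 - r) * (π - -π) = 2 * π := by ring
    rw [e] at main
    have hπ := pi_gt_three
    have k1 : φ t x y ^ 2 ≤ 2 * π * φ t x y ^ 2 :=
      le_mul_of_one_le_left (sq_nonneg _) (by linarith)
    have k2 : r * φ t x y ^ 2 ≤ r * (9 * 32 ^ 2 * ∫ p in Set.Icc r (r + 1) ×ˢ Set.Icc (-π) π,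
          Pn 2 φ t (p.1 * cos p.2) (p.1 * sin p.2) ^ 2) :=
      mul_le_mul_of_nonneg_left (k1.trans main) hr.le
    linarith
  · intro a ha b hb
    have hπ := pi_le_four
    have hπ0 := pi_pos
    have q1 : |pd 1 φ t (a * cos b) (a * sin b)| ≤ Pn 2 φ t (a * cos b) (a * sin b) :=
      (abs_le_Pn 1 _ _ _ _).trans (Pn_Gam_le 1 φ 5 _ _ _)
    have q2 : |pd 2 φ t (a * cos b) (a * sin b)| ≤ Pn 2 φ t (a * cos b) (a * sin b) :=
      (abs_le_Pn 1 _ _ _ _).trans (Pn_Gam_le 1 φ 6 _ _ _)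
    have q3 : |Gam 3 φ t (a * cos b) (a * sin b)| ≤ Pn 2 φ t (a * cos b) (a * sin b) :=
      (abs_le_Pn 1 _ _ _ _).trans (Pn_Gam_le 1 φ 3 _ _ _)
    have q4 : |Gam 3 (pd 1 φ) t (a * cos b) (a * sin b)| ≤ Pn 2 φ t (a * cos b) (a * sin b) :=
      ((abs_le_Pn 0 _ _ _ _).trans (Pn_Gam_le 0 _ 3 _ _ _)).trans (Pn_Gam_le 1 φ 5 _ _ _)
    have q5 : |Gam 3 (pd 2 φ) t (a * cos b) (a * sin b)| ≤ Pn 2 φ t (a * cos b) (a * sin b) :=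
      ((abs_le_Pn 0 _ _ _ _).trans (Pn_Gam_le 0 _ 3 _ _ _)).trans (Pn_Gam_le 1 φ 6 _ _ _)
    have tr : ∀ {c z p : ℝ}, |c| ≤ 1 → |z| ≤ p → |c * z| ≤ p := fun hc hz => by
      rw [abs_mul]; exact (mul_le_of_le_one_left (abs_nonneg _) hc).trans hz
    have hc := abs_cos_le_one b
    have hs := abs_sin_le_one b
    have hs' : |(-sin b)| ≤ 1 := by rwa [abs_neg]
    have hp := Pn_nonneg 2 φ t (a * cos b) (a * sin b)
    have w1 := (abs_add_le _ _).trans (add_le_add (tr hc q1) (tr hs q2))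
    have w2 := (abs_add_le _ _).trans (add_le_add
      ((abs_add_le _ _).trans (add_le_add (tr hs' q1) (tr hc q4)))
      ((abs_add_le _ _).trans (add_le_add (tr hc q2) (tr hs q5))))
    refine ⟨abs_le_Pn _ _ _ _ _, ?_, ?_, ?_⟩
    · rw [add_sub_cancel_left, one_mul]; linarith
    · have : (π - -π) * |Gam 3 φ t (a * cos b) (a * sin b)|
          ≤ 8 * Pn 2 φ t (a * cos b) (a * sin b) := by
        gcongr; linarith
      linarith
    · rw [add_sub_cancel_left, one_mul]
      refine (mul_le_mul_of_nonneg_left w2 (by linarith)).trans ?_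
      nlinarith

/-- The Klainerman–Sobolev inequality, without the factor `⟨t - |x|⟩`. -/
lemma klainerman_sobolev {φ : ℝ → ℝ → ℝ → ℝ} (hφ : Smooth3 φ) {t : ℝ} (ht : 0 ≤ t)
    (hi : Integrable (fun z : ℝ × ℝ => Pn 2 φ t z.1 z.2 ^ 2)) (x y : ℝ) :
    (1 + t + radius x y) * φ t x y ^ 2 ≤ 36864 * ∫ z : ℝ × ℝ, Pn 2 φ t z.1 z.2 ^ 2 := by
  set I := ∫ z : ℝ × ℝ, Pn 2 φ t z.1 z.2 ^ 2 with hI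
  have hI0 : 0 ≤ I := integral_nonneg fun z => sq_nonneg _
  have hr := radius_nonneg x y
  have hφ2 := sq_nonneg (φ t x y)
  by_cases c1 : 1 ≤ radius x y ∧ t / 2 ≤ radius x y
  · have := polar_sobolev hφ (lt_of_lt_of_le one_pos c1.1) hi (t := t)
    have h4 : 1 + t + radius x y ≤ 4 * radius x y := by linarith [c1.1, c1.2]
    have := mul_le_mul_of_nonneg_right h4 hφ2
    linarith
  by_cases c2 : 8 ≤ t ∧ radius x y < t / 2
  · have ht0 : 0 < t := by linarith [c2.1]
    have := box_sobolev hφ (x := x) (y := y) (ℓ := t / 8) (by linarith) hi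
      fun ψ hψ a ha b hb => t_mul_p1_le ht0 (by
        have hrs := radius_sq x y
        have h1 : x ^ 2 + y ^ 2 ≤ t ^ 2 / 4 := by rw [← hrs]; nlinarith [c2.2]
        obtain ⟨a', rfl⟩ : ∃ a', a = x + a' := ⟨a - x, by ring⟩
        obtain ⟨b', rfl⟩ : ∃ b', b = y + b' := ⟨b - y, by ring⟩
        have ha1 : 0 ≤ a' := by linarith [ha.1]
        have ha2 : a' ≤ t / 8 := by linarith [ha.2]
        have hb1 : 0 ≤ b' := by linarith [hb.1]
        have hb2 : b' ≤ t / 8 := by linarith [hb.2, c2.1]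
        have ha3 : a' ^ 2 ≤ (t / 8) ^ 2 := by gcongr
        have hb3 : b' ^ 2 ≤ (t / 8) ^ 2 := by gcongr
        nlinarith [sq_nonneg (x / 2 - a'), sq_nonneg (y / 2 - b'), sq_nonneg (x - 2 * a'),
          sq_nonneg (y - 2 * b')])
    have h4 : 1 + t + radius x y ≤ 16 * (t / 8) := by linarith [c2.1, c2.2]
    have := mul_le_mul_of_nonneg_right h4 hφ2
    linarith
  · have := box_sobolev hφ (x := x) (y := y) (t := t) one_pos hi
      fun ψ hψ a ha b hb => by
        rw [one_mul]
        exact (abs_le_Pn 0 _ _ _ _).trans (Pn_Gam_le 0 ψ 5 _ _ _)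
    have h4 : 1 + t + radius x y ≤ 13 := by
      rw [not_and_or, not_le, not_le] at c1
      rw [not_and_or, not_le, not_lt] at c2
      rcases c1 with c1 | c1 <;> rcases c2 with c2 | c2 <;> linarith
    have := mul_le_mul_of_nonneg_right h4 hφ2
    linarith

/-! ### Derivatives at the initial time -/

/-- The iterated partial derivative along a word in the three coordinate directions. -/
def dw : List (Fin 3) → (ℝ → ℝ → ℝ → ℝ) → ℝ → ℝ → ℝ → ℝ
  | [], u => u
  | j :: w, u => dw w (pd j u)

lemma Smooth3.dw {u : ℝ → ℝ → ℝ → ℝ} (hu : Smooth3 u) (w : List (Fin 3)) : Smooth3 (dw w u) := by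
  induction w generalizing u with
  | nil => exact hu
  | cons j w ih => exact ih (hu.pd j)

lemma dw_add {u v : ℝ → ℝ → ℝ → ℝ} (hu : Smooth3 u) (hv : Smooth3 v) (w : List (Fin 3)) :
    dw w (u + v) = dw w u + dw w v := by
  induction w generalizing u v with
  | nil => rfl
  | cons j w ih => simp only [dw, pd_add hu hv, ih (hu.pd j) (hv.pd j)]

lemma dw_smul {u : ℝ → ℝ → ℝ → ℝ} (hu : Smooth3 u) (c : ℝ) (w : List (Fin 3)) :
    dw w (c • u) = c • dw w u := by
  induction w generalizing u with
  | nil => rfl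
  | cons j w ih => simp only [dw, pd_smul hu, ih (hu.pd j)]

lemma dw_perm {w w' : List (Fin 3)} (h : w.Perm w') {u : ℝ → ℝ → ℝ → ℝ} (hu : Smooth3 u) :
    dw w u = dw w' u := by
  induction h generalizing u with
  | nil => rfl
  | cons j _ ih => exact ih (hu.pd j)
  | swap i j l => simp only [dw, pd_comm hu i j]
  | trans _ _ ih1 ih2 => exact (ih1 hu).trans (ih2 hu)

lemma dw_congr_pos {u v : ℝ → ℝ → ℝ → ℝ} (h : ∀ t x y, 0 < t → u t x y = v t x y)
    (w : List (Fin 3)) : ∀ t x y, 0 < t → dw w u t x y = dw w v t x y := by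
  induction w generalizing u v with
  | nil => exact h
  | cons j w ih => exact ih (pd_congr_pos h j)

lemma dw_congr_zero {u v : ℝ → ℝ → ℝ → ℝ} (h : ∀ x y, u 0 x y = v 0 x y)
    (w : List (Fin 3)) (hw : w.count 0 = 0) : ∀ x y, dw w u 0 x y = dw w v 0 x y := by
  induction w generalizing u v with
  | nil => exact h
  | cons j w ih =>
    have hj : j ≠ 0 := by rintro rfl; simp at hw
    rw [List.count_cons_of_ne hj] at hw
    refine ih (fun x y => ?_) hw
    match j with
    | 0 => exact absurd rfl hj
    | 1 => simp only [pd, p1, h]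
    | 2 => simp only [pd, p2, h]

section Families

variable {I : Type}

/-- A family `Fᵢ` is `O(εᵢ^m)` at time `0`, uniformly on the square of half side `B`. -/
def Bd (B : ℝ) (e : I → ℝ) (m : ℕ) (F : I → ℝ → ℝ → ℝ → ℝ) : Prop :=
  ∃ C : ℝ, 0 ≤ C ∧ ∀ i, ∀ p ∈ Kb 0 0 B, |F i 0 p.1 p.2| ≤ C * e i ^ m

/-- All derivatives of the family with at most `n` time derivatives, and arbitrarily many space
derivatives, are `O(εᵢ^m)` at time `0`. -/
def Fam (B : ℝ) (e : I → ℝ) (n m : ℕ) (F : I → ℝ → ℝ → ℝ → ℝ) : Prop :=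
  ∀ w : List (Fin 3), w.count 0 ≤ n → Bd B e m (fun i => dw w (F i))

variable {B : ℝ} {e : I → ℝ} {n m m' : ℕ} {F G : I → ℝ → ℝ → ℝ → ℝ}

lemma Bd.add (hF : Bd B e m F) (hG : Bd B e m G) : Bd B e m (fun i => F i + G i) := by
  obtain ⟨C, hC, h⟩ := hF
  obtain ⟨D, hD, k⟩ := hG
  refine ⟨C + D, by positivity, fun i p hp => ?_⟩
  have := (abs_add_le (F i 0 p.1 p.2) (G i 0 p.1 p.2)).trans (add_le_add (h i p hp) (k i p hp))
  rw [add_mul]; exact this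

lemma Bd.mul (hF : Bd B e m F) (hG : Bd B e m' G) : Bd B e (m + m') (fun i => F i * G i) := by
  obtain ⟨C, hC, h⟩ := hF
  obtain ⟨D, hD, k⟩ := hG
  refine ⟨C * D, by positivity, fun i p hp => ?_⟩
  have h1 := mul_le_mul (h i p hp) (k i p hp) (abs_nonneg _) ((abs_nonneg _).trans (h i p hp))
  rw [← abs_mul] at h1
  refine h1.trans (le_of_eq ?_)
  rw [pow_add]; ring

lemma Fam.mono {n' : ℕ} (h : n' ≤ n) (hF : Fam B e n m F) : Fam B e n' m F :=
  fun w hw => hF w (hw.trans h)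

lemma Fam.bd (hF : Fam B e n m F) : Bd B e m F := hF [] (by simp)

lemma Fam.pd (hF : Fam B e (n + 1) m F) (j : Fin 3) : Fam B e n m (fun i => pd j (F i)) :=
  fun w hw => hF (j :: w) (by rw [List.count_cons]; split_ifs <;> omega)

lemma Fam.pd_ne (hF : Fam B e n m F) {j : Fin 3} (hj : j ≠ 0) :
    Fam B e n m (fun i => _root_.pd j (F i)) :=
  fun w hw => hF (j :: w) (by rwa [List.count_cons_of_ne hj])

lemma Fam.add (sF : ∀ i, Smooth3 (F i)) (sG : ∀ i, Smooth3 (G i)) (hF : Fam B e n m F)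
    (hG : Fam B e n m G) : Fam B e n m (fun i => F i + G i) := by
  intro w hw
  simp only [dw_add (sF _) (sG _)]
  exact (hF w hw).add (hG w hw)

lemma Fam.sum {ι : Type*} (s : Finset ι) {F : ι → I → ℝ → ℝ → ℝ → ℝ}
    (sF : ∀ k i, Smooth3 (F k i)) (hF : ∀ k, Fam B e n m (F k)) :
    Fam B e n m (fun i => ∑ k ∈ s, F k i) := by
  classical
  induction s using Finset.induction_on with
  | empty =>
    intro w _
    refine ⟨0, le_rfl, fun i p _ => ?_⟩
    have : dw w (0 : ℝ → ℝ → ℝ → ℝ) = 0 := by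
      have := dw_smul smooth3_zero 0 w
      simpa using this
    simp [this]
  | insert a s ha ih =>
    simp only [Finset.sum_insert ha]
    exact (hF a).add (sF a) (fun i => Smooth3.sum s fun k => sF k i) ih

lemma Fam.smul (sF : ∀ i, Smooth3 (F i)) (c : ℝ) (hF : Fam B e n m F) :
    Fam B e n m (fun i => c • F i) := by
  intro w hw
  obtain ⟨C, hC, h⟩ := hF w hw
  refine ⟨|c| * C, by positivity, fun i p hp => ?_⟩
  change |dw w (c • F i) 0 p.1 p.2| ≤ _
  rw [dw_smul (sF i), mul_assoc]
  change |c * _| ≤ _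
  rw [abs_mul]
  exact mul_le_mul_of_nonneg_left (h i p hp) (abs_nonneg c)

lemma Fam.mul (sF : ∀ i, Smooth3 (F i)) (sG : ∀ i, Smooth3 (G i)) (hF : Fam B e n m F)
    (hG : Fam B e n m' G) : Fam B e n (m + m') (fun i => F i * G i) := by
  intro w hw
  induction w generalizing n F G with
  | nil => exact hF.bd.mul hG.bd
  | cons j w ih =>
    have key : ∀ n', n' ≤ n → w.count 0 ≤ n' → Fam B e n' m (fun i => _root_.pd j (F i)) →
        Fam B e n' m' (fun i => _root_.pd j (G i)) →
        Bd B e (m + m') (fun i => dw (j :: w) (F i * G i)) := by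
      intro n' hn hc h1 h2
      simp only [dw, pd_mul (sF _) (sG _)]
      simp only [dw_add (((sF _).pd j).mul (sG _)) ((sF _).mul ((sG _).pd j))]
      exact (ih (fun i => (sF i).pd j) sG h1 (hG.mono hn) hc).add
        (ih sF (fun i => (sG i).pd j) (hF.mono hn) h2 hc)
    by_cases hj : j = 0
    · subst hj
      rw [List.count_cons_self] at hw
      obtain ⟨n', rfl⟩ : ∃ n', n = n' + 1 := ⟨n - 1, by omega⟩
      exact key n' (by omega) (by omega) (hF.pd 0) (hG.pd 0)
    · rw [List.count_cons_of_ne hj] at hw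
      exact key n le_rfl hw (hF.pd_ne hj) (hG.pd_ne hj)

lemma Fam.congr_pos (sF : ∀ i, Smooth3 (F i)) (sG : ∀ i, Smooth3 (G i))
    (h : ∀ i t x y, 0 < t → F i t x y = G i t x y) (hF : Fam B e n m F) : Fam B e n m G := by
  intro w hw
  obtain ⟨C, hC, k⟩ := hF w hw
  refine ⟨C, hC, fun i p hp => ?_⟩
  change |dw w (G i) 0 p.1 p.2| ≤ _
  rw [← eq_of_pos ((sF i).dw w) ((sG i).dw w) (dw_congr_pos (h i) w) le_rfl]
  exact k i p hp

lemma bound_of_smooth {f : ℝ → ℝ → ℝ → ℝ} (hf : Smooth3 f) (B : ℝ) :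
    ∃ C : ℝ, 0 ≤ C ∧ ∀ p ∈ Kb 0 0 B, |f 0 p.1 p.2| ≤ C := by
  obtain ⟨C, hC⟩ := (Kb_compact 0 0 B).exists_bound_of_continuousOn
    (hf.continuous_slice 0).continuousOn
  exact ⟨max C 0, le_max_right _ _, fun p hp => (hC p hp).trans (le_max_left _ _)⟩

lemma fam_const {f : ℝ → ℝ → ℝ → ℝ} (hf : Smooth3 f) (B : ℝ) (e : I → ℝ) (n : ℕ) :
    Fam B e n 0 (fun _ : I => f) := by
  intro w _
  obtain ⟨C, hC, h⟩ := bound_of_smooth (hf.dw w) B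
  exact ⟨C, hC, fun i p hp => by rw [pow_zero, mul_one]; exact h p hp⟩

lemma Fam.Gam (sF : ∀ i, Smooth3 (F i)) (hF : Fam B e (n + 1) m F)
    (k : Fin 7) : Fam B e n m (fun i => Gam k (F i)) := by
  simp only [Gam_eq_sum]
  refine Fam.sum _ (fun j i => (smooth_cf k j).mul ((sF i).pd j)) (fun j => ?_)
  have := (fam_const (smooth_cf k j) B e n).mul (fun _ => smooth_cf k j)
    (fun i => (sF i).pd j) (hF.pd j)
  rwa [zero_add] at this

/-- The Cauchy data of size `εᵢ^m` control the derivatives with at most one time derivative. -/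
lemma fam_of_data (sF : ∀ i, Smooth3 (F i)) {f g : ℝ → ℝ → ℝ → ℝ} (hf : Smooth3 f)
    (hg : Smooth3 g) (he : ∀ i, 0 ≤ e i) (h0 : ∀ i x y, F i 0 x y = e i ^ m * f 0 x y)
    (h1 : ∀ i x y, pd 0 (F i) 0 x y = e i ^ m * g 0 x y) : Fam B e 1 m F := by
  have key : ∀ {H : I → ℝ → ℝ → ℝ → ℝ} {h : ℝ → ℝ → ℝ → ℝ}, (∀ i, Smooth3 (H i)) → Smooth3 h →
      (∀ i x y, H i 0 x y = e i ^ m * h 0 x y) → ∀ w : List (Fin 3), w.count 0 = 0 →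
      Bd B e m (fun i => dw w (H i)) := by
    intro H h sH sh hH w hw
    obtain ⟨C, hC, k⟩ := bound_of_smooth (sh.dw w) B
    refine ⟨C, hC, fun i p hp => ?_⟩
    change |dw w (H i) 0 p.1 p.2| ≤ _
    rw [dw_congr_zero (v := (e i ^ m) • h) (hH i) w hw, dw_smul sh]
    change |e i ^ m * _| ≤ _
    rw [abs_mul, abs_of_nonneg (pow_nonneg (he i) m), mul_comm]
    exact mul_le_mul_of_nonneg_right (k p hp) (pow_nonneg (he i) m)
  intro w hw
  rcases Nat.lt_or_ge (w.count 0) 1 with hw0 | hw1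
  · exact key sF hf h0 w (by omega)
  · have hp := List.perm_cons_erase (List.count_pos_iff.1 hw1)
    simp only [dw_perm hp (sF _), dw]
    refine key (fun i => (sF i).pd 0) hg h1 _ ?_
    rw [List.count_erase_self]; omega

/-- The wave equation converts two time derivatives into space derivatives and the source. -/
lemma fam_step (sF : ∀ i, Smooth3 (F i)) {N : I → ℝ → ℝ → ℝ → ℝ} (sN : ∀ i, Smooth3 (N i))
    (hbox : ∀ i t x y, 0 < t → dAlembert (F i) t x y = N i t x y)
    (hF : Fam B e (n + 1) m F) (hN : Fam B e n m N) : Fam B e (n + 2) m F := by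
  intro w hw
  rcases Nat.lt_or_ge (w.count 0) (n + 2) with hw0 | hw1
  · exact hF w (by omega)
  have hp := List.perm_cons_erase (List.count_pos_iff.1 (show 0 < w.count 0 by omega))
  have hc : (w.erase 0).count 0 = n + 1 := by rw [List.count_erase_self]; omega
  have hp' := List.perm_cons_erase (List.count_pos_iff.1 (show 0 < (w.erase 0).count 0 by omega))
  have hc' : ((w.erase 0).erase 0).count 0 = n := by rw [List.count_erase_self]; omega
  simp only [dw_perm (hp.trans (hp'.cons 0)) (sF _), dw]
  have s1 := fun i => ((sF i).pd 1).pd 1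
  have s2 := fun i => ((sF i).pd 2).pd 2
  have hF' := hF.mono (Nat.le_succ n)
  have h12 := ((hF'.pd_ne (j := 1) (by decide)).pd_ne (j := 1) (by decide)).add s1 s2
    ((hF'.pd_ne (j := 2) (by decide)).pd_ne (j := 2) (by decide))
  have h3 := h12.add (fun i => (s1 i).add (s2 i)) sN hN
  refine h3.congr_pos (fun i => ((s1 i).add (s2 i)).add (sN i)) (fun i => ((sF i).pd 0).pd 0)
    (fun i t x y ht => ?_) _ hc'.le
  have := hbox i t x y ht
  simp only [box_eq, Pi.sub_apply] at this
  simp only [Pi.add_apply]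
  linarith

lemma Fam.en (sF : ∀ i, Smooth3 (F i)) (hF : Fam B e (n + 1) m F) :
    Fam B e 0 (m + m) (fun i => en n (F i)) := by
  have h0 : ∀ {F : I → ℝ → ℝ → ℝ → ℝ}, (∀ i, Smooth3 (F i)) → Fam B e 1 m F →
      Fam B e 0 (m + m) (fun i => ∑ j, _root_.pd j (F i) * _root_.pd j (F i)) := fun sF hF =>
    Fam.sum _ (fun j i => ((sF i).pd j).mul ((sF i).pd j))
      (fun j => (hF.pd j).mul (fun i => (sF i).pd j) (fun i => (sF i).pd j) (hF.pd j))
  induction n generalizing F with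
  | zero => exact h0 sF hF
  | succ n ih =>
    exact (h0 sF (hF.mono (by omega))).add
      (fun i => Smooth3.sum _ fun j => ((sF i).pd j).mul ((sF i).pd j))
      (fun i => Smooth3.sum _ fun k => ((sF i).Gam k).en n)
      (Fam.sum _ (fun k i => ((sF i).Gam k).en n) (fun k => ih (fun i => (sF i).Gam k)
        (hF.Gam sF k)))

/-- Solutions of the system with data of size `ε` have all derivatives of size `ε` at time `0`. -/
lemma fam_solution {u v : I → ℝ → ℝ → ℝ → ℝ} (su : ∀ i, Smooth3 (u i)) (sv : ∀ i, Smooth3 (v i))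
    (he : ∀ i, 0 ≤ e i) (he1 : ∀ i, e i ≤ 1)
    (hu : ∀ i t x y, 0 < t → dAlembert (u i) t x y
      = ((-1 : ℝ) • (pd 0 (v i) * pd 0 (v i) * pd 0 (u i))) t x y)
    (hv : ∀ i t x y, 0 < t → dAlembert (v i) t x y
      = ((-1 : ℝ) • (pd 0 (u i) * pd 0 (u i) * pd 0 (v i))) t x y)
    (fu : Fam B e 1 1 u) (fv : Fam B e 1 1 v) (n : ℕ) :
    Fam B e (n + 1) 1 u ∧ Fam B e (n + 1) 1 v ∧
    Fam B e n 3 (fun i => (-1 : ℝ) • (pd 0 (v i) * pd 0 (v i) * pd 0 (u i))) ∧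
    Fam B e n 3 (fun i => (-1 : ℝ) • (pd 0 (u i) * pd 0 (u i) * pd 0 (v i))) := by
  have cub : ∀ {n : ℕ} {u v : I → ℝ → ℝ → ℝ → ℝ}, (∀ i, Smooth3 (u i)) → (∀ i, Smooth3 (v i)) →
      Fam B e (n + 1) 1 u → Fam B e (n + 1) 1 v →
      Fam B e n 3 (fun i => (-1 : ℝ) • (pd 0 (v i) * pd 0 (v i) * pd 0 (u i))) := by
    intro n u v su sv fu fv
    have s1 := fun i => (su i).pd 0
    have s2 := fun i => (sv i).pd 0
    have := ((fv.pd 0).mul s2 s2 (fv.pd 0)).mul (fun i => (s2 i).mul (s2 i)) s1 (fu.pd 0)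
    exact this.smul (fun i => ((s2 i).mul (s2 i)).mul (s1 i)) _
  have low : ∀ {n : ℕ} {N : I → ℝ → ℝ → ℝ → ℝ}, Fam B e n 3 N → Fam B e n 1 N := by
    intro n N hN w hw
    obtain ⟨C, hC, h⟩ := hN w hw
    refine ⟨C, hC, fun i p hp => (h i p hp).trans ?_⟩
    exact mul_le_mul_of_nonneg_left (pow_le_pow_of_le_one (he i) (he1 i) (by norm_num)) hC
  have sm : ∀ {u v : I → ℝ → ℝ → ℝ → ℝ}, (∀ i, Smooth3 (u i)) → (∀ i, Smooth3 (v i)) →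
      ∀ i, Smooth3 ((-1 : ℝ) • (pd 0 (v i) * pd 0 (v i) * pd 0 (u i))) := fun su sv i =>
    ((((sv i).pd 0).mul ((sv i).pd 0)).mul ((su i).pd 0)).smul _
  induction n with
  | zero => exact ⟨fu, fv, cub su sv fu fv, cub sv su fv fu⟩
  | succ n ih =>
    obtain ⟨h1, h2, h3, h4⟩ := ih
    have k1 := fam_step su (sm su sv) hu h1 (low h3)
    have k2 := fam_step sv (sm sv su) hv h2 (low h4)
    exact ⟨k1, k2, cub su sv k1 k2, cub sv su k2 k1⟩

/-- Bound for the energy at time `0` of a family that is spatially supported in the square. -/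
lemma energy_zero_le (sF : ∀ i, Smooth3 (F i)) (hF : Fam B e (n + 1) m F)
    {R : ℝ} (hR : 0 ≤ R) (hRB : R ≤ B) (hs : ∀ i, Supp R (F i)) :
    ∃ C : ℝ, 0 ≤ C ∧ ∀ i L, R ≤ L → ∫ x in Kb 0 0 L, en n (F i) 0 x.1 x.2 ≤ C * e i ^ (m + m) := by
  obtain ⟨C, hC, h⟩ := (hF.en sF).bd
  refine ⟨C * volume.real (Kb 0 0 R), mul_nonneg hC measureReal_nonneg, fun i L hL => ?_⟩
  have hz : ∀ x ∈ Kb 0 0 L \ Kb 0 0 R, en n (F i) 0 x.1 x.2 = 0 := by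
    intro x hx
    have h1 := not_mem_Kb hx.2 hR
    have h2 := (hs i).Nn n (sF i) 0 x.1 x.2 le_rfl (by simpa using h1)
    have h3 := en_le_Nn_sq n (F i) 0 x.1 x.2
    rw [h2] at h3
    exact le_antisymm (by simpa using h3) (en_apply_nonneg _ _ _ _ _)
  have hsub : ∀ {r s : ℝ}, r ≤ s → Kb 0 0 r ⊆ Kb 0 0 s := fun h =>
    Set.prod_mono (Set.Icc_subset_Icc (by linarith) (by linarith))
      (Set.Icc_subset_Icc (by linarith) (by linarith))
  rw [setIntegral_eq_of_subset_of_forall_sdiff_eq_zero (Kb_meas 0 0 L) (hsub hL) hz]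
  have hfin : IsFiniteMeasure (volume.restrict (Kb 0 0 R)) :=
    ⟨by rw [Measure.restrict_apply_univ]; exact (Kb_compact 0 0 R).measure_lt_top⟩
  have := setIntegral_mono_on (μ := volume) (f := fun x : ℝ × ℝ => en n (F i) 0 x.1 x.2)
    (g := fun _ => C * e i ^ (m + m)) (((sF i).en n).intOn 0 0 0 R)
    (integrable_const _) (Kb_meas 0 0 R)
    fun x hx => (le_abs_self _).trans (h i x (hsub hRB hx))
  refine this.trans (le_of_eq ?_)
  rw [setIntegral_const, smul_eq_mul]; ring

end Families

/-! ### Energy, decay and differential inequalities -/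

/-- The energy of order `n` on the square of half side `L`. -/
def En (n : ℕ) (L : ℝ) (u : ℝ → ℝ → ℝ → ℝ) (t : ℝ) : ℝ := ∫ x in Kb 0 0 L, en n u t x.1 x.2

lemma En_nonneg (n : ℕ) (L : ℝ) (u : ℝ → ℝ → ℝ → ℝ) (t : ℝ) : 0 ≤ En n L u t :=
  integral_nonneg fun _ => en_apply_nonneg _ _ _ _ _

lemma Supp.zero_of_not_mem {R : ℝ} {φ : ℝ → ℝ → ℝ → ℝ} (h : Supp R φ) {t L : ℝ} (hR : 0 ≤ R)
    (ht : 0 ≤ t) (hL : R + t ≤ L) {z : ℝ × ℝ} (hz : z ∉ Kb 0 0 L) : φ t z.1 z.2 = 0 := by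
  refine h t z.1 z.2 ht (lt_of_le_of_lt ?_ (not_mem_Kb hz (by linarith)))
  exact pow_le_pow_left₀ (by linarith) hL 2

lemma integrable_Pn_sq (n : ℕ) {R : ℝ} {φ : ℝ → ℝ → ℝ → ℝ} (hφ : Smooth3 φ) (h : Supp R φ)
    (hR : 0 ≤ R) {t : ℝ} (ht : 0 ≤ t) :
    Integrable (fun z : ℝ × ℝ => Pn n φ t z.1 z.2 ^ 2) := by
  have hc : Continuous fun z : ℝ × ℝ => Pn n φ t z.1 z.2 :=
    (Pn_continuous hφ n).comp (by fun_prop : Continuous fun z : ℝ × ℝ => (t, z.1, z.2))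
  refine integrable_of_zero (a := 0) (b := 0) (L := R + t) (hc.pow 2) fun z hz => ?_
  rw [(h.Pn n hφ).zero_of_not_mem hR ht le_rfl hz, zero_pow two_ne_zero]

/-- The energy controls the `L²` norms of the vector fields applied to first derivatives. -/
lemma integral_Pn_pd_le (n : ℕ) : ∃ C : ℝ, 0 < C ∧ ∀ {R L t : ℝ} {u : ℝ → ℝ → ℝ → ℝ},
    Smooth3 u → Supp R u → 0 ≤ R → 0 ≤ t → R + t ≤ L → ∀ j : Fin 3,
    ∫ z : ℝ × ℝ, Pn n (pd j u) t z.1 z.2 ^ 2 ≤ C * En n L u t := by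
  obtain ⟨C, hC, h⟩ := Pn_pd_le n
  obtain ⟨D, hD, k⟩ := Nn_sq_le n
  refine ⟨C ^ 2 * D, by positivity, fun {R L t u} su hu hR ht hL j => ?_⟩
  rw [← setIntegral_eq_integral_of_forall_compl_eq_zero (s := Kb 0 0 L) (fun z hz => by
    rw [((hu.pd su j).Pn n (su.pd j)).zero_of_not_mem hR ht hL hz, zero_pow two_ne_zero]),
    En, ← integral_const_mul]
  refine setIntegral_mono_on ((integrable_Pn_sq n (su.pd j) (hu.pd su j) hR ht).integrableOn)
    (((su.en n).intOn t 0 0 L).const_mul _) (Kb_meas 0 0 L) fun z _ => ?_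
  calc Pn n (pd j u) t z.1 z.2 ^ 2 ≤ (C * Nn n u t z.1 z.2) ^ 2 :=
        pow_le_pow_left₀ (Pn_nonneg _ _ _ _ _) (h u su j _ _ _) 2
    _ = C ^ 2 * Nn n u t z.1 z.2 ^ 2 := by ring
    _ ≤ C ^ 2 * (D * en n u t z.1 z.2) := by gcongr; exact k u _ _ _
    _ = C ^ 2 * D * en n u t z.1 z.2 := by ring

lemma decay_Pn (n : ℕ) : ∃ C : ℝ, 0 < C ∧ ∀ {R t : ℝ} {φ : ℝ → ℝ → ℝ → ℝ},
    Smooth3 φ → Supp R φ → 0 ≤ R → 0 ≤ t → ∀ x y,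
    (1 + t + radius x y) * Pn n φ t x y ^ 2 ≤ C * ∫ z : ℝ × ℝ, Pn (n + 2) φ t z.1 z.2 ^ 2 := by
  have base : ∀ {R t : ℝ} {φ : ℝ → ℝ → ℝ → ℝ}, Smooth3 φ → Supp R φ → 0 ≤ R → 0 ≤ t → ∀ x y,
    (1 + t + radius x y) * |φ t x y| ^ 2 ≤ 36864 * ∫ z : ℝ × ℝ, Pn 2 φ t z.1 z.2 ^ 2 := by
    intro R t φ sφ hφ hR ht x y
    rw [sq_abs]
    exact klainerman_sobolev sφ ht (integrable_Pn_sq 2 sφ hφ hR ht) x y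
  induction n with
  | zero => exact ⟨36864, by norm_num, base⟩
  | succ n ih =>
    obtain ⟨C, hC, h⟩ := ih
    refine ⟨2 * 36864 + 98 * C, by positivity, fun {R t φ} sφ hφ hR ht x y => ?_⟩
    set J := ∫ z : ℝ × ℝ, Pn (n + 1 + 2) φ t z.1 z.2 ^ 2
    have hw : 0 ≤ 1 + t + radius x y := by have := radius_nonneg x y; linarith
    have h0 : (1 + t + radius x y) * |φ t x y| ^ 2 ≤ 36864 * J := by
      refine (base sφ hφ hR ht x y).trans ?_
      refine mul_le_mul_of_nonneg_left (integral_mono (integrable_Pn_sq 2 sφ hφ hR ht)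
        (integrable_Pn_sq _ sφ hφ hR ht) fun z => ?_) (by norm_num)
      exact pow_le_pow_left₀ (Pn_nonneg _ _ _ _ _) (Pn_mono (by omega) _ _ _ _) 2
    have h1 : ∀ i, (1 + t + radius x y) * Pn n (Gam i φ) t x y ^ 2 ≤ C * J := by
      intro i
      refine (h (sφ.Gam i) (hφ.Gam sφ i) hR ht x y).trans ?_
      refine mul_le_mul_of_nonneg_left (integral_mono
        (integrable_Pn_sq (n + 2) (sφ.Gam i) (hφ.Gam sφ i) hR ht)
        (integrable_Pn_sq _ sφ hφ hR ht) fun z => ?_) hC.le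
      exact pow_le_pow_left₀ (Pn_nonneg _ _ _ _ _) (Pn_Gam_le (n + 2) φ i _ _ _) 2
    have h2 : (∑ i, Pn n (Gam i φ) t x y) ^ 2 ≤ 7 * ∑ i, Pn n (Gam i φ) t x y ^ 2 := by
      have := sq_sum_le_card_mul_sum_sq (s := Finset.univ)
        (f := fun i : Fin 7 => Pn n (Gam i φ) t x y)
      simpa using this
    have h3 : (1 + t + radius x y) * ∑ i, Pn n (Gam i φ) t x y ^ 2 ≤ 7 * (C * J) := by
      rw [Finset.mul_sum]
      refine (Finset.sum_le_sum fun i _ => h1 i).trans ?_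
      simp
    have h4 : Pn (n + 1) φ t x y ^ 2
        ≤ 2 * |φ t x y| ^ 2 + 2 * (7 * ∑ i, Pn n (Gam i φ) t x y ^ 2) := by
      change (|φ t x y| + ∑ i, Pn n (Gam i φ) t x y) ^ 2 ≤ _
      nlinarith [sq_nonneg (|φ t x y| - ∑ i, Pn n (Gam i φ) t x y)]
    calc _ ≤ _ := mul_le_mul_of_nonneg_left h4 hw
      _ = 2 * ((1 + t + radius x y) * |φ t x y| ^ 2)
          + 14 * ((1 + t + radius x y) * ∑ i, Pn n (Gam i φ) t x y ^ 2) := by ring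
      _ ≤ 2 * (36864 * J) + 14 * (7 * (C * J)) := by gcongr
      _ = _ := by ring

/-- Pointwise decay of first derivatives in terms of the energy. -/
lemma decay_pd (n : ℕ) : ∃ C : ℝ, 0 < C ∧ ∀ {R L t : ℝ} {u : ℝ → ℝ → ℝ → ℝ},
    Smooth3 u → Supp R u → 0 ≤ R → 0 ≤ t → R + t ≤ L → ∀ (j : Fin 3) x y,
    (1 + t + radius x y) * Pn n (pd j u) t x y ^ 2 ≤ C * En (n + 2) L u t := by
  obtain ⟨C, hC, h⟩ := decay_Pn n
  obtain ⟨D, hD, k⟩ := integral_Pn_pd_le (n + 2)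
  refine ⟨C * D, by positivity, fun {R L t u} su hu hR ht hL j x y => ?_⟩
  rw [mul_assoc]
  exact (h (su.pd j) (hu.pd su j) hR ht x y).trans
    (mul_le_mul_of_nonneg_left (k su hu hR ht hL j) hC.le)

/-- The energy inequality for `□w = -(∂ₜv)²∂ₜu`: the decay of `∂u` and `∂v` gives the factor
`(1+t)⁻¹`, and the parameter `a` distributes the quartic term between `w` and `u, v`. -/
lemma integral_dn_le {n : ℕ} (hn : n ≤ 3) : ∃ C : ℝ, 0 < C ∧ ∀ {R L t a Y : ℝ}
    {u v w : ℝ → ℝ → ℝ → ℝ}, Smooth3 u → Smooth3 v → Smooth3 w → Supp R u → Supp R v →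
    0 ≤ R → 0 < t → R + t ≤ L → 0 < a →
    (∀ t x y, 0 < t → dAlembert w t x y = ((-1 : ℝ) • (pd 0 v * pd 0 v * pd 0 u)) t x y) →
    En 3 L u t + En 3 L v t = Y →
    ∫ x in Kb 0 0 L, dn n w t x.1 x.2 ≤ (1 + t)⁻¹ * (a * En n L w t + C * Y ^ 3 / a) := by
  obtain ⟨C1, hC1, h1⟩ := decay_pd 1
  obtain ⟨C2, hC2, h2⟩ := Pn_pd_le 3
  obtain ⟨C3, hC3, h3⟩ := dn_le n
  obtain ⟨C4, hC4, h4⟩ := Nn_sq_le n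
  obtain ⟨C5, hC5, h5⟩ := Nn_sq_le 3
  -- `D` bounds `dn n w` by `D Y / (1 + t)` times the product of the norms of `w` and `u, v`
  set D := C3 * (22 ^ n * (C2 * C1)) with hD
  have hD0 : 0 < D := by positivity
  refine ⟨D ^ 2 * C4 * C5, by positivity,
    fun {R L t a Y u v w} su sv sw hu hv hR ht hL ha hbox hY => ?_⟩
  have hY0 : 0 ≤ Y := by
    rw [← hY]; exact add_nonneg (En_nonneg _ _ _ _) (En_nonneg _ _ _ _)
  have ht1 : 0 < 1 + t := by linarith
  have hpt : ∀ z : ℝ × ℝ, dn n w t z.1 z.2 ≤ (1 + t)⁻¹ * (a * en n w t z.1 z.2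
      + D ^ 2 * C4 * C5 * Y ^ 2 / a * (en 3 u t z.1 z.2 + en 3 v t z.1 z.2)) := by
    rintro ⟨x, y⟩
    dsimp only
    set B := √(C1 * Y / (1 + t)) with hB
    have hB2 : B ^ 2 = C1 * Y / (1 + t) := sq_sqrt (by positivity)
    have b1 : ∀ {u}, Smooth3 u → Supp R u → En 3 L u t ≤ Y → Pn 1 (pd 0 u) t x y ≤ B := by
      intro u su hu hE
      refine Real.le_sqrt_of_sq_le ?_
      rw [le_div_iff₀ ht1]
      have := h1 su hu hR ht.le hL 0 x y
      have hr := radius_nonneg x y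
      nlinarith [sq_nonneg (Pn 1 (pd 0 u) t x y), mul_le_mul_of_nonneg_left hE hC1.le,
        mul_nonneg hr (sq_nonneg (Pn 1 (pd 0 u) t x y))]
    have bu := b1 su hu (by have := En_nonneg 3 L v t; linarith)
    have bv := b1 sv hv (by have := En_nonneg 3 L u t; linarith)
    set M := Nn 3 u t x y + Nn 3 v t x y with hM
    have nu := Nn_nonneg 3 u t x y
    have nv := Nn_nonneg 3 v t x y
    have nw := Nn_nonneg n w t x y
    have cu : Pn 3 (pd 0 u) t x y ≤ C2 * M :=
      (h2 u su 0 t x y).trans (mul_le_mul_of_nonneg_left (by linarith) hC2.le)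
    have cv : Pn 3 (pd 0 v) t x y ≤ C2 * M :=
      (h2 v sv 0 t x y).trans (mul_le_mul_of_nonneg_left (by linarith) hC2.le)
    have hP : Pn n (dAlembert w) t x y ≤ 22 ^ n * (C2 * M * B ^ 2) := by
      rw [Pn_congr_pos n hbox ht, Pn_smul n (((sv.pd 0).mul (sv.pd 0)).mul (su.pd 0)), abs_neg,
        abs_one, one_mul]
      exact Pn_cubic_le hn (sv.pd 0) (sv.pd 0) (su.pd 0) bv bv bu cv cv cu
    have hdn : dn n w t x y ≤ (1 + t)⁻¹ * (D * Y * (Nn n w t x y * M)) := by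
      refine (h3 w sw t x y).trans ?_
      calc _ ≤ C3 * (Nn n w t x y * (22 ^ n * (C2 * M * B ^ 2))) := by gcongr
        _ = _ := by rw [hB2, hD]; field_simp
    refine hdn.trans (mul_le_mul_of_nonneg_left ?_ (inv_nonneg.2 ht1.le))
    have k4 := h4 w t x y
    have ku := h5 u t x y
    have kv := h5 v t x y
    have kM : M ^ 2 ≤ 2 * (C5 * (en 3 u t x y + en 3 v t x y)) := by
      rw [hM]; nlinarith [sq_nonneg (Nn 3 u t x y - Nn 3 v t x y)]
    set S := en 3 u t x y + en 3 v t x y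
    -- weighted arithmetic-geometric mean inequality
    have amgm : D * Y * (Nn n w t x y * M)
        ≤ a / C4 * Nn n w t x y ^ 2 + D ^ 2 * C4 * Y ^ 2 / (2 * a) * M ^ 2 := by
      have : a / C4 * Nn n w t x y ^ 2 + D ^ 2 * C4 * Y ^ 2 / (2 * a) * M ^ 2
          - D * Y * (Nn n w t x y * M) = a / C4 * ((Nn n w t x y - D * Y * M * C4 / (2 * a)) ^ 2
          + (D * Y * M * C4 / (2 * a)) ^ 2) := by
        field_simp; ring
      have h0 : 0 ≤ a / C4 * ((Nn n w t x y - D * Y * M * C4 / (2 * a)) ^ 2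
          + (D * Y * M * C4 / (2 * a)) ^ 2) := by positivity
      linarith
    refine amgm.trans (add_le_add ?_ ?_)
    · calc _ ≤ a / C4 * (C4 * en n w t x y) := by gcongr
        _ = _ := by field_simp
    · calc _ ≤ D ^ 2 * C4 * Y ^ 2 / (2 * a) * (2 * (C5 * S)) := by gcongr
        _ = _ := by field_simp
  have iu := (su.en 3).intOn t 0 0 L
  have iv := (sv.en 3).intOn t 0 0 L
  have iw := (sw.en n).intOn t 0 0 L
  have iuv : IntegrableOn (fun x : ℝ × ℝ => en 3 u t x.1 x.2 + en 3 v t x.1 x.2) (Kb 0 0 L) :=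
    iu.add iv
  refine (setIntegral_mono_on ((sw.dn n).intOn t 0 0 L)
    (((iw.const_mul a).add (iuv.const_mul _)).const_mul _) (Kb_meas 0 0 L)
    fun z _ => hpt z).trans (le_of_eq ?_)
  simp only [Pi.add_apply]
  rw [integral_const_mul, integral_add (iw.const_mul a) (iuv.const_mul _),
    integral_const_mul, integral_const_mul, integral_add iu iv]
  change (1 + t)⁻¹ * (a * En n L w t
    + D ^ 2 * C4 * C5 * Y ^ 2 / a * (En 3 L u t + En 3 L v t)) = _
  rw [hY]; ring

/-- A quadratic differential inequality with coefficient `1/(1+t)` on a logarithmically short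
time interval. -/
lemma riccati_bound {Y Y' : ℝ → ℝ} {T C c1 η : ℝ} (hη : 0 < η) (hC : 0 ≤ C)
    (hc1 : 0 ≤ c1)
    (hd : ∀ t, 0 ≤ t → t ≤ T → HasDerivAt Y (Y' t) t) (hY : ∀ t, 0 ≤ Y t) (h0 : Y 0 ≤ c1 * η)
    (hY' : ∀ t, 0 < t → t < T → Y' t ≤ (1 + t)⁻¹ * (C * (Y t + η) ^ 2))
    (hT : C * log (1 + T) * (2 * ((c1 + 1) * η)) ≤ 1) {t : ℝ} (ht : 0 ≤ t) (htT : t ≤ T) :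
    Y t + η ≤ 2 * ((c1 + 1) * η) := by
  have hz : ∀ t, 0 < Y t + η := fun t => by have := hY t; linarith
  have hD : ∀ s, 0 ≤ s → s ≤ T → HasDerivAt (fun s => -(Y s + η)⁻¹ - C * log (1 + s))
      (Y' s / (Y s + η) ^ 2 - C * (1 / (1 + s))) s := by
    intro s hs hsT
    have h1 := (((hd s hs hsT).add_const η).fun_inv (hz s).ne').fun_neg
    have h2 := (((hasDerivAt_id s).const_add 1).log (by simp; linarith)).const_mul C
    refine (h1.sub h2).congr_deriv ?_
    rw [neg_div, neg_neg]; rfl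
  have hanti : AntitoneOn (fun s => -(Y s + η)⁻¹ - C * log (1 + s)) (Set.Icc 0 T) := by
    refine antitoneOn_of_deriv_nonpos (convex_Icc 0 T)
      (fun s hs => (hD s hs.1 hs.2).continuousAt.continuousWithinAt)
      (fun s hs => ?_) fun s hs => ?_
    · rw [interior_Icc] at hs
      exact (hD s hs.1.le hs.2.le).differentiableAt.differentiableWithinAt
    · rw [interior_Icc] at hs
      rw [(hD s hs.1.le hs.2.le).deriv, sub_nonpos, div_le_iff₀ (by have := hz s; positivity)]
      refine (hY' s hs.1 hs.2).trans (le_of_eq ?_)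
      rw [one_div]; ring
  have hm := hanti ⟨le_rfl, ht.trans htT⟩ ⟨ht, htT⟩ ht
  simp only [add_zero, log_one, mul_zero, sub_zero] at hm
  have hlog : log (1 + t) ≤ log (1 + T) := log_le_log (by linarith) (by linarith)
  have hq : 0 < (c1 + 1) * η := by positivity
  have hinv : ((c1 + 1) * η)⁻¹ ≤ (Y 0 + η)⁻¹ := inv_anti₀ (hz 0) (by linarith)
  have hCl : C * log (1 + t) ≤ (2 * ((c1 + 1) * η))⁻¹ := by
    rw [← one_div, le_div_iff₀ (by positivity)]
    exact (mul_le_mul_of_nonneg_right (mul_le_mul_of_nonneg_left hlog hC) (by positivity)).trans hT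
  have hfin : (2 * ((c1 + 1) * η))⁻¹ ≤ (Y t + η)⁻¹ := by
    have : ((c1 + 1) * η)⁻¹ = 2 * (2 * ((c1 + 1) * η))⁻¹ := by field_simp
    linarith
  exact (inv_le_inv₀ (by positivity) (hz t)).1 hfin

/-- Gronwall's inequality with coefficient `δ/(1+t)`. -/
lemma gronwall_log {Z Z' : ℝ → ℝ} {T δ D : ℝ} (hδ : 0 < δ)
    (hd : ∀ t, 0 ≤ t → t ≤ T → HasDerivAt Z (Z' t) t)
    (hZ' : ∀ t, 0 < t → t < T → Z' t ≤ (1 + t)⁻¹ * (δ * Z t + D)) {t : ℝ} (ht : 0 ≤ t)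
    (htT : t ≤ T) : Z t + D / δ ≤ (1 + t) ^ δ * (Z 0 + D / δ) := by
  have hD : ∀ s, 0 ≤ s → s ≤ T → HasDerivAt (fun s => (1 + s) ^ (-δ) * (Z s + D / δ))
      (1 * (-δ) * (1 + s) ^ (-δ - 1) * (Z s + D / δ) + (1 + s) ^ (-δ) * Z' s) s := by
    intro s hs hsT
    exact (((hasDerivAt_id s).const_add 1).rpow_const (Or.inl (by simp; linarith))).mul
      ((hd s hs hsT).add_const _)
  have hanti : AntitoneOn (fun s => (1 + s) ^ (-δ) * (Z s + D / δ)) (Set.Icc 0 T) := by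
    refine antitoneOn_of_deriv_nonpos (convex_Icc 0 T)
      (fun s hs => (hD s hs.1 hs.2).continuousAt.continuousWithinAt)
      (fun s hs => ?_) fun s hs => ?_
    · rw [interior_Icc] at hs
      exact (hD s hs.1.le hs.2.le).differentiableAt.differentiableWithinAt
    · rw [interior_Icc] at hs
      have hs1 : 0 < 1 + s := by linarith [hs.1]
      rw [(hD s hs.1.le hs.2.le).deriv, rpow_sub_one hs1.ne']
      have h1 := mul_le_mul_of_nonneg_left (hZ' s hs.1 hs.2) (rpow_nonneg hs1.le (-δ))
      refine (add_le_add_right h1 _).trans (le_of_eq ?_)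
      field_simp; ring
  have hm := hanti ⟨le_rfl, ht.trans htT⟩ ⟨ht, htT⟩ ht
  simp only [add_zero, one_rpow, one_mul] at hm
  have hp : 0 < (1 + t) ^ δ := rpow_pos_of_pos (by linarith) _
  rwa [rpow_neg (by linarith), inv_mul_le_iff₀ hp] at hm

lemma Pn_iterate_le (i : Fin 7) (k n : ℕ) (φ : ℝ → ℝ → ℝ → ℝ) (t x y : ℝ) :
    Pn n ((Gam i)^[k] φ) t x y ≤ Pn (n + k) φ t x y := by
  induction k generalizing φ with
  | zero => exact le_rfl
  | succ k ih =>
    rw [Function.iterate_succ_apply]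
    exact (ih (Gam i φ)).trans (Pn_Gam_le (n + k) φ i t x y)

lemma abs_GamMulti_le {s : ℕ} {α : Fin 7 → ℕ} (h : ∑ i, α i ≤ s) (φ : ℝ → ℝ → ℝ → ℝ)
    (t x y : ℝ) : |GamMulti α φ t x y| ≤ Pn s φ t x y := by
  refine le_trans ?_ (Pn_mono h φ t x y)
  rw [Fin.sum_univ_seven]
  have h0 := Pn_iterate_le 0 (α 0) 0
  simp only [zero_add] at h0
  refine (h0 _ t x y).trans ?_
  refine (Pn_iterate_le 1 _ _ _ t x y).trans ?_
  refine (Pn_iterate_le 2 _ _ _ t x y).trans ?_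
  refine (Pn_iterate_le 3 _ _ _ t x y).trans ?_
  refine (Pn_iterate_le 4 _ _ _ t x y).trans ?_
  refine (Pn_iterate_le 5 _ _ _ t x y).trans ?_
  exact Pn_iterate_le 6 _ _ _ t x y

/-- The square of the Euclidean norm of `Γ^α(∂u, ∂v)`. -/
lemma dList_sum_le {s : ℕ} {α : Fin 7 → ℕ} (h : ∑ i, α i ≤ s) (u v : ℝ → ℝ → ℝ → ℝ)
    (t x y : ℝ) : ((dList u v).map fun φ => GamMulti α φ t x y ^ 2).sum
      ≤ ∑ j, Pn s (pd j u) t x y ^ 2 + ∑ j, Pn s (pd j v) t x y ^ 2 := by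
  have k : ∀ φ : ℝ → ℝ → ℝ → ℝ, GamMulti α φ t x y ^ 2 ≤ Pn s φ t x y ^ 2 := fun φ => by
    rw [← sq_abs]
    exact pow_le_pow_left₀ (abs_nonneg _) (abs_GamMulti_le h φ t x y) 2
  have k0 := fun u => k (pd 0 u)
  have k1 := fun u => k (pd 1 u)
  have k2 := fun u => k (pd 2 u)
  simp only [pd] at k0 k1 k2
  simp only [dList, List.map_cons, List.map_nil, List.sum_cons, List.sum_nil, add_zero,
    Fin.sum_univ_three, pd]
  linarith [k0 u, k1 u, k2 u, k0 v, k1 v, k2 v]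

lemma dList_sum_nonneg (α : Fin 7 → ℕ) (l : List (ℝ → ℝ → ℝ → ℝ)) (t x y : ℝ) :
    0 ≤ (l.map fun φ => GamMulti α φ t x y ^ 2).sum :=
  List.sum_nonneg fun a ha => by
    obtain ⟨φ, _, rfl⟩ := List.mem_map.1 ha
    exact sq_nonneg _

lemma sobNorm_le (s : ℕ) : ∃ C : ℝ, 0 < C ∧ ∀ {R L t : ℝ} {u v : ℝ → ℝ → ℝ → ℝ},
    Smooth3 u → Smooth3 v → Supp R u → Supp R v → 0 ≤ R → 0 ≤ t → R + t ≤ L →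
    sobNorm s (dList u v) t ≤ C * √(En s L u t + En s L v t) := by
  obtain ⟨C, hC, h⟩ := integral_Pn_pd_le s
  refine ⟨(Fintype.card (Fin 7 → Fin (s + 1)) : ℝ) * √(3 * C), ?_,
    fun {R L t u v} su sv hu hv hR ht hL => ?_⟩
  · have : 0 < Fintype.card (Fin 7 → Fin (s + 1)) := Fintype.card_pos
    positivity
  have iu := fun j => integrable_Pn_sq s (su.pd j) (hu.pd su j) hR ht
  have iv := fun j => integrable_Pn_sq s (sv.pd j) (hv.pd sv j) hR ht
  have key : ∀ α : Fin 7 → Fin (s + 1), (if (∑ i, (α i : ℕ)) ≤ s then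
      √(∫ x : ℝ × ℝ, ((dList u v).map fun u =>
        (GamMulti (fun i => (α i : ℕ)) u t x.1 x.2) ^ 2).sum) else 0)
      ≤ √(3 * C) * √(En s L u t + En s L v t) := by
    intro α
    split_ifs with hα
    · rw [← sqrt_mul (by positivity)]
      refine sqrt_le_sqrt ?_
      have isu := integrable_finsetSum Finset.univ fun j _ => iu j
      have isv := integrable_finsetSum Finset.univ fun j _ => iv j
      refine (integral_mono_of_nonneg (Eventually.of_forall fun z => dList_sum_nonneg _ _ _ _ _)
        (isu.add isv) (Eventually.of_forall fun z => dList_sum_le hα u v t z.1 z.2)).trans ?_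
      simp only [Pi.add_apply]
      rw [integral_add isu isv, integral_finsetSum _ fun j _ => iu j,
        integral_finsetSum _ fun j _ => iv j]
      have e1 := Finset.sum_le_sum fun j (_ : j ∈ Finset.univ) => h su hu hR ht hL j
      have e2 := Finset.sum_le_sum fun j (_ : j ∈ Finset.univ) => h sv hv hR ht hL j
      simp only [Finset.sum_const, Finset.card_univ, Fintype.card_fin, nsmul_eq_mul] at e1 e2
      push_cast at e1 e2
      linarith
    · positivity
  refine (Finset.sum_le_sum fun α _ => key α).trans (le_of_eq ?_)
  rw [Finset.sum_const, Finset.card_univ, nsmul_eq_mul]; ring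

lemma jb_le {z : ℝ} (hz : 0 ≤ z) : jb z ≤ 1 + z :=
  sqrt_le_iff.2 ⟨by linarith, by nlinarith⟩

lemma ptwiseNorm_le (s : ℕ) : ∃ C : ℝ, 0 < C ∧ ∀ {R L t : ℝ} {u v : ℝ → ℝ → ℝ → ℝ},
    Smooth3 u → Smooth3 v → Supp R u → Supp R v → 0 ≤ R → 0 ≤ t → R + t ≤ L → ∀ x y,
    jb (t + radius x y) ^ ((1 : ℝ) / 2) * ptwiseNorm s (dList u v) t x y
      ≤ C * √(En (s + 2) L u t + En (s + 2) L v t) := by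
  obtain ⟨C, hC, h⟩ := decay_pd s
  refine ⟨(Fintype.card (Fin 7 → Fin (s + 1)) : ℝ) * √(3 * C), ?_,
    fun {R L t u v} su sv hu hv hR ht hL x y => ?_⟩
  · have : 0 < Fintype.card (Fin 7 → Fin (s + 1)) := Fintype.card_pos
    positivity
  have hE : 0 ≤ En (s + 2) L u t + En (s + 2) L v t :=
    add_nonneg (En_nonneg _ _ _ _) (En_nonneg _ _ _ _)
  have hr := radius_nonneg x y
  have hj : jb (t + radius x y) ≤ 1 + t + radius x y := by
    have := jb_le (z := t + radius x y) (by linarith); linarith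
  have hj0 : 0 ≤ jb (t + radius x y) := sqrt_nonneg _
  have key : ∀ α : Fin 7 → Fin (s + 1), jb (t + radius x y) ^ ((1 : ℝ) / 2) *
      (if (∑ i, (α i : ℕ)) ≤ s then
      √(((dList u v).map fun u => (GamMulti (fun i => (α i : ℕ)) u t x y) ^ 2).sum) else 0)
      ≤ √(3 * C) * √(En (s + 2) L u t + En (s + 2) L v t) := by
    intro α
    split_ifs with hα
    · rw [← sqrt_eq_rpow, ← sqrt_mul hj0, ← sqrt_mul (by positivity)]
      refine sqrt_le_sqrt ?_
      refine (mul_le_mul hj (dList_sum_le hα u v t x y) (dList_sum_nonneg _ _ _ _ _)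
        (by linarith)).trans ?_
      rw [mul_add, Finset.mul_sum, Finset.mul_sum]
      have e1 := Finset.sum_le_sum fun j (_ : j ∈ Finset.univ) => h su hu hR ht hL j x y
      have e2 := Finset.sum_le_sum fun j (_ : j ∈ Finset.univ) => h sv hv hR ht hL j x y
      simp only [Finset.sum_const, Finset.card_univ, Fintype.card_fin, nsmul_eq_mul] at e1 e2
      push_cast at e1 e2
      linarith
    · rw [mul_zero]; positivity
  rw [ptwiseNorm, Finset.mul_sum]
  refine (Finset.sum_le_sum fun α _ => key α).trans (le_of_eq ?_)
  rw [Finset.sum_const, Finset.card_univ, nsmul_eq_mul]; ring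

/-! ### Energy bounds for the solution and the correction -/

lemma exists_radius {f : ℝ → ℝ → ℝ} (hf : SmoothCompact2 f) :
    ∃ R : ℝ, 0 ≤ R ∧ ∀ x y, R ^ 2 < x ^ 2 + y ^ 2 → f x y = 0 := by
  obtain ⟨r, hr⟩ := hf.2.isCompact.isBounded.subset_closedBall 0
  refine ⟨2 * max r 0, by positivity, fun x y h => ?_⟩
  by_contra hne
  have h1 := hr (subset_tsupport (fun p : ℝ × ℝ => f p.1 p.2) (show (x, y) ∈ _ from hne))
  rw [mem_closedBall_zero_iff, Prod.norm_mk, max_le_iff, Real.norm_eq_abs, Real.norm_eq_abs] at h1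
  have hx := sq_le_sq' (abs_le.1 (h1.1.trans (le_max_left r 0))).1
    (abs_le.1 (h1.1.trans (le_max_left r 0))).2
  have hy := sq_le_sq' (abs_le.1 (h1.2.trans (le_max_left r 0))).1
    (abs_le.1 (h1.2.trans (le_max_left r 0))).2
  nlinarith

/-- The function of `(t, x)` that does not depend on `t`. -/
def stat (f : ℝ → ℝ → ℝ) : ℝ → ℝ → ℝ → ℝ := fun _ x y => f x y

lemma SmoothCompact2.stat {f : ℝ → ℝ → ℝ} (hf : SmoothCompact2 f) : Smooth3 (stat f) :=
  hf.1.comp contDiff_snd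

/-- A parameter `ε`, a solution of the system with data of size `ε`, and the free solutions. -/
structure Idx (f1 f2 g1 g2 : ℝ → ℝ → ℝ) where
  ε : ℝ
  u : ℝ → ℝ → ℝ → ℝ
  v : ℝ → ℝ → ℝ → ℝ
  a : ℝ → ℝ → ℝ → ℝ
  b : ℝ → ℝ → ℝ → ℝ
  pos : 0 < ε
  lt : ε < 1
  sol : IsSolution ε f1 f2 g1 g2 u v
  freeA : IsFreeSolution f1 g1 a
  freeB : IsFreeSolution f2 g2 b

namespace Idx

variable {f1 f2 g1 g2 : ℝ → ℝ → ℝ} (i : Idx f1 f2 g1 g2)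

/-- The first component of `u - εu⁰`. -/
def w : ℝ → ℝ → ℝ → ℝ := i.u - i.ε • i.a

/-- The second component of `u - εu⁰`. -/
def z : ℝ → ℝ → ℝ → ℝ := i.v - i.ε • i.b

/-- The same solution with the two components exchanged. -/
def swap : Idx f2 f1 g2 g1 where
  ε := i.ε
  u := i.v
  v := i.u
  a := i.b
  b := i.a
  pos := i.pos
  lt := i.lt
  sol := ⟨i.sol.smooth2, i.sol.smooth1, i.sol.pde2, i.sol.pde1, i.sol.init2, i.sol.init1,
    i.sol.initd2, i.sol.initd1⟩
  freeA := i.freeB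
  freeB := i.freeA

/-- The right hand side of the first equation. -/
def src : ℝ → ℝ → ℝ → ℝ := (-1 : ℝ) • (pd 0 i.v * pd 0 i.v * pd 0 i.u)

lemma su : Smooth3 i.u := i.sol.smooth1
lemma sv : Smooth3 i.v := i.sol.smooth2
lemma sw : Smooth3 i.w := i.su.sub (i.freeA.1.smul _)
lemma sz : Smooth3 i.z := i.swap.sw
lemma ssrc : Smooth3 i.src := (((i.sv.pd 0).mul (i.sv.pd 0)).mul (i.su.pd 0)).smul _

lemma box_u {t : ℝ} (x y : ℝ) (ht : 0 < t) : dAlembert i.u t x y = i.src t x y := by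
  rw [i.sol.pde1 t x y ht]
  change _ = (-1 : ℝ) * (pd 0 i.v t x y * pd 0 i.v t x y * pd 0 i.u t x y)
  simp only [pd]; ring

lemma box_w {t : ℝ} (x y : ℝ) (ht : 0 < t) : dAlembert i.w t x y = i.src t x y := by
  rw [w, box_sub i.su (i.freeA.1.smul _), box_smul i.freeA.1]
  change dAlembert i.u t x y - i.ε * dAlembert i.a t x y = _
  rw [i.freeA.2.1 t x y ht, mul_zero, sub_zero, i.box_u x y ht]

lemma w_zero (x y : ℝ) : i.w 0 x y = 0 := by
  change i.u 0 x y - i.ε * i.a 0 x y = 0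
  rw [i.sol.init1, i.freeA.2.2.1, sub_self]

lemma pd_w_zero (x y : ℝ) : pd 0 i.w 0 x y = 0 := by
  rw [w, pd_sub i.su (i.freeA.1.smul _), pd_smul i.freeA.1]
  change pt i.u 0 x y - i.ε * pt i.a 0 x y = 0
  rw [i.sol.initd1, i.freeA.2.2.2, sub_self]

variable {R : ℝ}

lemma supp_u (hR : 0 ≤ R) (hf : ∀ x y, R ^ 2 < x ^ 2 + y ^ 2 → f1 x y = 0)
    (hg : ∀ x y, R ^ 2 < x ^ 2 + y ^ 2 → g1 x y = 0) : Supp (R + 3) i.u := by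
  refine finite_speed i.su hR (fun t x y ht => ?_)
    (fun x y h => by rw [i.sol.init1, hf x y h, mul_zero])
    (fun x y h => by change pt i.u 0 x y = 0; rw [i.sol.initd1, hg x y h, mul_zero])
  rw [i.box_u x y ht]
  change _ * ((-1 : ℝ) * (pd 0 i.v t x y * pd 0 i.v t x y * pd 0 i.u t x y)) ≤ 0
  nlinarith [sq_nonneg (pd 0 i.v t x y * pd 0 i.u t x y)]

lemma supp_a (hR : 0 ≤ R) (hf : ∀ x y, R ^ 2 < x ^ 2 + y ^ 2 → f1 x y = 0)
    (hg : ∀ x y, R ^ 2 < x ^ 2 + y ^ 2 → g1 x y = 0) : Supp (R + 3) i.a := by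
  refine finite_speed i.freeA.1 hR (fun t x y ht => by rw [i.freeA.2.1 t x y ht, mul_zero])
    (fun x y h => by rw [i.freeA.2.2.1, hf x y h])
    (fun x y h => by change pt i.a 0 x y = 0; rw [i.freeA.2.2.2, hg x y h])

lemma supp_w (hR : 0 ≤ R) (hf : ∀ x y, R ^ 2 < x ^ 2 + y ^ 2 → f1 x y = 0)
    (hg : ∀ x y, R ^ 2 < x ^ 2 + y ^ 2 → g1 x y = 0) : Supp (R + 3) i.w := by
  intro t x y ht h
  change i.u t x y - i.ε * i.a t x y = 0
  rw [i.supp_u hR hf hg t x y ht h, i.supp_a hR hf hg t x y ht h, mul_zero, sub_zero]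

end Idx

/-- At time `0` the energy of the solution is `O(ε²)` and that of the correction is `O(ε⁶)`. -/
lemma energy_zero {f1 f2 g1 g2 : ℝ → ℝ → ℝ} (hf1 : SmoothCompact2 f1) (hf2 : SmoothCompact2 f2)
    (hg1 : SmoothCompact2 g1) (hg2 : SmoothCompact2 g2) {R : ℝ} (hR : 0 ≤ R)
    (hf : ∀ x y, R ^ 2 < x ^ 2 + y ^ 2 → f1 x y = 0)
    (hg : ∀ x y, R ^ 2 < x ^ 2 + y ^ 2 → g1 x y = 0) :
    ∃ C : ℝ, 0 ≤ C ∧ ∀ (i : Idx f1 f2 g1 g2) (L : ℝ), R + 3 ≤ L →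
      En 3 L i.u 0 ≤ C * i.ε ^ 2 ∧ En 2 L i.w 0 ≤ C * i.ε ^ 6 := by
  set e : Idx f1 f2 g1 g2 → ℝ := fun i => i.ε
  have he : ∀ i, 0 ≤ e i := fun i => i.pos.le
  have fu : Fam (R + 3) e 1 1 (fun i => i.u) :=
    fam_of_data (fun i => i.su) hf1.stat hg1.stat he
      (fun i x y => by rw [pow_one]; exact i.sol.init1 x y)
      (fun i x y => by rw [pow_one]; exact i.sol.initd1 x y)
  have fv : Fam (R + 3) e 1 1 (fun i => i.v) :=
    fam_of_data (fun i => i.sv) hf2.stat hg2.stat he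
      (fun i x y => by rw [pow_one]; exact i.sol.init2 x y)
      (fun i x y => by rw [pow_one]; exact i.sol.initd2 x y)
  obtain ⟨ku, _, ks, _⟩ := fam_solution (fun i : Idx f1 f2 g1 g2 => i.su) (fun i => i.sv) he
    (fun i => i.lt.le) (fun i t x y ht => i.box_u x y ht) (fun i t x y ht => i.swap.box_u x y ht)
    fu fv 3
  have fw : Fam (R + 3) e 1 3 (fun i => i.w) :=
    fam_of_data (fun i => i.sw) smooth3_zero smooth3_zero he
      (fun i x y => by rw [i.w_zero]; simp) (fun i x y => by rw [i.pd_w_zero]; simp)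
  have fw2 := fam_step (fun i => i.sw) (fun i : Idx f1 f2 g1 g2 => i.ssrc)
    (fun i t x y ht => i.box_w x y ht) fw (ks.mono (by norm_num))
  have fw3 := fam_step (n := 1) (fun i => i.sw) (fun i : Idx f1 f2 g1 g2 => i.ssrc)
    (fun i t x y ht => i.box_w x y ht) fw2 (ks.mono (by norm_num))
  obtain ⟨C, hC, h⟩ := energy_zero_le (n := 3) (fun i => i.su) ku (by linarith : 0 ≤ R + 3) le_rfl
    (fun i => i.supp_u hR hf hg)
  obtain ⟨D, hD, k⟩ := energy_zero_le (n := 2) (fun i => i.sw) fw3 (by linarith : 0 ≤ R + 3) le_rfl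
    (fun i => i.supp_w hR hf hg)
  refine ⟨C + D, by positivity, fun i L hL => ⟨(h i L hL).trans ?_, (k i L hL).trans ?_⟩⟩
  · exact mul_le_mul_of_nonneg_right (by linarith) (pow_nonneg (he i) 2)
  · exact mul_le_mul_of_nonneg_right (by linarith) (pow_nonneg (he i) 6)

/-- The energy of the correction is `O(ε^(6-δ))` up to time `1/ε`. -/
lemma energy_correction {f1 f2 g1 g2 : ℝ → ℝ → ℝ} (hf1 : SmoothCompact2 f1)
    (hf2 : SmoothCompact2 f2) (hg1 : SmoothCompact2 g1) (hg2 : SmoothCompact2 g2) {R δ : ℝ}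
    (hR : 0 ≤ R) (hδ : 0 < δ) (kf1 : ∀ x y, R ^ 2 < x ^ 2 + y ^ 2 → f1 x y = 0)
    (kf2 : ∀ x y, R ^ 2 < x ^ 2 + y ^ 2 → f2 x y = 0)
    (kg1 : ∀ x y, R ^ 2 < x ^ 2 + y ^ 2 → g1 x y = 0)
    (kg2 : ∀ x y, R ^ 2 < x ^ 2 + y ^ 2 → g2 x y = 0) :
    ∃ ε₀ C : ℝ, 0 < ε₀ ∧ ε₀ ≤ 1 ∧ 0 < C ∧ ∀ (i : Idx f1 f2 g1 g2), i.ε < ε₀ →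
      ∀ t, 0 ≤ t → t ≤ i.ε⁻¹ →
      En 2 (R + 3 + i.ε⁻¹ + 1) i.w t + En 2 (R + 3 + i.ε⁻¹ + 1) i.z t
        ≤ C * (i.ε ^ 6 * (1 + i.ε⁻¹) ^ δ) := by
  obtain ⟨A, hA, eA⟩ := energy_zero hf1 hf2 hg1 hg2 hR kf1 kg1
  obtain ⟨B, hB, eB⟩ := energy_zero hf2 hf1 hg2 hg1 hR kf2 kg2
  obtain ⟨C3, hC3, d3⟩ := integral_dn_le (n := 3) le_rfl
  obtain ⟨C2, hC2, d2⟩ := integral_dn_le (n := 2) (by norm_num)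
  set c1 := A + B with hc1
  have hc0 : 0 ≤ c1 := by positivity
  set K := 2 * (c1 + 1) with hK
  have hK0 : 0 < K := by positivity
  set Q := 2 * (1 + C3) with hQ
  set D := 2 * (C2 * K ^ 3 / δ) with hD
  have hD0 : 0 < D := by positivity
  refine ⟨min 1 (1 / (Q * K)), c1 + D / δ, by positivity, min_le_left _ _, by positivity,
    fun i hi t ht hT => ?_⟩
  have hε := i.pos
  have hε1 : i.ε * (Q * K) ≤ 1 := by
    have := (hi.trans_le (min_le_right _ _)).le
    rwa [le_div_iff₀ (by positivity)] at this
  set T := i.ε⁻¹ with hTdef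
  have hT0 : 0 < T := inv_pos.2 hε
  set L := R + 3 + T + 1 with hL
  have hR3 : 0 ≤ R + 3 := by linarith
  have pu := i.supp_u hR kf1 kg1
  have pv := i.swap.supp_u hR kf2 kg2
  have pw := i.supp_w hR kf1 kg1
  have pz := i.swap.supp_w hR kf2 kg2
  have hd : ∀ {n : ℕ} {w z : ℝ → ℝ → ℝ → ℝ}, Smooth3 w → Smooth3 z → Supp (R + 3) w →
      Supp (R + 3) z → ∀ t, 0 ≤ t → t ≤ T →
      HasDerivAt (fun t => En n L w t + En n L z t) ((∫ x in Kb 0 0 L, dn n w t x.1 x.2)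
        + ∫ x in Kb 0 0 L, dn n z t x.1 x.2) t := fun sw sz pw pz t ht hT =>
    (hasDerivAt_energy _ sw hR3 pw ht (by linarith)).add
      (hasDerivAt_energy _ sz hR3 pz ht (by linarith))
  set Y : ℝ → ℝ := fun t => En 3 L i.u t + En 3 L i.v t with hY
  have hYn : ∀ t, 0 ≤ Y t := fun t => add_nonneg (En_nonneg _ _ _ _) (En_nonneg _ _ _ _)
  have hY0 : Y 0 ≤ c1 * i.ε ^ 2 := by
    have h1 := (eA i L (by linarith)).1
    have h2 := (eB i.swap L (by linarith)).1
    change En 3 L i.v 0 ≤ B * i.ε ^ 2 at h2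
    rw [hc1, add_mul]; exact add_le_add h1 h2
  have hYb : ∀ t, 0 ≤ t → t ≤ T → Y t ≤ K * i.ε ^ 2 := by
    intro t ht hT
    have := riccati_bound (Y := Y) (T := T) (C := Q) (c1 := c1) (η := i.ε ^ 2) (by positivity)
      (by positivity) hc0 (hd i.su i.sv pu pv) hYn hY0 (fun t ht hT => ?_) ?_ ht hT
    · rw [hK]; nlinarith [sq_nonneg i.ε]
    · have ha : 0 < Y t + i.ε ^ 2 := by have := hYn t; positivity
      have h1 := d3 i.su i.sv i.su pu pv hR3 ht (by linarith : R + 3 + t ≤ L) ha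
        (fun t x y ht => i.box_u x y ht) rfl
      have h2 := d3 i.sv i.su i.sv pv pu hR3 ht (by linarith : R + 3 + t ≤ L) ha
        (fun t x y ht => i.swap.box_u x y ht) (add_comm _ _)
      refine (add_le_add h1 h2).trans ?_
      rw [← mul_add]
      refine mul_le_mul_of_nonneg_left ?_ (by positivity)
      change (Y t + i.ε ^ 2) * En 3 L i.u t + C3 * Y t ^ 3 / (Y t + i.ε ^ 2)
        + ((Y t + i.ε ^ 2) * En 3 L i.v t + C3 * Y t ^ 3 / (Y t + i.ε ^ 2)) ≤ _
      have hle : Y t ≤ Y t + i.ε ^ 2 := by have := sq_nonneg i.ε; linarith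
      have h3 : C3 * Y t ^ 3 / (Y t + i.ε ^ 2) ≤ C3 * (Y t + i.ε ^ 2) ^ 2 := by
        rw [div_le_iff₀ ha, mul_assoc, ← pow_succ]
        exact mul_le_mul_of_nonneg_left (pow_le_pow_left₀ (hYn t) hle 3) hC3.le
      have h4 : (Y t + i.ε ^ 2) * En 3 L i.u t + (Y t + i.ε ^ 2) * En 3 L i.v t
          ≤ (Y t + i.ε ^ 2) ^ 2 := by
        rw [← mul_add, sq (Y t + _)]
        exact mul_le_mul_of_nonneg_left hle ha.le
      rw [hQ]; nlinarith [sq_nonneg (Y t + i.ε ^ 2)]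
    · -- `log (1 + 1/ε) ≤ 1/ε`, so the product is at most `Q K ε`
      have hlog : log (1 + T) ≤ T := by
        have := log_le_sub_one_of_pos (show 0 < 1 + T by linarith); linarith
      have hTε : T * i.ε = 1 := inv_mul_cancel₀ hε.ne'
      calc Q * log (1 + T) * (2 * ((c1 + 1) * i.ε ^ 2))
          ≤ Q * T * (2 * ((c1 + 1) * i.ε ^ 2)) := by gcongr
        _ = (T * i.ε) * (i.ε * (Q * K)) := by rw [hK]; ring
        _ ≤ 1 := by rw [hTε, one_mul]; exact hε1
  set Z : ℝ → ℝ := fun t => En 2 L i.w t + En 2 L i.z t with hZ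
  have hZ0 : Z 0 ≤ c1 * i.ε ^ 6 := by
    have h1 := (eA i L (by linarith)).2
    have h2 := (eB i.swap L (by linarith)).2
    change En 2 L i.z 0 ≤ B * i.ε ^ 6 at h2
    rw [hc1, add_mul]; exact add_le_add h1 h2
  have hg := gronwall_log (Z := Z) (T := T) (δ := δ) (D := D * i.ε ^ 6) hδ
    (hd i.sw i.sz pw pz) (fun t ht hT => by
      have hYc : Y t ^ 3 ≤ K ^ 3 * i.ε ^ 6 :=
        (pow_le_pow_left₀ (hYn t) (hYb t ht.le hT.le) 3).trans (le_of_eq (by ring))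
      have h1 := d2 i.su i.sv i.sw pu pv hR3 ht (by linarith : R + 3 + t ≤ L) hδ
        (fun t x y ht => i.box_w x y ht) rfl
      have h2 := d2 i.sv i.su i.sz pv pu hR3 ht (by linarith : R + 3 + t ≤ L) hδ
        (fun t x y ht => i.swap.box_w x y ht) (add_comm _ _)
      refine (add_le_add h1 h2).trans ?_
      rw [← mul_add]
      refine mul_le_mul_of_nonneg_left ?_ (by positivity)
      change δ * En 2 L i.w t + C2 * Y t ^ 3 / δ
        + (δ * En 2 L i.z t + C2 * Y t ^ 3 / δ) ≤ δ * (En 2 L i.w t + En 2 L i.z t) + D * i.ε ^ 6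
      have h3 : C2 * Y t ^ 3 / δ ≤ C2 * (K ^ 3 * i.ε ^ 6) / δ := by gcongr
      have h4 : D * i.ε ^ 6 = 2 * (C2 * (K ^ 3 * i.ε ^ 6) / δ) := by rw [hD]; ring
      rw [h4]; linarith) ht hT
  have hp : (1 + t) ^ δ ≤ (1 + T) ^ δ := rpow_le_rpow (by linarith) (by linarith) hδ.le
  have hS : 0 ≤ Z 0 + D * i.ε ^ 6 / δ :=
    add_nonneg (add_nonneg (En_nonneg _ _ _ _) (En_nonneg _ _ _ _)) (by positivity)
  calc Z t ≤ Z t + D * i.ε ^ 6 / δ := le_add_of_nonneg_right (by positivity)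
    _ ≤ (1 + t) ^ δ * (Z 0 + D * i.ε ^ 6 / δ) := hg
    _ ≤ (1 + T) ^ δ * (c1 * i.ε ^ 6 + D * i.ε ^ 6 / δ) := by gcongr
    _ = _ := by ring

/-- bounds for `u¹ = u − εu⁰` on the time scale `t ≤ ε⁻¹`. -/
theorem u1_correction_bounds (f1 f2 g1 g2 : ℝ → ℝ → ℝ)
    (hf1 : SmoothCompact2 f1) (hf2 : SmoothCompact2 f2)
    (hg1 : SmoothCompact2 g1) (hg2 : SmoothCompact2 g2)
    (k : ℕ) (hk : 4 ≤ k) (μ ν : ℝ) (hμ0 : 0 < μ) (hμ1 : μ < 1 / 10)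
    (hν0 : 0 < ν) (hν1 : ((8 * k + 7 : ℕ) : ℝ) * ν < μ) :
    ∃ ε₀ C : ℝ, 0 < ε₀ ∧ 0 < C ∧ ∀ ε : ℝ, 0 < ε → ε < ε₀ →
      ∀ u1 u2 : ℝ → ℝ → ℝ → ℝ, IsSolution ε f1 f2 g1 g2 u1 u2 →
        ∀ u01 u02 : ℝ → ℝ → ℝ → ℝ,
          IsFreeSolution f1 g1 u01 → IsFreeSolution f2 g2 u02 →
          (∀ t : ℝ, 0 ≤ t → t ≤ ε⁻¹ →
            sobNorm 2 (dList (fun s y1 y2 => u1 s y1 y2 - ε * u01 s y1 y2)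
                (fun s y1 y2 => u2 s y1 y2 - ε * u02 s y1 y2)) t
              ≤ C * ε ^ ((3 : ℝ) - μ - ν)) ∧
          (∀ t x1 x2 : ℝ, 0 ≤ t → t ≤ ε⁻¹ →
            jb (t + radius x1 x2) ^ ((1 : ℝ) / 2) *
              ptwiseNorm 0 (dList (fun s y1 y2 => u1 s y1 y2 - ε * u01 s y1 y2)
                (fun s y1 y2 => u2 s y1 y2 - ε * u02 s y1 y2)) t x1 x2
              ≤ C * ε ^ ((3 : ℝ) - μ - ν)) := by
  obtain ⟨r1, hr1, kf1⟩ := exists_radius hf1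
  obtain ⟨r2, hr2, kf2⟩ := exists_radius hf2
  obtain ⟨r3, hr3, kg1⟩ := exists_radius hg1
  obtain ⟨r4, hr4, kg2⟩ := exists_radius hg2
  set R := r1 + r2 + r3 + r4 with hR
  have hR0 : 0 ≤ R := by positivity
  have mono : ∀ {r : ℝ} {f : ℝ → ℝ → ℝ}, 0 ≤ r → r ≤ R →
      (∀ x y, r ^ 2 < x ^ 2 + y ^ 2 → f x y = 0) → ∀ x y, R ^ 2 < x ^ 2 + y ^ 2 → f x y = 0 :=
    fun hr hrR h x y hxy => h x y (lt_of_le_of_lt (pow_le_pow_left₀ hr hrR 2) hxy)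
  have hδ : 0 < 2 * (μ + ν) := by positivity
  obtain ⟨ε₀, C, hε₀, hε1, hC, hE⟩ := energy_correction hf1 hf2 hg1 hg2 hR0 hδ
    (mono hr1 (by linarith) kf1) (mono hr2 (by linarith) kf2) (mono hr3 (by linarith) kg1)
    (mono hr4 (by linarith) kg2)
  obtain ⟨C1, hC1, hsob⟩ := sobNorm_le 2
  obtain ⟨C2, hC2, hpt⟩ := ptwiseNorm_le 0
  set M := √(C * 2 ^ (2 * (μ + ν))) with hM
  refine ⟨ε₀, (C1 + C2) * M, hε₀, by positivity, ?_⟩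
  intro ε hε hlt u1 u2 hu u01 u02 h01 h02
  let i : Idx f1 f2 g1 g2 := ⟨ε, u1, u2, u01, u02, hε, hlt.trans_le hε1, hu, h01, h02⟩
  have pw : Supp (R + 3) i.w := i.supp_w hR0 (mono hr1 (by linarith) kf1)
    (mono hr3 (by linarith) kg1)
  have pz : Supp (R + 3) i.z := i.swap.supp_w hR0 (mono hr2 (by linarith) kf2)
    (mono hr4 (by linarith) kg2)
  have key : ∀ t, 0 ≤ t → t ≤ ε⁻¹ →
      √(En 2 (R + 3 + ε⁻¹ + 1) i.w t + En 2 (R + 3 + ε⁻¹ + 1) i.z t)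
        ≤ M * ε ^ ((3 : ℝ) - μ - ν) := by
    intro t ht hT
    have h1 : (1 + ε⁻¹) ^ (2 * (μ + ν)) ≤ (2 * ε⁻¹) ^ (2 * (μ + ν)) := by
      have : 1 ≤ ε⁻¹ := (one_le_inv₀ hε).2 (hlt.le.trans hε1)
      exact rpow_le_rpow (by positivity) (by linarith) hδ.le
    have h2 : ε ^ 6 * (2 * ε⁻¹) ^ (2 * (μ + ν))
        = 2 ^ (2 * (μ + ν)) * (ε ^ ((3 : ℝ) - μ - ν)) ^ 2 := by
      rw [mul_rpow (by norm_num) (by positivity), inv_rpow hε.le, ← rpow_neg hε.le,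
        mul_left_comm, ← rpow_natCast ε 6, ← rpow_add hε, ← rpow_natCast (ε ^ _) 2,
        ← rpow_mul hε.le]
      congr 2; push_cast; ring
    have h3 := (hE i hlt t ht hT).trans
      (mul_le_mul_of_nonneg_left (mul_le_mul_of_nonneg_left h1 (by positivity)) hC.le)
    change _ ≤ C * (ε ^ 6 * _) at h3
    rw [h2, ← mul_assoc] at h3
    have h4 := sqrt_le_sqrt h3
    rwa [sqrt_mul (by positivity), sqrt_sq (by positivity)] at h4
  have hpos : 0 ≤ M * ε ^ ((3 : ℝ) - μ - ν) := by positivity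
  refine ⟨fun t ht hT => ?_, fun t x1 x2 ht hT => ?_⟩
  · have h := hsob i.sw i.sz pw pz (by linarith) ht
      (by linarith : R + 3 + t ≤ R + 3 + ε⁻¹ + 1)
    refine h.trans ((mul_le_mul_of_nonneg_left (key t ht hT) hC1.le).trans ?_)
    rw [mul_assoc]
    exact mul_le_mul_of_nonneg_right (by linarith) hpos
  · have h := hpt i.sw i.sz pw pz (by linarith) ht
      (by linarith : R + 3 + t ≤ R + 3 + ε⁻¹ + 1) x1 x2
    refine h.trans ((mul_le_mul_of_nonneg_left (key t ht hT) hC2.le).trans ?_)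
    rw [mul_assoc]
    exact mul_le_mul_of_nonneg_right (by linarith) hpos

end
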